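/- arXiv:2110.12431 — 4 statements merged into one kernel-verified Lean document; each statement's English description precedes it below -/
import Mathlib

section
/- Let X be an injective (hyperconvex) metric space, and let G, H be groups of isometries of X with X^G ≠ ∅ and X^H ≠ ∅. Then for any n ∈ ℕ and any x ∈ X^G, there exists y ∈ X^G such that: if n ≥ 1, then diam((GH)^{2^{n−1}} · y) ≤ (1/2) · diam((GH)^{2^n} · x); and if n = 0, then diam(H · y) ≤ (1/2) · diam(GH · x). -/
open Pointwise

/-- An injective (hyperconvex) metric space: every family of closed balls whose
radii pairwise satisfy the triangle condition has a common point. -/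
def IsInjectiveSpace (X : Type*) [MetricSpace X] : Prop :=
  ∀ S : Set (X × ℝ),
    (∀ p ∈ S, ∀ q ∈ S, dist p.1 q.1 ≤ p.2 + q.2) →
    ∃ y : X, ∀ p ∈ S, dist p.1 y ≤ p.2

/-- The fixed-point set of a subgroup of the isometry group. -/
def fixedSet {X : Type*} [MetricSpace X] (G : Subgroup (X ≃ᵢ X)) : Set X :=
  {x : X | ∀ g ∈ G, g x = x}

/-- The orbit of a point under a set of isometries. -/
def orbitSet {X : Type*} [MetricSpace X] (S : Set (X ≃ᵢ X)) (x : X) : Set X :=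
  (fun f : X ≃ᵢ X => f x) '' S

/-- One step of the averaging towards an extremal function. -/
noncomputable def avgStep {X : Type*} [MetricSpace X] (f : X → ℝ) : X → ℝ :=
  fun z => (f z + ⨆ a, (dist z a - f a)) / 2

section Helpers
variable {X : Type*} [MetricSpace X]

lemma avg_bdd (f : X → ℝ) (hf : ∀ a b, dist a b ≤ f a + f b) (z : X) :
    BddAbove (Set.range fun a => dist z a - f a) := by
  refine ⟨f z, ?_⟩
  rintro _ ⟨a, rfl⟩
  have := hf z a
  simp only
  linarith

lemma avg_le (f : X → ℝ) (hf : ∀ a b, dist a b ≤ f a + f b) (z : X) :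
    avgStep f z ≤ f z := by
  have : Nonempty X := ⟨z⟩
  have : (⨆ a, (dist z a - f a)) ≤ f z := ciSup_le fun a => by linarith [hf z a]
  unfold avgStep
  linarith

lemma avg_adm (f : X → ℝ) (hf : ∀ a b, dist a b ≤ f a + f b) (a b : X) :
    dist a b ≤ avgStep f a + avgStep f b := by
  have h1 := le_ciSup (avg_bdd f hf a) b
  have h2 := le_ciSup (avg_bdd f hf b) a
  have := dist_comm a b
  unfold avgStep
  linarith

lemma avg_inv (f : X → ℝ) (hf : ∀ a b, dist a b ≤ f a + f b) (u : X ≃ᵢ X) (c : ℝ)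
    (hu : ∀ z, f (u z) ≤ f z + c) (hu' : ∀ z, f z ≤ f (u z) + c) (z : X) :
    avgStep f (u z) ≤ avgStep f z + c ∧ avgStep f z ≤ avgStep f (u z) + c := by
  have : Nonempty X := ⟨z⟩
  have h1 : (⨆ a, (dist (u z) a - f a)) ≤ (⨆ a, (dist z a - f a)) + c := by
    refine ciSup_le fun a => ?_
    obtain ⟨b, rfl⟩ := u.surjective a
    have := le_ciSup (avg_bdd f hf z) b
    rw [u.dist_eq]
    linarith [hu' b]
  have h2 : (⨆ a, (dist z a - f a)) ≤ (⨆ a, (dist (u z) a - f a)) + c := by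
    refine ciSup_le fun a => ?_
    have := le_ciSup (avg_bdd f hf (u z)) (u a)
    simp only [u.dist_eq] at this
    linarith [hu a]
  unfold avgStep
  constructor
  · linarith [hu z]
  · linarith [hu' z]

lemma exists_point (hX : IsInjectiveSpace X) (f : X → ℝ)
    (hf : ∀ a b, dist a b ≤ f a + f b) :
    ∃ y : X, ∀ (u : X ≃ᵢ X) (c : ℝ), (∀ z, f (u z) ≤ f z + c) →
      (∀ z, f z ≤ f (u z) + c) → dist (u y) y ≤ c := by
  let F : ℕ → X → ℝ := fun n => avgStep^[n] f
  have hs : ∀ n, F (n + 1) = avgStep (F n) := fun n => Function.iterate_succ_apply' _ _ _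
  have hF : ∀ n, ∀ a b, dist a b ≤ F n a + F n b := by
    intro n
    induction n with
    | zero => exact hf
    | succ n ih => rw [hs]; exact avg_adm _ ih
  have hF0 : ∀ n a, 0 ≤ F n a := fun n a => by
    have := hF n a a
    rw [dist_self] at this
    linarith
  have hanti : ∀ z, Antitone fun n => F n z := fun z => antitone_nat_of_succ_le fun n => by
    rw [hs]; exact avg_le _ (hF n) z
  have hbdd : ∀ z, BddBelow (Set.range fun n => F n z) := fun z =>
    ⟨0, by rintro _ ⟨n, rfl⟩; exact hF0 n z⟩
  let L : X → ℝ := fun z => ⨅ n, F n z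
  have hL : ∀ z, Filter.Tendsto (fun n => F n z) Filter.atTop (nhds (L z)) := fun z =>
    tendsto_atTop_ciInf (hanti z) (hbdd z)
  have hLF : ∀ n z, L z ≤ F n z := fun n z => ciInf_le (hbdd z) n
  have hLadm : ∀ a b, dist a b ≤ L a + L b := fun a b =>
    ge_of_tendsto' ((hL a).add (hL b)) fun n => hF n a b
  obtain ⟨y, hy⟩ := hX (Set.range fun z => (z, L z)) (by
    rintro _ ⟨a, rfl⟩ _ ⟨b, rfl⟩
    exact hLadm a b)
  have hy' : ∀ z, dist z y ≤ L z := fun z => hy (z, L z) ⟨z, rfl⟩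
  have hLy : ∀ z, L z ≤ dist z y := by
    intro z
    have : Nonempty X := ⟨z⟩
    have key : ∀ n, 2 * F (n + 1) z - F n z ≤ dist z y := by
      intro n
      have : (⨆ a, (dist z a - F n a)) ≤ dist z y := ciSup_le fun a => by
        have h1 := hy' a
        have h2 := hLF n a
        have h3 := dist_triangle z y a
        rw [dist_comm y a] at h3
        linarith
      rw [hs]
      unfold avgStep
      linarith
    have ht := (((hL z).comp (Filter.tendsto_add_atTop_nat 1)).const_mul 2).sub (hL z)
    have := le_of_tendsto' ht key
    linarith
  refine ⟨y, fun u c hu hu' => ?_⟩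
  have hinv : ∀ n z, F n (u z) ≤ F n z + c ∧ F n z ≤ F n (u z) + c := by
    intro n
    induction n with
    | zero => exact fun z => ⟨hu z, hu' z⟩
    | succ n ih =>
      rw [hs]
      exact avg_inv _ (hF n) u c (fun z => (ih z).1) (fun z => (ih z).2)
  have h1 : L (u y) ≤ L y + c :=
    le_of_tendsto_of_tendsto' (hL (u y)) ((hL y).add_const c) fun n => (hinv n y).1
  have h2 := hLy y
  rw [dist_self] at h2
  linarith [hy' (u y)]

lemma core (hX : IsInjectiveSpace X) (G : Subgroup (X ≃ᵢ X)) (W : Set (X ≃ᵢ X))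
    (h1 : 1 ∈ W) (hW : ∀ u ∈ W, u⁻¹ ∈ W) (hGW : ∀ g ∈ G, ∀ u ∈ W, g * u ∈ W)
    (x : X) (hx : x ∈ fixedSet G) (D : ℝ)
    (hD : ∀ u ∈ W, ∀ v ∈ W, dist (u x) (v x) ≤ D) :
    ∃ y ∈ fixedSet G, ∀ u ∈ W, dist (u y) y ≤ D / 2 := by
  have : Nonempty W := ⟨⟨1, h1⟩⟩
  let s : X → ℝ := fun z => ⨆ w : W, dist z (w.1 x)
  have hb : ∀ z, BddAbove (Set.range fun w : W => dist z (w.1 x)) := by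
    intro z
    refine ⟨dist z x + D, ?_⟩
    rintro _ ⟨w, rfl⟩
    have h2 := hD 1 h1 w.1 w.2
    have h3 := dist_triangle z x (w.1 x)
    simp only [IsometryEquiv.coe_one, id] at h2 ⊢
    linarith
  have hs : ∀ z, ∀ w ∈ W, dist z (w x) ≤ s z := fun z w hw => le_ciSup (hb z) ⟨w, hw⟩
  have hsx : ∀ z, dist z x ≤ s z := fun z => hs z 1 h1
  let f : X → ℝ := fun z => (dist z x + s z) / 2
  obtain ⟨y, hy⟩ := exists_point hX f (by
    intro a b
    have := dist_triangle_right a b x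
    have := hsx a
    have := hsx b
    simp only [f]
    linarith)
  have hcan : ∀ (u : X ≃ᵢ X) (z : X), u⁻¹ (u z) = z := fun u z => u.symm_apply_apply z
  have hcan' : ∀ (u : X ≃ᵢ X) (z : X), u (u⁻¹ z) = z := fun u z => u.apply_symm_apply z
  have hG1 : ∀ g ∈ G, ∀ z, f (g z) ≤ f z := by
    intro g hg z
    have e1 : dist (g z) x = dist z x := by
      conv_lhs => rw [← hx g hg]
      exact g.dist_eq _ _
    have e2 : s (g z) ≤ s z := by
      refine ciSup_le fun w => ?_
      have := hs z (g⁻¹ * w.1) (hGW _ (G.inv_mem hg) _ w.2)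
      rw [← g.dist_eq, IsometryEquiv.mul_apply, hcan'] at this
      exact this
    simp only [f]
    linarith
  have hW1 : ∀ u ∈ W, ∀ z, f z ≤ f (u z) + D / 2 := by
    intro u hu z
    have e1 : dist z x ≤ s (u z) := by
      have := hs (u z) u hu
      rwa [u.dist_eq] at this
    have e2 : s z ≤ dist (u z) x + D := by
      refine ciSup_le fun w => ?_
      have h2 := dist_triangle z (u⁻¹ x) (w.1 x)
      have h3 := hD _ (hW u hu) _ w.2
      have h4 := u.dist_eq z (u⁻¹ x)
      rw [hcan'] at h4
      linarith
    simp only [f]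
    linarith
  refine ⟨y, fun g hg => ?_, fun u hu => ?_⟩
  · refine dist_le_zero.1 (hy g 0 (fun z => by simpa using hG1 g hg z) fun z => ?_)
    have := hG1 g⁻¹ (G.inv_mem hg) (g z)
    rw [hcan] at this
    simpa using this
  · refine hy u (D / 2) (fun z => ?_) (hW1 u hu)
    have := hW1 u⁻¹ (hW u hu) (u z)
    rwa [hcan] at this

lemma shift (A B : Set (X ≃ᵢ X)) (k : ℕ) : (A * B) ^ k * A = A * (B * A) ^ k := by
  induction k with
  | zero => simp
  | succ k ih =>
    calc (A * B) ^ (k + 1) * A = (A * B) * ((A * B) ^ k * A) := by rw [pow_succ', mul_assoc]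
      _ = A * (B * A) ^ (k + 1) := by rw [ih, pow_succ']; simp only [mul_assoc]

lemma core2 (hX : IsInjectiveSpace X) (G H : Subgroup (X ≃ᵢ X)) (k : ℕ) (hk : k ≠ 0)
    (x : X) (hx : x ∈ fixedSet G)
    (hfin : EMetric.diam (orbitSet (((G : Set (X ≃ᵢ X)) * (H : Set (X ≃ᵢ X))) ^ k) x) ≠ ⊤) :
    ∃ y ∈ fixedSet G, ∀ S : Set (X ≃ᵢ X),
      S⁻¹ * S ⊆ ((G : Set (X ≃ᵢ X)) * (H : Set (X ≃ᵢ X))) ^ k * (G : Set (X ≃ᵢ X)) →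
      EMetric.diam (orbitSet S y) ≤
        EMetric.diam (orbitSet (((G : Set (X ≃ᵢ X)) * (H : Set (X ≃ᵢ X))) ^ k) x) / 2 := by
  set P := ((G : Set (X ≃ᵢ X)) * (H : Set (X ≃ᵢ X))) ^ k with hP
  set E := EMetric.diam (orbitSet P x) with hE
  have hone : (1 : X ≃ᵢ X) ∈ P :=
    Set.one_mem_pow (Set.mem_mul.2 ⟨1, G.one_mem, 1, H.one_mem, by simp⟩)
  have hGP : (G : Set (X ≃ᵢ X)) * P = P := by
    obtain ⟨j, rfl⟩ := Nat.exists_eq_succ_of_ne_zero hk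
    rw [hP, Nat.succ_eq_add_one, pow_succ', ← mul_assoc, ← mul_assoc, coe_mul_coe]
  have hinv : (P * (G : Set (X ≃ᵢ X)))⁻¹ = P * (G : Set (X ≃ᵢ X)) := by
    rw [mul_inv_rev, hP, ← inv_pow, mul_inv_rev, inv_coe_set, inv_coe_set, shift]
  obtain ⟨y, hyG, hy⟩ := core hX G (P * (G : Set (X ≃ᵢ X)))
    (Set.mem_mul.2 ⟨1, hone, 1, G.one_mem, by simp⟩)
    (fun u hu => by rw [← hinv]; exact Set.inv_mem_inv.2 hu)
    (fun g hg u hu => by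
      rw [← hGP, mul_assoc]; exact Set.mul_mem_mul hg hu)
    x hx E.toReal (by
      rintro _ ⟨u, hu, g, hg, rfl⟩ _ ⟨v, hv, g', hg', rfl⟩
      simp only [IsometryEquiv.mul_apply, hx g hg, hx g' hg']
      rw [dist_edist]
      exact ENNReal.toReal_mono hfin
        (EMetric.edist_le_diam_of_mem ⟨u, hu, rfl⟩ ⟨v, hv, rfl⟩))
  refine ⟨y, hyG, fun S hS => EMetric.diam_le ?_⟩
  rintro _ ⟨u, hu, rfl⟩ _ ⟨v, hv, rfl⟩
  have h := hy (u⁻¹ * v) (hS (Set.mul_mem_mul (by simpa using hu) hv))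
  rw [← u.dist_eq, IsometryEquiv.mul_apply] at h
  have e : u (u⁻¹ (v y)) = v y := u.apply_symm_apply _
  rw [e, dist_comm] at h
  simp only
  rw [edist_dist]
  refine (ENNReal.ofReal_le_ofReal h).trans ?_
  rw [ENNReal.ofReal_div_of_pos (by norm_num), ENNReal.ofReal_toReal hfin]
  simp

end Helpers

/-- Halving of orbit diameters for two elliptic isometry groups of an injective
metric space. -/
theorem diameter_doubles {X : Type*} [MetricSpace X] (hX : IsInjectiveSpace X)
    (G H : Subgroup (X ≃ᵢ X))
    (hG : (fixedSet G).Nonempty) (hH : (fixedSet H).Nonempty)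
    (n : ℕ) (x : X) (hx : x ∈ fixedSet G) :
    ∃ y ∈ fixedSet G,
      (n = 0 →
        EMetric.diam (orbitSet (H : Set (X ≃ᵢ X)) y) ≤
          EMetric.diam (orbitSet ((G : Set (X ≃ᵢ X)) * (H : Set (X ≃ᵢ X))) x) / 2) ∧
      (1 ≤ n →
        EMetric.diam (orbitSet (((G : Set (X ≃ᵢ X)) * (H : Set (X ≃ᵢ X))) ^ (2 ^ (n - 1))) y) ≤
          EMetric.diam (orbitSet (((G : Set (X ≃ᵢ X)) * (H : Set (X ≃ᵢ X))) ^ (2 ^ n)) x) / 2) := by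
  by_cases hfin : EMetric.diam
      (orbitSet (((G : Set (X ≃ᵢ X)) * (H : Set (X ≃ᵢ X))) ^ (2 ^ n)) x) = ⊤
  · refine ⟨x, hx, ?_, ?_⟩
    · rintro rfl
      rw [pow_zero, pow_one] at hfin
      rw [hfin, ENNReal.top_div_of_ne_top (by simp)]
      exact le_top
    · intro _
      rw [hfin, ENNReal.top_div_of_ne_top (by simp)]
      exact le_top
  · obtain ⟨y, hyG, hy⟩ := core2 hX G H (2 ^ n) (by positivity) x hx hfin
    refine ⟨y, hyG, ?_, ?_⟩
    · rintro rfl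
      have := hy (H : Set (X ≃ᵢ X)) (by
        rw [inv_coe_set, coe_mul_coe, pow_zero, pow_one]
        intro h hh
        exact ⟨h, ⟨1, G.one_mem, h, hh, by simp⟩, 1, G.one_mem, by simp⟩)
      simpa only [pow_zero, pow_one] using this
    · intro hn
      obtain ⟨m, rfl⟩ := Nat.exists_eq_add_of_le' hn
      refine hy _ ?_
      rw [Nat.add_sub_cancel]
      obtain ⟨j, hj⟩ := Nat.exists_eq_succ_of_ne_zero (n := 2 ^ m) (by positivity)
      have e : 2 ^ (m + 1) = (j + 1) + (j + 1) := by rw [pow_succ, hj]; omega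
      rw [e, hj, Nat.succ_eq_add_one, ← inv_pow, mul_inv_rev, inv_coe_set, inv_coe_set]
      have hsub : ((H : Set (X ≃ᵢ X)) * (G : Set (X ≃ᵢ X))) ^ (j + 1) ⊆
          ((G : Set (X ≃ᵢ X)) * (H : Set (X ≃ᵢ X))) ^ (j + 1) * (G : Set (X ≃ᵢ X)) := by
        rw [shift]
        exact Set.subset_mul_right _ G.one_mem
      refine (Set.mul_subset_mul_right hsub).trans ?_
      have e2 : (G : Set (X ≃ᵢ X)) * ((G : Set (X ≃ᵢ X)) * (H : Set (X ≃ᵢ X))) ^ (j + 1) =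
          ((G : Set (X ≃ᵢ X)) * (H : Set (X ≃ᵢ X))) ^ (j + 1) := by
        rw [pow_succ', ← mul_assoc, ← mul_assoc, coe_mul_coe]
      rw [mul_assoc, e2, ← pow_add]
      exact Set.subset_mul_left _ G.one_mem
end

section
/- Let X be an injective (hyperconvex) metric space, let H be a group of isometries of X, and let y ∈ X be a point whose orbit H · y is bounded. Then there exists a point z ∈ X fixed by every element of H such that d(y, z) ≤ diam(H · y)/2. In particular, X^H ≠ ∅ and 2·d(y, X^H) ≤ diam(H · y). -/
open Pointwise

/-- A bounded orbit of a group of isometries of an injective metric space yields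
a fixed point at distance at most half the orbit diameter. -/
theorem bounded_orbit_fixed_point {X : Type*} [MetricSpace X]
    (hX : IsInjectiveSpace X) (H : Subgroup (X ≃ᵢ X)) (y : X)
    (hb : Bornology.IsBounded (orbitSet (H : Set (X ≃ᵢ X)) y)) :
    ∃ z ∈ fixedSet H,
      dist y z ≤ Metric.diam (orbitSet (H : Set (X ≃ᵢ X)) y) / 2 ∧
      2 * Metric.infDist y (fixedSet H) ≤
        Metric.diam (orbitSet (H : Set (X ≃ᵢ X)) y) := by
  set D := Metric.diam (orbitSet (H : Set (X ≃ᵢ X)) y) with hD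
  let P : Set (Set (X × ℝ)) := {S | (∀ p ∈ S, ∀ q ∈ S, dist p.1 q.1 ≤ p.2 + q.2) ∧
    ∀ g ∈ H, ∀ p ∈ S, (g p.1, p.2) ∈ S}
  let S₀ : Set (X × ℝ) := {p | p.1 ∈ orbitSet (H : Set (X ≃ᵢ X)) y ∧ p.2 = D / 2}
  have hS₀ : S₀ ∈ P := by
    refine ⟨?_, ?_⟩
    · rintro ⟨a, r⟩ ⟨ha, hr⟩ ⟨b, s⟩ ⟨hb', hs⟩
      have h := Metric.dist_le_diam_of_mem hb ha hb'
      simp only at hr hs h ⊢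
      rw [hr, hs]
      linarith
    · rintro g hg ⟨a, r⟩ ⟨⟨f, hf, hfa⟩, hr⟩
      refine ⟨⟨g * f, H.mul_mem hg hf, ?_⟩, hr⟩
      simp only at hfa ⊢
      rw [← hfa]
      rfl
  obtain ⟨S, hsub, hmax⟩ := zorn_subset_nonempty P (by
    intro c hc hchain _
    refine ⟨⋃₀ c, ⟨?_, ?_⟩, fun s hs => Set.subset_sUnion_of_mem hs⟩
    · rintro p ⟨s, hs, hp⟩ q ⟨t, ht, hq⟩
      rcases hchain.total hs ht with h | h
      · exact (hc ht).1 p (h hp) q hq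
      · exact (hc hs).1 p hp q (h hq)
    · rintro g hg p ⟨s, hs, hp⟩
      exact ⟨s, hs, (hc hs).2 g hg p hp⟩) S₀ hS₀
  have hSP : S ∈ P := hmax.prop
  let M : Set X := {z | ∀ p ∈ S, dist p.1 z ≤ p.2}
  have hyS : (y, D / 2) ∈ S := hsub ⟨⟨1, H.one_mem, rfl⟩, rfl⟩
  have hMb : Bornology.IsBounded M := by
    refine (Metric.isBounded_closedBall (x := y) (r := D / 2)).subset ?_
    intro z hz
    have := hz _ hyS
    rw [Metric.mem_closedBall, dist_comm]
    exact this
  have hMinv : ∀ g ∈ H, ∀ z ∈ M, g z ∈ M := by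
    intro g hg z hz p hp
    have h := hz _ (hSP.2 g⁻¹ (H.inv_mem hg) p hp)
    have h2 : g (g⁻¹ p.1) = p.1 := g.apply_symm_apply p.1
    simp only at h
    rw [← g.dist_eq, h2] at h
    exact h
  set δ := Metric.diam M with hδ
  have hδ0 : 0 ≤ δ := Metric.diam_nonneg
  let T : Set (X × ℝ) := S ∪ {p | p.1 ∈ M ∧ p.2 = δ / 2}
  have hT : T ∈ P := by
    refine ⟨?_, ?_⟩
    · rintro p (hp | ⟨hp, hp2⟩) q (hq | ⟨hq, hq2⟩)
      · exact hSP.1 p hp q hq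
      · have := hq p hp
        linarith
      · have := hp q hq
        rw [dist_comm] at this
        linarith
      · have := Metric.dist_le_diam_of_mem hMb hp hq
        linarith
    · rintro g hg p (hp | ⟨hp, hp2⟩)
      · exact Or.inl (hSP.2 g hg p hp)
      · exact Or.inr ⟨hMinv g hg _ hp, hp2⟩
  have hTS : T ⊆ S := hmax.le_of_ge hT Set.subset_union_left
  have hhalf : ∀ a ∈ M, ∀ b ∈ M, dist a b ≤ δ / 2 := by
    intro a ha b hb'
    exact hb' (a, δ / 2) (hTS (Or.inr ⟨ha, rfl⟩))
  have hle : δ ≤ δ / 2 := Metric.diam_le_of_forall_dist_le (by linarith) hhalf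
  obtain ⟨z, hz⟩ := hX S hSP.1
  have hzM : z ∈ M := hz
  have hzfix : z ∈ fixedSet H := by
    intro g hg
    have := hhalf _ (hMinv g hg z hzM) z hzM
    exact dist_le_zero.mp (by linarith)
  have hyz : dist y z ≤ D / 2 := hz _ hyS
  refine ⟨z, hzfix, hyz, ?_⟩
  have := Metric.infDist_le_dist_of_mem (x := y) hzfix
  linarith
end

section
/- Let X be the 1-skeleton of an 18-systolic complex, i.e., a bridged graph with no induced cycles of length ℓ for 4 ≤ ℓ ≤ 17, and let G act strongly rigidly on X by graph automorphisms. If g ∈ G with g ≠ 1 fixes some vertex of X, then Fix(g) consists of exactly one vertex. -/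
open SimpleGraph Pointwise

/-- A bridged graph: a connected simple graph with no isometric cycles of length
at least 4 (equivalently, every isometric cycle is a triangle). A cycle of length
`n` is encoded as a map `ZMod n → V` sending consecutive elements to adjacent
vertices; it is isometric if the graph distance between any two of its vertices
equals the distance along the cycle. -/
def IsBridged {V : Type*} (Γ : SimpleGraph V) : Prop :=
  Γ.Connected ∧
  ∀ n : ℕ, 4 ≤ n →
    ¬ ∃ f : ZMod n → V,
      (∀ i : ZMod n, Γ.Adj (f i) (f (i + 1))) ∧
      (∀ i j : ZMod n, Γ.dist (f i) (f j) = min (i - j).val (j - i).val)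

/-- `Γ` has no induced cycles of length `ℓ` for `a ≤ ℓ ≤ b`. -/
def NoInducedCycles {V : Type*} (Γ : SimpleGraph V) (a b : ℕ) : Prop :=
  ∀ n : ℕ, a ≤ n → n ≤ b →
    ¬ ∃ f : ZMod n → V,
      Function.Injective f ∧
      (∀ i j : ZMod n, Γ.Adj (f i) (f j) ↔ (j = i + 1 ∨ i = j + 1))

/-- The 1-skeleton of an 18-systolic complex: a bridged graph with no induced
cycles of length `ℓ` for `4 ≤ ℓ ≤ 17`. -/
def IsEighteenSystolic {V : Type*} (Γ : SimpleGraph V) : Prop :=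
  IsBridged Γ ∧ NoInducedCycles Γ 4 17

/-- `G` acts strongly rigidly on `Γ` if the only element stabilizing a (possibly
infinite) clique with at least two vertices is the identity. -/
def StronglyRigid {V : Type*} (Γ : SimpleGraph V) (G : Type*) [Group G]
    [MulAction G V] : Prop :=
  ∀ g : G,
    (∃ s : Set V, Γ.IsClique s ∧ (∃ a ∈ s, ∃ b ∈ s, a ≠ b) ∧ g • s = s) → g = 1



namespace FixUnique

variable {V : Type*} {Γ : SimpleGraph V}

lemma noC4 (h : NoInducedCycles Γ 4 17) {a b c d : V} (hab : Γ.Adj a b) (hbc : Γ.Adj b c)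
    (hcd : Γ.Adj c d) (hda : Γ.Adj d a) (hac : ¬ Γ.Adj a c) (hbd : ¬ Γ.Adj b d)
    (nac : a ≠ c) (nbd : b ≠ d) : False := by
  refine h 4 (by norm_num) (by norm_num) ⟨(![a, b, c, d] : Fin 4 → V), ?_, ?_⟩
  · have := hab.ne; have := hbc.ne; have := hcd.ne; have := hda.ne
    suffices ∀ i j : Fin 4, _ → i = j from this
    intro i j hij
    fin_cases i <;> fin_cases j <;> simp_all
  · change ∀ i j : Fin 4, _ ↔ (j = i + 1 ∨ i = j + 1)
    intro i j
    have := hab.symm; have := hbc.symm; have := hcd.symm; have := hda.symm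
    have h1 : ¬ Γ.Adj c a := fun h => hac h.symm
    have h2 : ¬ Γ.Adj d b := fun h => hbd h.symm
    fin_cases i <;> fin_cases j <;> simp [*]

lemma noC5 (h : NoInducedCycles Γ 4 17) {a b c d e : V} (hab : Γ.Adj a b) (hbc : Γ.Adj b c)
    (hcd : Γ.Adj c d) (hde : Γ.Adj d e) (hea : Γ.Adj e a) (hac : ¬ Γ.Adj a c) (hbd : ¬ Γ.Adj b d)
    (hce : ¬ Γ.Adj c e) (hda : ¬ Γ.Adj d a) (heb : ¬ Γ.Adj e b) : False := by
  refine h 5 (by norm_num) (by norm_num) ⟨(![a, b, c, d, e] : Fin 5 → V), ?_, ?_⟩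
  · have := hab.ne; have := hbc.ne; have := hcd.ne; have := hde.ne; have := hea.ne
    have : a ≠ c := by rintro rfl; exact hda hcd.symm
    have : b ≠ d := by rintro rfl; exact heb hde.symm
    have : c ≠ e := by rintro rfl; exact hac hea.symm
    have : d ≠ a := by rintro rfl; exact hbd hab.symm
    have : e ≠ b := by rintro rfl; exact hce hbc.symm
    suffices ∀ i j : Fin 5, _ → i = j from this
    intro i j hij
    fin_cases i <;> fin_cases j <;> simp_all
  · change ∀ i j : Fin 5, _ ↔ (j = i + 1 ∨ i = j + 1)
    intro i j
    have := hab.symm; have := hbc.symm; have := hcd.symm; have := hde.symm; have := hea.symm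
    have h1 : ¬ Γ.Adj c a := fun h => hac h.symm
    have h2 : ¬ Γ.Adj d b := fun h => hbd h.symm
    have h3 : ¬ Γ.Adj e c := fun h => hce h.symm
    have h4 : ¬ Γ.Adj a d := fun h => hda h.symm
    have h5 : ¬ Γ.Adj b e := fun h => heb h.symm
    fin_cases i <;> fin_cases j <;> simp [*]

lemma noC6 (h : NoInducedCycles Γ 4 17) {a b c d e f : V} (hab : Γ.Adj a b) (hbc : Γ.Adj b c)
    (hcd : Γ.Adj c d) (hde : Γ.Adj d e) (hef : Γ.Adj e f) (hfa : Γ.Adj f a)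
    (hac : ¬ Γ.Adj a c) (hbd : ¬ Γ.Adj b d)
    (hce : ¬ Γ.Adj c e) (hdf : ¬ Γ.Adj d f) (hea : ¬ Γ.Adj e a) (hfb : ¬ Γ.Adj f b)
    (had : ¬ Γ.Adj a d) (hbe : ¬ Γ.Adj b e) (hcf : ¬ Γ.Adj c f) : False := by
  refine h 6 (by norm_num) (by norm_num) ⟨(![a, b, c, d, e, f] : Fin 6 → V), ?_, ?_⟩
  · have := hab.ne; have := hbc.ne; have := hcd.ne; have := hde.ne; have := hef.ne
    have := hfa.ne
    have : a ≠ c := by rintro rfl; exact had hcd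
    have : b ≠ d := by rintro rfl; exact hbe hde
    have : c ≠ e := by rintro rfl; exact hcf hef
    have : d ≠ f := by rintro rfl; exact had hfa.symm
    have : e ≠ a := by rintro rfl; exact hbe hab.symm
    have : f ≠ b := by rintro rfl; exact hcf hbc.symm
    have : a ≠ d := by rintro rfl; exact hac hcd.symm
    have : b ≠ e := by rintro rfl; exact hbd hde.symm
    have : c ≠ f := by rintro rfl; exact hac hfa.symm
    suffices ∀ i j : Fin 6, _ → i = j from this
    intro i j hij
    fin_cases i <;> fin_cases j <;> simp_all
  · change ∀ i j : Fin 6, _ ↔ (j = i + 1 ∨ i = j + 1)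
    intro i j
    have := hab.symm; have := hbc.symm; have := hcd.symm; have := hde.symm; have := hef.symm
    have := hfa.symm
    have h1 : ¬ Γ.Adj c a := fun h => hac h.symm
    have h2 : ¬ Γ.Adj d b := fun h => hbd h.symm
    have h3 : ¬ Γ.Adj e c := fun h => hce h.symm
    have h4 : ¬ Γ.Adj f d := fun h => hdf h.symm
    have h5 : ¬ Γ.Adj a e := fun h => hea h.symm
    have h6 : ¬ Γ.Adj b f := fun h => hfb h.symm
    have h7 : ¬ Γ.Adj d a := fun h => had h.symm
    have h8 : ¬ Γ.Adj e b := fun h => hbe h.symm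
    have h9 : ¬ Γ.Adj f c := fun h => hcf h.symm
    fin_cases i <;> fin_cases j <;> simp [*]

lemma no_cycle (hb : IsBridged Γ) (L : ℕ) (hL : 4 ≤ L) (c : ℕ → V)
    (hadj : ∀ k < L, Γ.Adj (c k) (c (k + 1))) (hc : c L = c 0)
    (hd : ∀ a b, a ≤ b → b < L → Γ.dist (c a) (c b) = min (b - a) (L - (b - a))) : False := by
  have : NeZero L := ⟨by omega⟩
  have : Fact (1 < L) := ⟨by omega⟩
  have key : ∀ i j : ZMod L, i.val ≤ j.val →
      (j - i).val = j.val - i.val ∧ min (i - j).val (j - i).val =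
        min (j.val - i.val) (L - (j.val - i.val)) := by
    intro i j hij
    have h1 : (j - i).val = j.val - i.val := ZMod.val_sub hij
    have hj := ZMod.val_lt j
    refine ⟨h1, ?_⟩
    have h2 : i - j = -(j - i) := by ring
    rw [h2, ZMod.neg_val]
    split_ifs with h
    · rw [h, ZMod.val_zero] at h1
      rw [h, ZMod.val_zero, ← h1]; simp
    · rw [h1, min_comm]
  refine hb.2 L hL ⟨fun i => c i.val, ?_, ?_⟩
  · intro i
    have hi := ZMod.val_lt i
    have h1 : (i + 1).val = (i.val + 1) % L := by rw [ZMod.val_add, ZMod.val_one]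
    have h2 := hadj i.val hi
    rcases Nat.lt_or_ge (i.val + 1) L with h | h
    · simpa [h1, Nat.mod_eq_of_lt h] using h2
    · have h3 : i.val + 1 = L := by omega
      rw [h3, hc] at h2
      simpa [h1, h3] using h2
  · intro i j
    rcases le_total i.val j.val with h | h
    · rw [(key i j h).2]; exact hd _ _ h (ZMod.val_lt j)
    · rw [min_comm, (key j i h).2, SimpleGraph.dist_comm]; exact hd _ _ h (ZMod.val_lt i)

lemma adjd (hc : Γ.Connected) {a b : V} (h : Γ.Adj a b) (o : V) :
    Γ.dist o a ≤ Γ.dist o b + 1 ∧ Γ.dist o b ≤ Γ.dist o a + 1 := by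
  have h1 : Γ.dist a b = 1 := SimpleGraph.dist_eq_one_iff_adj.2 h
  have h2 := hc.dist_triangle (u := o) (v := a) (w := b)
  have h3 := hc.dist_triangle (u := o) (v := b) (w := a)
  have h4 := Γ.dist_comm (u := a) (v := b)
  omega

lemma step (hc : Γ.Connected) {p q : V} (k : ℕ) (h : Γ.dist p q = k + 1) :
    ∃ z, Γ.Adj p z ∧ Γ.dist z q = k := by
  obtain ⟨w, hw⟩ := hc.exists_walk_length_eq_dist p q
  cases w with
  | nil => simp at h
  | @cons _ z _ ha w' =>
    refine ⟨z, ha, ?_⟩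
    have h1 := SimpleGraph.dist_le w'
    have h2 := adjd hc ha q
    rw [Γ.dist_comm, Γ.dist_comm (u := q)] at h2
    simp at hw
    omega

lemma geod (hc : Γ.Connected) (n : ℕ) : ∀ (u x : V), Γ.dist u x = n →
    ∃ γ : ℕ → V, γ 0 = u ∧ γ n = x ∧ (∀ k < n, Γ.Adj (γ k) (γ (k + 1))) ∧
      (∀ k ≤ n, Γ.dist u (γ k) = k ∧ Γ.dist (γ k) x = n - k) ∧
      (∀ i j, i ≤ j → j ≤ n → Γ.dist (γ i) (γ j) = j - i) := by
  suffices H : ∀ (u x : V), Γ.dist u x = n →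
    ∃ γ : ℕ → V, γ 0 = u ∧ γ n = x ∧ (∀ k < n, Γ.Adj (γ k) (γ (k + 1))) by
    intro u x h
    obtain ⟨γ, h0, hn, ha⟩ := H u x h
    have le : ∀ m i, i + m ≤ n → Γ.dist (γ i) (γ (i + m)) ≤ m := by
      intro m
      induction m with
      | zero => intro i _; simp
      | succ m ih =>
        intro i hi
        have := ih i (by omega)
        have h2 := adjd hc (ha (i + m) (by omega)) (γ i)
        rw [← add_assoc]
        omega
    have eq : ∀ i j, i ≤ j → j ≤ n → Γ.dist (γ i) (γ j) = j - i := by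
      intro i j hij hj
      have h1 := le i 0 (by omega)
      have h2 := le (j - i) i (by omega)
      have h3 := le (n - j) j (by omega)
      rw [zero_add, h0] at h1
      rw [show i + (j - i) = j by omega] at h2
      rw [show j + (n - j) = n by omega, hn] at h3
      have t1 := hc.dist_triangle (u := u) (v := γ i) (w := x)
      have t2 := hc.dist_triangle (u := γ i) (v := γ j) (w := x)
      omega
    refine ⟨γ, h0, hn, ha, ?_, eq⟩
    intro k hk
    have h1 := eq 0 k (by omega) hk
    have h2 := eq k n hk le_rfl
    rw [h0] at h1; rw [hn] at h2
    exact ⟨h1, h2⟩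
  induction n with
  | zero =>
    intro u x h
    refine ⟨fun _ => u, rfl, ?_, by simp⟩
    exact (hc.dist_eq_zero_iff).1 h
  | succ n ih =>
    intro u x h
    obtain ⟨z, hz, hd⟩ := step hc n h
    obtain ⟨γ, h0, hn, ha⟩ := ih z x hd
    refine ⟨fun k => if k = 0 then u else γ (k - 1), by simp, by simpa using hn, ?_⟩
    intro k hk
    rcases k with _ | k
    · simpa [h0] using hz
    · simpa using ha k (by omega)

/-- The two-geodesics cycle has a shortcut. `e = 0` for quadrangle, `e = 1` for triangle. -/
lemma shortcut (hb : IsBridged Γ) (n e : ℕ) (hn : 2 ≤ n) (he : e ≤ 1) (u x y : V)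
    (α β : ℕ → V) (α0 : α 0 = u) (β0 : β 0 = u) (αn : α n = x) (βn : β n = y)
    (αa : ∀ k < n, Γ.Adj (α k) (α (k + 1))) (βa : ∀ k < n, Γ.Adj (β k) (β (k + 1)))
    (αd : ∀ i j, i ≤ j → j ≤ n → Γ.dist (α i) (α j) = j - i)
    (βd : ∀ i j, i ≤ j → j ≤ n → Γ.dist (β i) (β j) = j - i)
    (hxy : Γ.dist x y = e) :
    ∃ i j, i ≤ n ∧ j ≤ n ∧ Γ.dist (α i) (β j) < i + j ∧
      Γ.dist (α i) (β j) + i + j < 2 * n + e := by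
  have hc := hb.1
  by_contra hcon
  push Not at hcon
  have hxy' : e = 0 → x = y := by
    intro h; rw [h] at hxy; exact (hc.dist_eq_zero_iff).1 hxy
  have hxy1 : e = 1 → Γ.Adj x y := by
    intro h; rw [h] at hxy; exact SimpleGraph.dist_eq_one_iff_adj.1 hxy
  refine no_cycle hb (2 * n + e) (by omega) (fun k => if k ≤ n then α k else β (2 * n + e - k))
    ?_ ?_ ?_
  · intro k hk
    rcases lt_trichotomy k n with h | h | h
    · simpa [h.le, Nat.succ_le_of_lt h] using αa k h
    · subst h
      simp only [le_refl, if_true]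
      rw [if_neg (by omega), αn]
      rcases Nat.lt_or_ge e 1 with h1 | h1
      · have h2 : e = 0 := by omega
        rw [hxy' h2, ← βn, show 2 * k + e - (k + 1) = k - 1 by omega]
        have := (βa (k - 1) (by omega)).symm
        rwa [show k - 1 + 1 = k by omega] at this
      · have h2 : e = 1 := by omega
        rw [show 2 * k + e - (k + 1) = k by omega, βn]
        exact hxy1 h2
    · rw [if_neg (by omega), if_neg (by omega)]
      have := (βa (2 * n + e - (k + 1)) (by omega)).symm
      rwa [show 2 * n + e - (k + 1) + 1 = 2 * n + e - k by omega] at this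
  · rw [if_neg (by omega), if_pos (by omega)]
    simp [α0, β0]
  · intro a b hab hbL
    by_cases h1 : b ≤ n
    · rw [if_pos h1, if_pos (by omega), αd a b hab h1]
      omega
    · by_cases h2 : a ≤ n
      · rw [if_neg h1, if_pos h2]
        have h3 := hcon a (2 * n + e - b) h2 (by omega)
        have t1 := hc.dist_triangle (u := α a) (v := u) (w := β (2 * n + e - b))
        have t2 := hc.dist_triangle (u := α a) (v := x) (w := β (2 * n + e - b))
        have t3 := hc.dist_triangle (u := x) (v := y) (w := β (2 * n + e - b))
        have e1 := αd 0 a (by omega) h2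
        have e2 := βd 0 (2 * n + e - b) (by omega) (by omega)
        have e3 := αd a n h2 le_rfl
        have e4 := βd (2 * n + e - b) n (by omega) le_rfl
        rw [α0, Γ.dist_comm] at e1
        rw [β0] at e2
        rw [αn] at e3
        rw [βn, Γ.dist_comm] at e4
        omega
      · rw [if_neg h1, if_neg h2, Γ.dist_comm, βd _ _ (by omega) (by omega)]
        omega

/-- quadrangle-type condition -/
def Qp (Γ : SimpleGraph V) (m : ℕ) : Prop :=
  ∀ u v x y, Γ.dist u v = m → Γ.Adj v x → Γ.Adj v y → Γ.dist u x + 1 = m →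
    Γ.dist u y + 1 = m → x = y ∨ Γ.Adj x y

/-- triangle condition -/
def Tp (Γ : SimpleGraph V) (m : ℕ) : Prop :=
  ∀ u x y, Γ.dist u x = m → Γ.dist u y = m → Γ.Adj x y →
    ∃ z, Γ.Adj x z ∧ Γ.Adj y z ∧ Γ.dist u z + 1 = m

def Hp (Γ : SimpleGraph V) (P : ℕ) : Prop :=
  (∀ m, 2 * m ≤ P → Qp Γ m) ∧ (∀ m, 2 * m + 1 ≤ P → Tp Γ m)

/-- convexity of balls -/
lemma conv (hc : Γ.Connected) {P : ℕ} (H : Hp Γ P) (o : V) (D : ℕ) : ∀ (k : ℕ) (p q z : V),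
    Γ.dist p q = D → Γ.dist o p + Γ.dist o q + D ≤ P → Γ.dist o p ≤ k → Γ.dist o q ≤ k →
    Γ.dist p z + Γ.dist z q = D → Γ.dist o z ≤ k := by
  induction D using Nat.strong_induction_on with
  | _ D ih =>
  intro k p q z hD hP hp hq hz
  by_contra hlt
  have hpz : Γ.dist p z ≠ 0 := by
    intro h; rw [hc.dist_eq_zero_iff] at h; subst h; omega
  have hzq : Γ.dist z q ≠ 0 := by
    intro h; rw [hc.dist_eq_zero_iff] at h; subst h; omega
  obtain ⟨p', hp', hd'⟩ := step hc (Γ.dist p z - 1) (show Γ.dist p z = _ by omega)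
  have a1 := adjd hc hp' o
  have t1 := hc.dist_triangle (u := p') (v := z) (w := q)
  have a2 := adjd hc hp' q
  rw [Γ.dist_comm, Γ.dist_comm (u := q)] at a2
  have hp'q : Γ.dist p' q = D - 1 := by omega
  have hφ : Γ.dist o p' = k + 1 := by
    by_contra hne
    have := ih (D - 1) (by omega) k p' q z hp'q (by omega) (by omega) hq (by omega)
    omega
  obtain ⟨p2, hp2, hd2⟩ := step hc (D - 2) (show Γ.dist p' q = _ by omega)
  have a3 := adjd hc hp2 o
  have t2 := hc.dist_triangle (u := o) (v := p2) (w := q)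
  have t3 := hc.dist_triangle (u := o) (v := q) (w := p2)
  have c1 := Γ.dist_comm (u := q) (v := p2)
  have e1 : Γ.dist p' p2 = 1 := SimpleGraph.dist_eq_one_iff_adj.2 hp2
  have t4 := hc.dist_triangle (u := p) (v := p2) (w := q)
  have hnb : ¬ (p = p2 ∨ Γ.Adj p p2) := by
    rintro (h | h)
    · subst h; omega
    · have := SimpleGraph.dist_eq_one_iff_adj.2 h; omega
  have h1 : Γ.dist o p2 ≤ k + 1 :=
    ih (D - 1) (by omega) (k + 1) p' q p2 hp'q (by omega) (by omega) (by omega) (by omega)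
  rcases Nat.lt_or_ge (Γ.dist o p2) (k + 1) with h2 | h2
  · exact hnb (H.1 (k + 1) (by omega) o p' p p2 hφ hp'.symm hp2 (by omega) (by omega))
  · obtain ⟨w, hw1, hw2, hw3⟩ := H.2 (k + 1) (by omega) o p' p2 hφ (by omega) hp2
    have a4 := adjd hc hw2 q
    rw [Γ.dist_comm, Γ.dist_comm (u := q)] at a4
    have hpw : p = w ∨ Γ.Adj p w :=
      H.1 (k + 1) (by omega) o p' p w hφ hp'.symm hw1 (by omega) hw3
    have e2 : Γ.dist w p2 = 1 := SimpleGraph.dist_eq_one_iff_adj.2 hw2.symm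
    rcases hpw with h | h
    · subst h; exact hnb (Or.inr hw2.symm)
    · have a5 := adjd hc h q
      rw [Γ.dist_comm, Γ.dist_comm (u := q)] at a5
      have := ih (D - 1) (by omega) k w q p2 (by omega) (by omega) (by omega) hq (by omega)
      omega


lemma tr (hc : Γ.Connected) (a b c : V) :
    Γ.dist b c ≤ Γ.dist a b + Γ.dist a c ∧ Γ.dist a b ≤ Γ.dist a c + Γ.dist b c ∧
    Γ.dist a c ≤ Γ.dist a b + Γ.dist b c := by
  have h1 := hc.dist_triangle (u := b) (v := a) (w := c)
  have h2 := hc.dist_triangle (u := a) (v := c) (w := b)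
  have h3 := hc.dist_triangle (u := a) (v := b) (w := c)
  rw [Γ.dist_comm (u := b) (v := a)] at h1
  rw [Γ.dist_comm (u := c) (v := b)] at h2
  omega

lemma adjd' (hc : Γ.Connected) {a b : V} (h : Γ.Adj a b) (o : V) :
    Γ.dist a o ≤ Γ.dist b o + 1 ∧ Γ.dist b o ≤ Γ.dist a o + 1 := by
  have := adjd hc h o
  rwa [Γ.dist_comm (u := o), Γ.dist_comm (u := o)] at this

lemma step' (hc : Γ.Connected) {p q : V} (k : ℕ) (h : Γ.dist p q = k + 1) :
    ∃ z, Γ.Adj q z ∧ Γ.dist p z = k := by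
  rw [Γ.dist_comm] at h
  obtain ⟨z, h1, h2⟩ := step hc k h
  exact ⟨z, h1, by rwa [Γ.dist_comm]⟩

lemma d1 {a b : V} (h : Γ.Adj a b) : Γ.dist a b = 1 := SimpleGraph.dist_eq_one_iff_adj.2 h

set_option maxHeartbeats 4000000 in
lemma stepQ (hb : IsBridged Γ) (hN : NoInducedCycles Γ 4 17) (n : ℕ) (hn : 2 ≤ n)
    (H : Hp Γ (2 * n - 1)) : Qp Γ n := by
  have hc := hb.1
  intro u v x y huv hvx hvy hx hy
  have trans : ∀ a b c, Γ.Adj v a → Γ.Adj v b → Γ.Adj v c → Γ.dist u a + 1 = n →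
      Γ.dist u b + 1 = n → Γ.dist u c + 1 = n → (a = b ∨ Γ.Adj a b) → (b = c ∨ Γ.Adj b c) →
      (a = c ∨ Γ.Adj a c) := by
    intro a b c hva hvb hvc ha hb' hc' hab hbc
    rcases hab with rfl | hab
    · exact hbc
    rcases hbc with rfl | hbc
    · exact Or.inr hab
    by_contra hcon
    push Not at hcon
    obtain ⟨hac, hnac⟩ := hcon
    obtain ⟨s, hs1, hs2, hs3⟩ := H.2 (n - 1) (by omega) u a b (by omega) (by omega) hab
    obtain ⟨t, ht1, ht2, ht3⟩ := H.2 (n - 1) (by omega) u b c (by omega) (by omega) hbc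
    have hst := H.1 (n - 1) (by omega) u b s t (by omega) hs2 ht1 hs3 ht3
    have hvs : ¬ Γ.Adj v s := fun h => by have := adjd hc h u; omega
    have hvt : ¬ Γ.Adj v t := fun h => by have := adjd hc h u; omega
    have nvs : v ≠ s := by rintro rfl; omega
    have nvt : v ≠ t := by rintro rfl; omega
    rcases hst with rfl | hst
    · exact noC4 hN hva hs1 ht2.symm hvc.symm hvs hnac nvs hac
    have hat : ¬ Γ.Adj a t := fun h => noC4 hN hva h ht2.symm hvc.symm hvt hnac nvt hac
    have hsc : ¬ Γ.Adj s c := fun h => noC4 hN hva hs1 h hvc.symm hvs hnac nvs hac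
    exact noC5 hN hva hs1 hst ht2.symm hvc.symm hvs hat hsc
      (fun h => hvt h.symm) (fun h => hnac h.symm)
  have nb : ∀ z a, Γ.dist u z + Γ.dist v z = n → Γ.Adj v a → Γ.dist a z + 1 = Γ.dist v z →
      Γ.dist u a + 1 = n := by
    intro z a hz hva ha
    have := tr hc u a z
    have := adjd hc hva u
    omega
  have cl : ∀ z a b, 1 ≤ Γ.dist u z → Γ.dist u z + Γ.dist v z = n → Γ.Adj v a → Γ.Adj v b →
      Γ.dist a z + 1 = Γ.dist v z → Γ.dist b z + 1 = Γ.dist v z → a = b ∨ Γ.Adj a b := by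
    intro z a b h1 h2 hva hvb ha hb'
    rw [Γ.dist_comm] at ha hb'
    exact H.1 (Γ.dist v z) (by omega) z v a b Γ.dist_comm hva hvb ha hb'
  have ex : ∀ z, 1 ≤ Γ.dist v z → ∃ a, Γ.Adj v a ∧ Γ.dist a z + 1 = Γ.dist v z := by
    intro z hz
    obtain ⟨a, h1, h2⟩ := step hc (Γ.dist v z - 1) (show Γ.dist v z = _ by omega)
    exact ⟨a, h1, by omega⟩
  let I : V → Prop := fun z => 1 ≤ Γ.dist u z ∧ 1 ≤ Γ.dist v z ∧ Γ.dist u z + Γ.dist v z = n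
  let Same : V → V → Prop := fun p q => ∀ a b, Γ.Adj v a → Γ.Adj v b →
    Γ.dist a p + 1 = Γ.dist v p → Γ.dist b q + 1 = Γ.dist v q → a = b ∨ Γ.Adj a b
  have symS : ∀ p q, Same p q → Same q p := by
    intro p q h a b ha hb' h1 h2
    rcases h b a hb' ha h2 h1 with h | h
    · exact Or.inl h.symm
    · exact Or.inr h.symm
  have transS : ∀ p z q, I p → I z → I q → Same p z → Same z q → Same p q := by
    intro p z q hp hz hq h1 h2 a b ha hb' ha2 hb2
    obtain ⟨c, hc1, hc2⟩ := ex z hz.2.1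
    exact trans a c b ha hc1 hb' (nb p a hp.2.2 ha ha2) (nb z c hz.2.2 hc1 hc2)
      (nb q b hq.2.2 hb' hb2) (h1 a c ha hc1 ha2 hc2) (h2 c b hc1 hb' hc2 hb2)
  have adjS0 : ∀ p q, I p → I q → Γ.Adj p q → Γ.dist u q ≤ Γ.dist u p → Same p q := by
    intro p q hp hq hpq hle a b ha hb' ha2 hb2
    obtain ⟨hp1, hp2, hp3⟩ := hp
    obtain ⟨hq1, hq2, hq3⟩ := hq
    have hA := adjd hc hpq u
    rcases Nat.lt_or_ge (Γ.dist u q) (Γ.dist u p) with h | h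
    · have h1 := adjd hc hpq a
      have h2 := adjd' hc ha q
      exact cl q a b hq1 hq3 ha hb' (by omega) hb2
    · obtain ⟨w, hw1, hw2, hw3⟩ := H.2 (Γ.dist v p) (by omega) v p q rfl (by omega) hpq
      rcases Nat.lt_or_ge 1 (Γ.dist v p) with h1 | h1
      · obtain ⟨c, hc1, hc2⟩ := ex w (by omega)
        have e1 := adjd hc hw1 c
        have e2 := adjd hc hw2 c
        have e3 := adjd' hc hc1 p
        have e4 := adjd' hc hc1 q
        have f1 := cl p a c hp1 hp3 ha hc1 ha2 (by omega)
        have f2 := cl q c b hq1 hq3 hc1 hb' (by omega) hb2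
        exact trans a c b ha hc1 hb' (nb p a hp3 ha ha2) (nb p c hp3 hc1 (by omega))
          (nb q b hq3 hb' hb2) f1 f2
      · have e1 : a = p := (hc.dist_eq_zero_iff).1 (by omega)
        have e2 : b = q := (hc.dist_eq_zero_iff).1 (by omega)
        subst e1 e2
        exact Or.inr hpq
  have adjS : ∀ p q, I p → I q → Γ.Adj p q → Same p q := by
    intro p q hp hq hpq
    rcases le_total (Γ.dist u q) (Γ.dist u p) with h | h
    · exact adjS0 p q hp hq hpq h
    · exact symS _ _ (adjS0 q p hq hp hpq.symm h)
  have key : ∀ D E : ℕ, ∀ p q, I p → I q → Γ.dist p q ≤ D → Γ.dist u p ≤ Γ.dist u q + E →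
      Γ.dist u q ≤ Γ.dist u p + E → Γ.dist p q < Γ.dist u p + Γ.dist u q →
      Γ.dist p q + Γ.dist u p + Γ.dist u q < 2 * n → Same p q := by
    intro D
    induction D using Nat.strong_induction_on with
    | _ D ihD =>
    intro E
    induction E using Nat.strong_induction_on with
    | _ E ihE =>
    have main : ∀ p q, I p → I q → Γ.dist p q ≤ D → Γ.dist u p ≤ Γ.dist u q + E →
      Γ.dist u q ≤ Γ.dist u p → Γ.dist p q < Γ.dist u p + Γ.dist u q →
      Γ.dist p q + Γ.dist u p + Γ.dist u q < 2 * n → Same p q := by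
      intro p q hp hq hD hE hle hδ1 hδ2
      have hpI := hp
      have hqI := hq
      obtain ⟨hp1, hp2, hp3⟩ := hp
      obtain ⟨hq1, hq2, hq3⟩ := hq
      rcases Nat.lt_or_ge (Γ.dist p q) 2 with h2 | h2
      · rcases Nat.lt_or_ge (Γ.dist p q) 1 with h1 | h1
        · have e : p = q := (hc.dist_eq_zero_iff).1 (by omega)
          subst e
          intro a b ha hb' ha2 hb2
          exact cl p a b hp1 hp3 ha hb' ha2 hb2
        · exact adjS p q hpI hqI (SimpleGraph.dist_eq_one_iff_adj.1 (by omega))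
      by_cases hint : ∃ z, Γ.dist p z + Γ.dist z q = Γ.dist p q ∧ 1 ≤ Γ.dist p z ∧
          1 ≤ Γ.dist z q ∧ Γ.dist u z + Γ.dist v z = n
      · obtain ⟨z, hz1, hz2, hz3, hz4⟩ := hint
        have t1 := tr hc u p z
        have t2 := tr hc u z q
        have t3 := tr hc v p z
        have t4 := tr hc v z q
        have hzI : I z := ⟨by omega, by omega, hz4⟩
        have s1 : Same p z := ihD (Γ.dist p z) (by omega) (2 * n) p z hpI hzI le_rfl (by omega)
          (by omega) (by omega) (by omega)
        have s2 : Same z q := ihD (Γ.dist z q) (by omega) (2 * n) z q hzI hqI le_rfl (by omega)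
          (by omega) (by omega) (by omega)
        exact transS p z q hpI hzI hqI s1 s2
      have hout : ∀ z, Γ.dist p z + Γ.dist z q = Γ.dist p q → 1 ≤ Γ.dist p z →
          1 ≤ Γ.dist z q → n + 1 ≤ Γ.dist u z + Γ.dist v z ∧ Γ.dist u z ≤ Γ.dist u p ∧
            Γ.dist v z ≤ Γ.dist v q := by
        intro z hz1 hz2 hz3
        have c1 := conv hc H u _ (Γ.dist u p) p q z rfl (by omega) (by omega) (by omega) hz1
        have c2 := conv hc H v _ (Γ.dist v q) p q z rfl (by omega) (by omega) (by omega) hz1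
        have t1 := tr hc u v z
        refine ⟨?_, c1, c2⟩
        by_contra hlt
        exact hint ⟨z, hz1, hz2, hz3, by omega⟩
      obtain ⟨z, hpz, hzq⟩ := step hc (Γ.dist p q - 1) (show Γ.dist p q = _ by omega)
      obtain ⟨l, hql, hzl⟩ := step' hc (Γ.dist p q - 2) (show Γ.dist z q = _ by omega)
      have e1 := d1 hpz
      have e2 := d1 hql.symm
      have hpl : Γ.dist p l = Γ.dist p q - 1 := by
        have t1 := tr hc p z l
        have t2 := tr hc p l q
        omega
      obtain ⟨z1, z2, z3⟩ := hout z (by omega) (by omega) (by omega)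
      obtain ⟨l1, l2, l3⟩ := hout l (by omega) (by omega) (by omega)
      have a1 := adjd hc hpz u
      have a2 := adjd hc hpz v
      have a3 := adjd hc hql u
      have a4 := adjd hc hql v
      obtain ⟨w, hw1, hw2, hw3⟩ := H.2 (Γ.dist v q) (by omega) v q l rfl (by omega) hql
      have a5 := adjd hc hw1 u
      have t5 := tr hc u v w
      have hwI : I w := ⟨by omega, by omega, by omega⟩
      have swq : Same w q := adjS w q hwI hqI hw1.symm
      rcases Nat.lt_or_ge (Γ.dist u q + 1) (Γ.dist u p) with hgt | hgt
      · obtain ⟨w', hw1', hw2', hw3'⟩ := H.2 (Γ.dist u p) (by omega) u p z rfl (by omega) hpz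
        have a6 := adjd hc hw1' v
        have t6 := tr hc u v w'
        have hwI' : I w' := ⟨by omega, by omega, by omega⟩
        have spw : Same p w' := adjS p w' hpI hwI' hw1'
        have b1 := adjd' hc hw2' w
        have b2 := adjd hc hw2 z
        have sww : Same w' w := ihE (E - 1) (by omega) w' w hwI' hwI (by omega) (by omega)
          (by omega) (by omega) (by omega)
        exact transS _ _ _ hpI hwI' hqI spw (transS _ _ _ hwI' hwI hqI sww swq)
      · have b1 := adjd hc hw2 p
        have e3 := d1 hw2
        have hlt : Γ.dist p w < Γ.dist p q := by
          by_contra hge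
          have := conv hc H v (Γ.dist p w) (Γ.dist v p) p w l rfl (by omega) (by omega) (by omega)
            (by omega)
          omega
        have spw : Same p w := ihD (Γ.dist p w) (by omega) (2 * n) p w hpI hwI le_rfl (by omega)
          (by omega) (by omega) (by omega)
        exact transS _ _ _ hpI hwI hqI spw swq
    intro p q hp hq hD hE1 hE2 h1 h2
    rcases le_total (Γ.dist u q) (Γ.dist u p) with h | h
    · exact main p q hp hq hD hE1 h h1 h2
    · rw [Γ.dist_comm] at hD h1 h2
      exact symS _ _ (main q p hq hp hD hE2 h (by omega) (by omega))
  -- geodesics through x and y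
  obtain ⟨α, α0, αn, αa, αl, αd⟩ := geod hc (n - 1) u x (by omega)
  obtain ⟨β, β0, βn, βa, βl, βd⟩ := geod hc (n - 1) u y (by omega)
  have ext : ∀ (γ : ℕ → V) (x : V), Γ.Adj v x → Γ.dist u x + 1 = n → γ 0 = u → γ (n - 1) = x →
      (∀ k < n - 1, Γ.Adj (γ k) (γ (k + 1))) →
      (∀ k ≤ n - 1, Γ.dist u (γ k) = k ∧ Γ.dist (γ k) x = n - 1 - k) →
      (∀ i j, i ≤ j → j ≤ n - 1 → Γ.dist (γ i) (γ j) = j - i) →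
      ∃ γ' : ℕ → V, γ' 0 = u ∧ γ' n = v ∧ (∀ k < n, Γ.Adj (γ' k) (γ' (k + 1))) ∧
      (∀ i j, i ≤ j → j ≤ n → Γ.dist (γ' i) (γ' j) = j - i) ∧
      (∀ k, 1 ≤ k → k < n → Γ.dist u (γ' k) = k ∧ I (γ' k) ∧
        Γ.dist x (γ' k) + 1 = Γ.dist v (γ' k)) := by
    intro γ x hvx hx g0 gn ga gl gd
    have lev : ∀ k, k < n → Γ.dist v (γ k) = n - k := by
      intro k hk
      have h1 := gl k (by omega)
      have h2 := adjd' hc hvx (γ k)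
      rw [Γ.dist_comm] at h1
      have h3 := Γ.dist_comm (u := x) (v := γ k)
      have t := tr hc u v (γ k)
      rw [Γ.dist_comm (v := γ k) (u := u)] at t
      omega
    refine ⟨fun k => if k < n then γ k else v, ?_, by simp, ?_, ?_, ?_⟩
    · beta_reduce
      rw [if_pos (by omega), g0]
    · intro k hk
      beta_reduce
      rcases Nat.lt_or_ge (k + 1) n with h | h
      · rw [if_pos hk, if_pos h]; exact ga k (by omega)
      · rw [if_pos hk, if_neg (by omega), show k = n - 1 by omega, gn]; exact hvx.symm
    · intro i j hij hj
      beta_reduce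
      rcases Nat.lt_or_ge j n with h | h
      · rw [if_pos (by omega), if_pos h]; exact gd i j hij (by omega)
      · rw [if_neg (show ¬ j < n by omega)]
        rcases Nat.lt_or_ge i n with h' | h'
        · rw [if_pos h', Γ.dist_comm, lev i h']; omega
        · rw [if_neg (show ¬ i < n by omega)]; simp; omega
    · intro k h1 h2
      beta_reduce
      rw [if_pos h2]
      have h3 := gl k (by omega)
      have h4 := lev k h2
      rw [Γ.dist_comm (v := x)] at h3
      exact ⟨h3.1, ⟨by omega, by omega, by omega⟩, by omega⟩
  obtain ⟨α', α0', αn', αa', αd', αI⟩ := ext α x hvx hx α0 αn αa αl αd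
  obtain ⟨β', β0', βn', βa', βd', βI⟩ := ext β y hvy hy β0 βn βa βl βd
  obtain ⟨i, j, hi, hj, h1, h2⟩ := shortcut hb n 0 hn (by omega) u v v α' β' α0' β0' αn' βn'
    αa' βa' αd' βd' (by simp)
  have A1 := αd' 0 i (by omega) hi
  have A2 := αd' i n hi le_rfl
  have B1 := βd' 0 j (by omega) hj
  have B2 := βd' j n hj le_rfl
  rw [α0'] at A1; rw [αn', Γ.dist_comm] at A2
  rw [β0'] at B1; rw [βn', Γ.dist_comm] at B2
  have t1 := tr hc u (α' i) (β' j)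
  have t2 := tr hc v (α' i) (β' j)
  obtain ⟨hα1, hα2, hα3⟩ := αI i (by omega) (by omega)
  obtain ⟨hβ1, hβ2, hβ3⟩ := βI j (by omega) (by omega)
  exact key (2 * n) (2 * n) (α' i) (β' j) hα2 hβ2 (by omega) (by omega) (by omega) (by omega)
    (by omega) x y hvx hvy hα3 hβ3


/-- the strip lemma -/
lemma strip (hc : Γ.Connected) (hN : NoInducedCycles Γ 4 17) {u o p z r : V} {i m : ℕ}
    (T1 : Tp Γ i) (Q1 : Qp Γ i) (T2 : Tp Γ m) (Q2 : Qp Γ m)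
    (hpz : Γ.Adj p z) (hzr : Γ.Adj z r) (hpr : Γ.dist p r = 2)
    (up : Γ.dist u p = i) (uz : Γ.dist u z = i) (ur : Γ.dist u r = i)
    (op : Γ.dist o p = m) (oz : Γ.dist o z = m) (or' : Γ.dist o r = m) :
    ∃ v, Γ.Adj z v ∧ Γ.dist o v + 1 = m ∧ Γ.dist u v ≤ i := by
  by_contra hcon
  push Not at hcon
  obtain ⟨w0, hw1, hw2, hw3⟩ := T1 u p z up uz hpz
  obtain ⟨w1, hx1, hx2, hx3⟩ := T1 u z r uz ur hzr
  obtain ⟨v0, hv1, hv2, hv3⟩ := T2 o p z op oz hpz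
  obtain ⟨v1, hy1, hy2, hy3⟩ := T2 o z r oz or' hzr
  have hw := Q1 u z w0 w1 uz hw2 hx1 hw3 hx3
  have hv := Q2 o z v0 v1 oz hv2 hy1 hv3 hy3
  have l0 := hcon v0 hv2 hv3
  have l1 := hcon v1 hy1 hy3
  have hnpr : ¬ Γ.Adj p r := fun h => by have := d1 h; omega
  have npr : p ≠ r := by rintro rfl; simp at hpr
  have sep : ∀ a b, Γ.dist u a + 1 = i → i < Γ.dist u b → ¬ Γ.Adj a b ∧ a ≠ b := by
    intro a b ha hb'
    refine ⟨fun h => ?_, ?_⟩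
    · have := adjd hc h u; omega
    · rintro rfl; omega
  -- W part: either a single vertex or an edge
  have hW : (∃ c, Γ.Adj p c ∧ Γ.Adj r c ∧ Γ.dist u c + 1 = i) ∨
      (Γ.Adj w0 w1 ∧ ¬ Γ.Adj p w1 ∧ ¬ Γ.Adj w0 r) := by
    by_cases h1 : Γ.Adj p w1
    · exact Or.inl ⟨w1, h1, hx2, hx3⟩
    by_cases h2 : Γ.Adj w0 r
    · exact Or.inl ⟨w0, hw1, h2.symm, hw3⟩
    rcases hw with rfl | hw
    · exact absurd hw1 h1
    · exact Or.inr ⟨hw, h1, h2⟩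
  have hV : (∃ c, Γ.Adj p c ∧ Γ.Adj r c ∧ i < Γ.dist u c) ∨
      (Γ.Adj v0 v1 ∧ ¬ Γ.Adj p v1 ∧ ¬ Γ.Adj v0 r) := by
    by_cases h1 : Γ.Adj p v1
    · exact Or.inl ⟨v1, h1, hy2, l1⟩
    by_cases h2 : Γ.Adj v0 r
    · exact Or.inl ⟨v0, hv1, h2.symm, l0⟩
    rcases hv with rfl | hv
    · exact absurd hv1 h1
    · exact Or.inr ⟨hv, h1, h2⟩
  rcases hW with ⟨c, c1, c2, c3⟩ | ⟨hww, hw4, hw5⟩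
  · rcases hV with ⟨e, e1, e2, e3⟩ | ⟨hvv, hv4, hv5⟩
    · exact noC4 hN c1 c2.symm e2 e1.symm hnpr (sep c e c3 e3).1 npr (sep c e c3 e3).2
    · exact noC5 hN hv1 hvv hy2.symm c2 c1.symm hv4 hv5
        (fun h => (sep c v1 c3 l1).1 h.symm) (fun h => hnpr h.symm) (sep c v0 c3 l0).1
  · rcases hV with ⟨e, e1, e2, e3⟩ | ⟨hvv, hv4, hv5⟩
    · exact noC5 hN hw1 hww hx2.symm e2 e1.symm hw4 hw5
        (sep w1 e hx3 e3).1 (fun h => hnpr h.symm) (fun h => (sep w0 e hw3 e3).1 h.symm)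
    · exact noC6 hN hw1 hww hx2.symm hy2 hvv.symm hv1.symm hw4 hw5
        (sep w1 v1 hx3 l1).1 (fun h => hv5 h.symm) (fun h => hv4 h.symm)
        (fun h => (sep w0 v0 hw3 l0).1 h.symm) hnpr (sep w0 v1 hw3 l1).1 (sep w1 v0 hx3 l0).1

set_option maxHeartbeats 4000000 in
lemma stepT (hb : IsBridged Γ) (hN : NoInducedCycles Γ 4 17) (n : ℕ) (hn : 2 ≤ n)
    (H : Hp Γ (2 * n)) : Tp Γ n := by
  have hc := hb.1
  intro u x y hx hy hxy
  by_contra hno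
  -- symmetric formulation
  let Bad : V → V → Prop := fun x y => Γ.dist u x = n ∧ Γ.dist u y = n ∧ Γ.Adj x y ∧
    ∀ z, Γ.Adj x z → Γ.Adj y z → Γ.dist u z + 1 = n → False
  have F1 : ∀ x y, Bad x y → ∀ p, 1 ≤ Γ.dist u p → Γ.dist u p + Γ.dist x p = n →
      Γ.dist u p + Γ.dist y p = n → False := by
    rintro x y ⟨hx, hy, hxy, hno⟩ p h1 h2 h3
    obtain ⟨z, hz1, hz2, hz3⟩ := H.2 (Γ.dist x p) (by omega) p x y Γ.dist_comm
      (by rw [Γ.dist_comm]; omega) hxy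
    have t1 := tr hc u p z
    have a1 := adjd hc hz1 u
    exact hno z hz1 hz2 (by omega)
  have F2 : ∀ x y, Bad x y → ∀ p, 1 ≤ Γ.dist u p → Γ.dist u p + Γ.dist x p = n →
      Γ.dist u p + Γ.dist y p = n + 1 := by
    intro x y hB p h1 h2
    have h3 : Γ.dist u p + Γ.dist y p ≠ n := fun h => F1 x y hB p h1 h2 h
    obtain ⟨hx, hy, hxy, hno⟩ := hB
    have a := adjd' hc hxy p
    have t := tr hc u y p
    omega
  have Bsym : ∀ x y, Bad x y → Bad y x := by
    rintro x y ⟨hx, hy, hxy, hno⟩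
    exact ⟨hy, hx, hxy.symm, fun z h1 h2 h3 => hno z h2 h1 h3⟩
  have key : ∀ D E : ℕ, ∀ x y, Bad x y → ∀ p q, 1 ≤ Γ.dist u p → 1 ≤ Γ.dist u q →
      Γ.dist u p + Γ.dist x p = n → Γ.dist u q + Γ.dist y q = n →
      Γ.dist p q ≤ D → Γ.dist u p ≤ Γ.dist u q + E →
      Γ.dist u q ≤ Γ.dist u p + E → Γ.dist p q < Γ.dist u p + Γ.dist u q →
      Γ.dist p q + Γ.dist u p + Γ.dist u q < 2 * n + 1 → False := by
    intro D
    induction D using Nat.strong_induction_on with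
    | _ D ihD =>
    intro E
    induction E using Nat.strong_induction_on with
    | _ E ihE =>
    have main : ∀ x y, Bad x y → ∀ p q, 1 ≤ Γ.dist u p → 1 ≤ Γ.dist u q →
      Γ.dist u p + Γ.dist x p = n → Γ.dist u q + Γ.dist y q = n →
      Γ.dist p q ≤ D → Γ.dist u p ≤ Γ.dist u q + E →
      Γ.dist u q ≤ Γ.dist u p → Γ.dist p q < Γ.dist u p + Γ.dist u q →
      Γ.dist p q + Γ.dist u p + Γ.dist u q < 2 * n + 1 → False := by
      intro x y hB p q hp1 hq1 hpx hqy hD hE hle hδ1 hδ2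
      have hB' := Bsym x y hB
      have hpy := F2 x y hB p hp1 hpx
      have hqx := F2 y x hB' q hq1 hqy
      have hpn : Γ.dist u p < n := by
        have := tr hc x p q
        omega
      -- δ ≤ 1
      rcases Nat.lt_or_ge (Γ.dist p q) 2 with h2 | h2
      · rcases Nat.lt_or_ge (Γ.dist p q) 1 with h1 | h1
        · have e : p = q := (hc.dist_eq_zero_iff).1 (by omega)
          subst e
          omega
        · have hpq : Γ.Adj p q := SimpleGraph.dist_eq_one_iff_adj.1 (by omega)
          have a1 := adjd hc hpq u
          have a2 := adjd hc hpq x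
          rcases Nat.lt_or_ge (Γ.dist u q) (Γ.dist u p) with h | h
          · omega
          · obtain ⟨a, ha1, ha2⟩ := step hc (Γ.dist x p - 1) (show Γ.dist x p = _ by omega)
            have a3 := adjd hc hpq a
            have a4 := adjd' hc ha1 q
            have a5 := adjd hc ha1 u
            have t1 := tr hc u a p
            obtain ⟨hx, hy, hxy, hno⟩ := hB
            have hq := H.1 (Γ.dist x q) (by omega) q x a y Γ.dist_comm ha1 hxy
              (by rw [Γ.dist_comm]; omega) (by rw [Γ.dist_comm]; omega)
            rcases hq with rfl | hq
            · omega
            · exact hno a ha1 hq.symm (by omega)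
      have hout : ∀ z, Γ.dist p z + Γ.dist z q = Γ.dist p q → 1 ≤ Γ.dist p z →
          1 ≤ Γ.dist z q → n + 1 ≤ Γ.dist u z + Γ.dist x z ∧ n + 1 ≤ Γ.dist u z + Γ.dist y z ∧
            Γ.dist u z ≤ Γ.dist u p ∧ Γ.dist x z ≤ Γ.dist x q ∧
            Γ.dist y z ≤ max (Γ.dist y p) (Γ.dist y q) := by
        intro z hz1 hz2 hz3
        have c1 := conv hc H u _ (Γ.dist u p) p q z rfl (by omega) (by omega) (by omega) hz1
        have c2 := conv hc H x _ (Γ.dist x q) p q z rfl (by omega) (by omega) (by omega) hz1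
        have c3 := conv hc H y _ (max (Γ.dist y p) (Γ.dist y q)) p q z rfl (by omega)
          (le_max_left _ _) (le_max_right _ _) hz1
        have s1 := tr hc u x z
        have s2 := tr hc u y z
        have t1 := tr hc u p z
        have t2 := tr hc u z q
        have hx := hB.1
        have hy := hB.2.1
        refine ⟨?_, ?_, c1, c2, c3⟩
        · by_contra hlt
          exact ihD (Γ.dist z q) (by omega) (2 * n) x y hB z q (by omega) hq1 (by omega) hqy
            le_rfl (by omega) (by omega) (by omega) (by omega)
        · by_contra hlt
          exact ihD (Γ.dist p z) (by omega) (2 * n) x y hB p z hp1 (by omega) hpx (by omega)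
            le_rfl (by omega) (by omega) (by omega) (by omega)
      have hx := hB.1
      have hy := hB.2.1
      obtain ⟨z, hpz, hzq⟩ := step hc (Γ.dist p q - 1) (show Γ.dist p q = _ by omega)
      obtain ⟨l, hql, hzl⟩ := step' hc (Γ.dist p q - 2) (show Γ.dist z q = _ by omega)
      have e1 := d1 hpz
      have e2 := d1 hql.symm
      have hpl : Γ.dist p l = Γ.dist p q - 1 := by
        have t1 := tr hc p z l
        have t2 := tr hc p l q
        omega
      obtain ⟨z1, z2, z3, z4, z5⟩ := hout z (by omega) (by omega) (by omega)
      obtain ⟨l1, l2, l3, l4, l5⟩ := hout l (by omega) (by omega) (by omega)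
      have a1 := adjd hc hpz u
      have a2 := adjd hc hpz x
      have a3 := adjd hc hql u
      have a4 := adjd hc hql y
      -- going down from p
      obtain ⟨w', hw1', hw2', hw3'⟩ := H.2 (Γ.dist u p) (by omega) u p z rfl (by omega) hpz
      have a6 := adjd hc hw1' x
      have t6 := tr hc u x w'
      rcases Nat.lt_or_ge (Γ.dist u q) (Γ.dist u p) with hlt | hge
      · -- going up from q
        obtain ⟨w, hw1, hw2, hw3⟩ := H.2 (Γ.dist y q) (by omega) y q l rfl (by omega) hql
        have a5 := adjd hc hw1 u
        have t5 := tr hc u y w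
        have b2 := adjd hc hw2 z
        rcases Nat.lt_or_ge (Γ.dist u q + 1) (Γ.dist u p) with hgt | hgt
        · have b1 := adjd' hc hw2' w
          exact ihE (E - 1) (by omega) x y hB w' w (by omega) (by omega) (by omega) (by omega)
            (by omega) (by omega) (by omega) (by omega) (by omega)
        · rcases Nat.lt_or_ge (Γ.dist p q) 3 with h3 | h3
          · rcases Nat.lt_or_ge 1 (Γ.dist u q) with h4 | h4
            · have b1 := adjd' hc hw2' q
              exact ihE 0 (by omega) x y hB w' q (by omega) (by omega) (by omega) (by omega)
                (by omega) (by omega) (by omega) (by omega) (by omega)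
            · have b3 := adjd' hc hpz w
              exact ihE 0 (by omega) x y hB p w (by omega) (by omega) (by omega) (by omega)
                (by omega) (by omega) (by omega) (by omega) (by omega)
          · obtain ⟨r, hzr, hrq⟩ := step hc (Γ.dist p q - 2) (show Γ.dist z q = _ by omega)
            have e3 := d1 hzr
            have hpr : Γ.dist p r = 2 := by
              have t1 := tr hc p z r
              have t2 := tr hc p r q
              omega
            obtain ⟨r1, r2, r3, r4, r5⟩ := hout r (by omega) (by omega) (by omega)
            obtain ⟨v, hv1, hv2, hv3⟩ := strip hc hN (u := u) (o := y) (p := p) (z := z) (r := r)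
              (i := Γ.dist u p) (m := Γ.dist y q)
              (H.2 _ (by omega)) (H.1 _ (by omega)) (H.2 _ (by omega)) (H.1 _ (by omega))
              hpz hzr hpr rfl (by omega) (by omega) (by omega) (by omega) (by omega)
            have b3 := adjd hc hv1 p
            have t7 := tr hc u y v
            exact ihD (Γ.dist p v) (by omega) 0 x y hB p v (by omega) (by omega) (by omega)
              (by omega) le_rfl (by omega) (by omega) (by omega) (by omega)
      · rcases Nat.lt_or_ge (Γ.dist p q) 3 with h3 | h3
        · have hzq' : Γ.Adj z q := SimpleGraph.dist_eq_one_iff_adj.1 (by omega)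
          obtain ⟨w, hw1, hw2, hw3⟩ := H.2 (Γ.dist u p) (by omega) u z q (by omega) (by omega) hzq'
          have b1 := adjd hc hw2 y
          have t7 := tr hc u y w
          have hww := H.1 (Γ.dist u p) (by omega) u z w' w (by omega) hw2' hw1 hw3' hw3
          have h5 : Γ.dist w' w ≤ 1 := by
            rcases hww with rfl | h
            · simp
            · exact (d1 h).le
          exact ihD (Γ.dist w' w) (by omega) 0 x y hB w' w (by omega) (by omega) (by omega)
              (by omega) le_rfl (by omega) (by omega) (by omega) (by omega)
        · obtain ⟨r, hzr, hrq⟩ := step hc (Γ.dist p q - 2) (show Γ.dist z q = _ by omega)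
          obtain ⟨s, hrs, hsq⟩ := step hc (Γ.dist p q - 3) (show Γ.dist r q = _ by omega)
          have e3 := d1 hzr
          have e4 := d1 hrs
          have hpr : Γ.dist p r = 2 := by
            have t1 := tr hc p z r
            have t2 := tr hc p r q
            omega
          have hzs : Γ.dist z s = 2 := by
            have t1 := tr hc z r s
            have t2 := tr hc z s q
            omega
          have hps : Γ.dist p s = 3 := by
            have t1 := tr hc p r s
            have t2 := tr hc p s q
            omega
          obtain ⟨r1, r2, r3, r4, r5⟩ := hout r (by omega) (by omega) (by omega)
          have hs : Γ.dist u s = Γ.dist u p ∧ Γ.dist x s = Γ.dist x q := by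
            rcases Nat.eq_zero_or_pos (Γ.dist s q) with h | h
            · have e : s = q := (hc.dist_eq_zero_iff).1 h
              subst e
              omega
            · obtain ⟨s1, s2, s3, s4, s5⟩ := hout s (by omega) (by omega) (by omega)
              omega
          obtain ⟨v, hv1, hv2, hv3⟩ := strip hc hN (u := u) (o := x) (p := z) (z := r) (r := s)
            (i := Γ.dist u p) (m := Γ.dist x q)
            (H.2 _ (by omega)) (H.1 _ (by omega)) (H.2 _ (by omega)) (H.1 _ (by omega))
            hzr hrs hzs (by omega) (by omega) (by omega) (by omega) (by omega) (by omega)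
          have b3 := adjd' hc hv1 q
          have t7 := tr hc u x v
          exact ihD (Γ.dist v q) (by omega) 0 x y hB v q (by omega) (by omega) (by omega)
            (by omega) le_rfl (by omega) (by omega) (by omega) (by omega)
    intro x y hB p q hp hq hpx hqy hD hE1 hE2 h1 h2
    rcases le_total (Γ.dist u q) (Γ.dist u p) with h | h
    · exact main x y hB p q hp hq hpx hqy hD hE1 h h1 h2
    · rw [Γ.dist_comm] at hD h1 h2
      exact main y x (Bsym x y hB) q p hq hp hqy hpx hD hE2 h (by omega) (by omega)
  have hB : Bad x y := ⟨hx, hy, hxy, fun z h1 h2 h3 => hno ⟨z, h1, h2, h3⟩⟩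
  obtain ⟨α, α0, αn, αa, αl, αd⟩ := geod hc n u x hx
  obtain ⟨β, β0, βn, βa, βl, βd⟩ := geod hc n u y hy
  obtain ⟨i, j, hi, hj, h1, h2⟩ := shortcut hb n 1 hn le_rfl u x y α β α0 β0 αn βn
    αa βa αd βd (d1 hxy)
  have A := αl i hi
  have B := βl j hj
  rw [Γ.dist_comm (v := x)] at A
  rw [Γ.dist_comm (v := y)] at B
  have t1 := tr hc u (α i) (β j)
  exact key (2 * n) (2 * n) x y hB (α i) (β j) (by omega) (by omega) (by omega) (by omega)
    (by omega) (by omega) (by omega) (by omega) (by omega)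

lemma Hall (hb : IsBridged Γ) (hN : NoInducedCycles Γ 4 17) (P : ℕ) : Hp Γ P := by
  have hc := hb.1
  induction P with
  | zero =>
    refine ⟨fun m hm => ?_, fun m hm => by omega⟩
    intro u v x y _ _ _ h
    omega
  | succ P ih =>
    refine ⟨fun m hm => ?_, fun m hm => ?_⟩
    · rcases Nat.lt_or_ge P (2 * m) with h | h
      · rcases Nat.lt_or_ge m 2 with h2 | h2
        · intro u v x y _ _ _ hx hy
          have e1 : u = x := (hc.dist_eq_zero_iff).1 (by omega)
          have e2 : u = y := (hc.dist_eq_zero_iff).1 (by omega)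
          exact Or.inl (e1.symm.trans e2)
        · have : P = 2 * m - 1 := by omega
          subst this
          exact stepQ hb hN m h2 ih
      · exact ih.1 m h
    · rcases Nat.lt_or_ge P (2 * m + 1) with h | h
      · have : P = 2 * m := by omega
        subst this
        rcases Nat.lt_or_ge m 2 with h2 | h2
        · intro u x y hx hy hxy
          rcases Nat.eq_zero_or_pos m with h0 | h0
          · subst h0
            have e1 : u = x := (hc.dist_eq_zero_iff).1 hx
            have e2 : u = y := (hc.dist_eq_zero_iff).1 hy
            exact absurd (e1.symm.trans e2) hxy.ne
          · have : m = 1 := by omega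
            subst this
            exact ⟨u, (SimpleGraph.dist_eq_one_iff_adj.1 hx).symm,
              (SimpleGraph.dist_eq_one_iff_adj.1 hy).symm, by simp⟩
        · exact stepT hb hN m h2 ih
      · exact ih.2 m h

end FixUnique


/-- In a strongly rigid action on (the 1-skeleton of) an 18-systolic complex, a
nontrivial element fixing a vertex has exactly one fixed vertex. -/
theorem fix_unique_vertex {V : Type*} (Γ : SimpleGraph V)
    (h18 : IsEighteenSystolic Γ) (G : Type*) [Group G] [MulAction G V]
    (hact : ∀ (g : G) (u v : V), Γ.Adj (g • u) (g • v) ↔ Γ.Adj u v)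
    (hsr : StronglyRigid Γ G)
    (g : G) (hg : g ≠ 1) (v : V) (hv : g • v = v) :
    ∀ u : V, g • u = u ↔ u = v := by
  intro u
  refine ⟨fun hu => ?_, fun h => by rw [h, hv]⟩
  by_contra hne
  apply hg
  have hc := h18.1.1
  have hle : ∀ (h : G) (a b : V), Γ.dist (h • a) (h • b) ≤ Γ.dist a b := by
    intro h a b
    let f : Γ →g Γ := ⟨fun x => h • x, fun {a b} hab => (hact h a b).2 hab⟩
    obtain ⟨w, hw⟩ := hc.exists_walk_length_eq_dist a b
    have := SimpleGraph.dist_le (w.map f)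
    rw [SimpleGraph.Walk.length_map, hw] at this
    exact this
  have hd : ∀ (h : G) (a b : V), Γ.dist (h • a) (h • b) = Γ.dist a b := by
    intro h a b
    refine le_antisymm (hle h a b) ?_
    have := hle h⁻¹ (h • a) (h • b)
    simpa using this
  have hpos : Γ.dist u v ≠ 0 := by
    intro h; exact hne ((hc.dist_eq_zero_iff).1 h)
  have hQ := (FixUnique.Hall h18.1 h18.2 (2 * Γ.dist u v)).1 _ le_rfl
  refine hsr g ⟨{w | w = v ∨ (Γ.Adj v w ∧ Γ.dist u w + 1 = Γ.dist u v)}, ?_, ?_, ?_⟩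
  · rintro a (rfl | ⟨ha, ha'⟩) b (rfl | ⟨hb, hb'⟩) hab
    · exact absurd rfl hab
    · exact hb
    · exact ha.symm
    · exact (hQ u v a b rfl ha hb ha' hb').resolve_left hab
  · obtain ⟨z, hz, hz'⟩ := FixUnique.step' hc (Γ.dist u v - 1)
      (show Γ.dist u v = _ by omega)
    exact ⟨v, Or.inl rfl, z, Or.inr ⟨hz, by omega⟩, hz.ne⟩
  · have hv' : g⁻¹ • v = v := by rw [inv_smul_eq_iff, hv]
    have hu' : g⁻¹ • u = u := by rw [inv_smul_eq_iff, hu]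
    ext w
    rw [Set.mem_smul_set_iff_inv_smul_mem]
    have e1 : g⁻¹ • w = v ↔ w = v := by rw [inv_smul_eq_iff, hv]
    have e2 : Γ.Adj v (g⁻¹ • w) ↔ Γ.Adj v w := by
      have := hact g⁻¹ v w
      rwa [hv'] at this
    have e3 : Γ.dist u (g⁻¹ • w) = Γ.dist u w := by
      have := hd g⁻¹ u w
      rwa [hu'] at this
    simp only [Set.mem_ofPred_eq, e1, e2, e3]
end

section
/- Let X be the 1-skeleton of an 18-systolic complex, i.e., a bridged graph with no induced cycles of length ℓ for 4 ≤ ℓ ≤ 17, and let G be a finitely generated group acting strongly rigidly on X by graph automorphisms such that every element of G has bounded orbits on the vertices of X (the action is locally elliptic). Then G has a bounded orbit on the vertices of X (the action is elliptic). -/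
open SimpleGraph Pointwise

namespace Sys

section basics
variable {V : Type*} {Γ : SimpleGraph V}

theorem noFin (hN : NoInducedCycles Γ 4 17) (n : ℕ) (h1 : 4 ≤ n + 1) (h2 : n + 1 ≤ 17)
    (f : Fin (n + 1) → V) (hi : ∀ i j, i < j → f i ≠ f j)
    (ha : ∀ i j : Fin (n + 1), i < j → (Γ.Adj (f i) (f j) ↔ (j = i + 1 ∨ i = j + 1))) : False := by
  refine hN (n + 1) h1 h2 ⟨f, ?_, ?_⟩
  · intro (i : Fin (n + 1)) (j : Fin (n + 1)) hij
    rcases lt_trichotomy i j with h | h | h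
    · exact absurd hij (hi i j h)
    · exact h
    · exact absurd hij.symm (hi j i h)
  · intro (i : Fin (n + 1)) (j : Fin (n + 1))
    rcases lt_trichotomy i j with h | h | h
    · exact ha i j h
    · subst h
      constructor
      · intro h
        exact absurd h (Γ.irrefl)
      · intro h
        exfalso
        have h3 : i = i + 1 := by tauto
        have h4 : (1 : Fin (n + 1)) = 0 := by
          have := congrArg (fun t => t - i) h3
          simpa using this.symm
        have h5 := congrArg Fin.val h4
        rw [Fin.val_one', Fin.val_zero, Nat.mod_eq_of_lt (by omega)] at h5
        omega
    · rw [SimpleGraph.adj_comm, or_comm]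
      exact ha j i h

theorem cyc4 (hN : NoInducedCycles Γ 4 17) {a b c d : V} (h1 : Γ.Adj a b) (h2 : Γ.Adj b c)
    (h3 : Γ.Adj c d) (h4 : Γ.Adj d a) (hac : a ≠ c) (hbd : b ≠ d) : Γ.Adj a c ∨ Γ.Adj b d := by
  by_contra hcon
  push Not at hcon
  obtain ⟨n1, n2⟩ := hcon
  have e1 := h1.ne
  have e2 := h2.ne
  have e3 := h3.ne
  have e4 := h4.ne.symm
  have h4' := h4.symm
  refine noFin hN 3 (by norm_num) (by norm_num) ![a, b, c, d] ?_ ?_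
  · intro i j hij
    fin_cases i <;> fin_cases j <;> first | exact absurd hij (by decide) | assumption
  · intro i j hij
    fin_cases i <;> fin_cases j <;> first
      | exact absurd hij (by decide)
      | exact iff_of_true (by assumption) (by decide)
      | exact iff_of_false (by assumption) (by decide)

theorem cyc5 (hN : NoInducedCycles Γ 4 17) {a b c d e : V} (h1 : Γ.Adj a b) (h2 : Γ.Adj b c)
    (h3 : Γ.Adj c d) (h4 : Γ.Adj d e) (h5 : Γ.Adj e a) (n1 : ¬ Γ.Adj a c) (n2 : ¬ Γ.Adj a d)
    (n3 : ¬ Γ.Adj b d) (n4 : ¬ Γ.Adj b e) (n5 : ¬ Γ.Adj c e) : False := by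
  have e1 := h1.ne
  have e2 := h2.ne
  have e3 := h3.ne
  have e4 := h4.ne
  have e5 := h5.ne.symm
  have h5' := h5.symm
  have f1 : a ≠ c := by rintro rfl; exact n2 h3
  have f2 : a ≠ d := by rintro rfl; exact n1 h3.symm
  have f3 : b ≠ d := by rintro rfl; exact n4 h4
  have f4 : b ≠ e := by rintro rfl; exact n3 h4.symm
  have f5 : c ≠ e := by rintro rfl; exact n1 h5.symm
  refine noFin hN 4 (by norm_num) (by norm_num) ![a, b, c, d, e] ?_ ?_
  · intro i j hij
    fin_cases i <;> fin_cases j <;> first | exact absurd hij (by decide) | assumption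
  · intro i j hij
    fin_cases i <;> fin_cases j <;> first
      | exact absurd hij (by decide)
      | exact iff_of_true (by assumption) (by decide)
      | exact iff_of_false (by assumption) (by decide)

theorem cyc6 (hN : NoInducedCycles Γ 4 17) {a b c d e f : V} (h1 : Γ.Adj a b) (h2 : Γ.Adj b c)
    (h3 : Γ.Adj c d) (h4 : Γ.Adj d e) (h5 : Γ.Adj e f) (h6 : Γ.Adj f a)
    (n1 : ¬ Γ.Adj a c) (n2 : ¬ Γ.Adj a d) (n3 : ¬ Γ.Adj a e)
    (n4 : ¬ Γ.Adj b d) (n5 : ¬ Γ.Adj b e) (n6 : ¬ Γ.Adj b f)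
    (n7 : ¬ Γ.Adj c e) (n8 : ¬ Γ.Adj c f) (n9 : ¬ Γ.Adj d f) : False := by
  have e1 := h1.ne
  have e2 := h2.ne
  have e3 := h3.ne
  have e4 := h4.ne
  have e5 := h5.ne
  have e6 := h6.ne.symm
  have h6' := h6.symm
  have f1 : a ≠ c := by rintro rfl; exact n2 h3
  have f2 : a ≠ d := by rintro rfl; exact n1 h3.symm
  have f3 : a ≠ e := by rintro rfl; exact n2 h4.symm
  have f4 : b ≠ d := by rintro rfl; exact n5 h4
  have f5 : b ≠ e := by rintro rfl; exact n4 h4.symm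
  have f6 : b ≠ f := by rintro rfl; exact n5 h5.symm
  have f7 : c ≠ e := by rintro rfl; exact n8 h5
  have f8 : c ≠ f := by rintro rfl; exact n7 h5.symm
  have f9 : d ≠ f := by rintro rfl; exact n2 h6.symm
  refine noFin hN 5 (by norm_num) (by norm_num) ![a, b, c, d, e, f] ?_ ?_
  · intro i j hij
    fin_cases i <;> fin_cases j <;> first | exact absurd hij (by decide) | assumption
  · intro i j hij
    fin_cases i <;> fin_cases j <;> first
      | exact absurd hij (by decide)
      | exact iff_of_true (by assumption) (by decide)
      | exact iff_of_false (by assumption) (by decide)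

theorem cyc7 (hN : NoInducedCycles Γ 4 17) {a b c d e f g : V} (h1 : Γ.Adj a b) (h2 : Γ.Adj b c)
    (h3 : Γ.Adj c d) (h4 : Γ.Adj d e) (h5 : Γ.Adj e f) (h6 : Γ.Adj f g) (h7 : Γ.Adj g a)
    (n1 : ¬ Γ.Adj a c) (n2 : ¬ Γ.Adj a d) (n3 : ¬ Γ.Adj a e) (n3' : ¬ Γ.Adj a f)
    (n4 : ¬ Γ.Adj b d) (n5 : ¬ Γ.Adj b e) (n6 : ¬ Γ.Adj b f) (n6' : ¬ Γ.Adj b g)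
    (n7 : ¬ Γ.Adj c e) (n8 : ¬ Γ.Adj c f) (n8' : ¬ Γ.Adj c g) (n9 : ¬ Γ.Adj d f)
    (n9' : ¬ Γ.Adj d g) (n10 : ¬ Γ.Adj e g) : False := by
  have e1 := h1.ne
  have e2 := h2.ne
  have e3 := h3.ne
  have e4 := h4.ne
  have e5 := h5.ne
  have e6 := h6.ne
  have e7 := h7.ne.symm
  have h7' := h7.symm
  have f1 : a ≠ c := by rintro rfl; exact n2 h3
  have f2 : a ≠ d := by rintro rfl; exact n1 h3.symm
  have f3 : a ≠ e := by rintro rfl; exact n2 h4.symm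
  have f3' : a ≠ f := by rintro rfl; exact n3 h5.symm
  have f4 : b ≠ d := by rintro rfl; exact n5 h4
  have f5 : b ≠ e := by rintro rfl; exact n4 h4.symm
  have f6 : b ≠ f := by rintro rfl; exact n5 h5.symm
  have f6' : b ≠ g := by rintro rfl; exact n6 h6.symm
  have f7 : c ≠ e := by rintro rfl; exact n8 h5
  have f8 : c ≠ f := by rintro rfl; exact n7 h5.symm
  have f8' : c ≠ g := by rintro rfl; exact n8 h6.symm
  have f9 : d ≠ f := by rintro rfl; exact n9' h6
  have f9' : d ≠ g := by rintro rfl; exact n9 h6.symm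
  have f10 : e ≠ g := by rintro rfl; exact n3 h7.symm
  refine noFin hN 6 (by norm_num) (by norm_num) ![a, b, c, d, e, f, g] ?_ ?_
  · intro i j hij
    fin_cases i <;> fin_cases j <;> first | exact absurd hij (by decide) | assumption
  · intro i j hij
    fin_cases i <;> fin_cases j <;> first
      | exact absurd hij (by decide)
      | exact iff_of_true (by assumption) (by decide)
      | exact iff_of_false (by assumption) (by decide)

/-- A neighbour of `u` one step closer to `v`. -/
theorem closer (hc : Γ.Connected) {u v : V} {k : ℕ} (h : Γ.dist u v = k + 1) :
    ∃ w, Γ.Adj u w ∧ Γ.dist w v = k := by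
  obtain ⟨p, hp⟩ := hc.exists_walk_length_eq_dist u v
  cases p with
  | nil => simp at h
  | cons hadj q =>
    rename_i w
    refine ⟨w, hadj, ?_⟩
    have h1 := SimpleGraph.dist_le q
    have h2 := hc.dist_triangle (u := u) (v := w) (w := v)
    have h3 := SimpleGraph.dist_eq_one_iff_adj.2 hadj
    simp at hp
    omega

theorem dist_step (hc : Γ.Connected) {u v : V} (o : V) (h : Γ.Adj u v) :
    Γ.dist o u ≤ Γ.dist o v + 1 := by
  have h2 := hc.dist_triangle (u := o) (v := v) (w := u)
  have h3 := SimpleGraph.dist_eq_one_iff_adj.2 h.symm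
  omega

theorem path_dist (hc : Γ.Connected) {d : ℕ} {p : ℕ → V} (hp : ∀ i, i < d → Γ.Adj (p i) (p (i+1)))
    (i k : ℕ) (h : i + k ≤ d) : Γ.dist (p i) (p (i + k)) ≤ k := by
  induction k with
  | zero => simp
  | succ k ih =>
    have h1 := ih (by omega)
    have h2 := dist_step hc (p i) (hp (i + k) (by omega)).symm
    have : i + (k + 1) = i + k + 1 := by omega
    rw [this]
    omega

/-- Geodesics as functions. -/
theorem exists_geod (hc : Γ.Connected) (u v : V) : ∃ p : ℕ → V, p 0 = u ∧ p (Γ.dist u v) = v ∧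
    ∀ i, i < Γ.dist u v → Γ.Adj (p i) (p (i + 1)) := by
  obtain ⟨p, hp⟩ := hc.exists_walk_length_eq_dist u v
  refine ⟨p.getVert, by simp, by rw [← hp]; simp, ?_⟩
  intro i hi
  exact p.adj_getVert_succ (by omega)

end basics

section lev
variable {V : Type*} {Γ : SimpleGraph V}

/-- Level functions that behave like the distance to a point up to a threshold. -/
structure Lev (Γ : SimpleGraph V) (l : V → ℕ) (M : ℕ) : Prop where
  step : ∀ {u v}, Γ.Adj u v → l u ≤ l v + 1
  down : ∀ {v}, 1 ≤ l v → ∃ w, Γ.Adj v w ∧ l w + 1 = l v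
  clique : ∀ {v w w'}, 2 * l v < M → Γ.Adj v w → Γ.Adj v w' → l w + 1 = l v → l w' + 1 = l v →
    w = w' ∨ Γ.Adj w w'
  tri : ∀ {v w}, 2 * l v + 1 < M → Γ.Adj v w → l v = l w → 1 ≤ l v →
    ∃ x, Γ.Adj v x ∧ Γ.Adj w x ∧ l x + 1 = l v

/-- `z` lies below `u`. -/
def Below (Γ : SimpleGraph V) (l : V → ℕ) (z u : V) : Prop := l u = l z + Γ.dist z u

variable {l : V → ℕ} {M : ℕ}

theorem Lev.lip (hc : Γ.Connected) (L : Lev Γ l M) (u v : V) : l u ≤ l v + Γ.dist u v := by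
  obtain ⟨k, hk⟩ : ∃ k, Γ.dist u v = k := ⟨_, rfl⟩
  induction k generalizing u with
  | zero =>
    have := hc.dist_eq_zero_iff.1 hk
    subst this
    omega
  | succ k ih =>
    obtain ⟨w, h1, h2⟩ := closer hc hk
    have := ih w h2
    have := L.step h1
    omega

theorem Lev.nadj (L : Lev Γ l M) {u v : V} (h : l u + 2 ≤ l v) : ¬ Γ.Adj v u := fun h' => by
  have := L.step h'
  omega

theorem Lev.nadj' (L : Lev Γ l M) {u v : V} (h : l u + 2 ≤ l v) : ¬ Γ.Adj u v := fun h' => by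
  have := L.step h'.symm
  omega

theorem below_refl (u : V) : Below Γ l u u := by simp [Below]

theorem below_trans (hc : Γ.Connected) (L : Lev Γ l M) {w z u : V} (h1 : Below Γ l w z)
    (h2 : Below Γ l z u) : Below Γ l w u := by
  unfold Below at *
  have h3 := L.lip hc u w
  have h4 := hc.dist_triangle (u := w) (v := z) (w := u)
  rw [SimpleGraph.dist_comm] at h3
  omega

theorem below_adj {w u : V} (h : Γ.Adj u w) (hl : l w + 1 = l u) : Below Γ l w u := by
  unfold Below
  rw [SimpleGraph.dist_eq_one_iff_adj.2 h.symm]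
  omega

theorem below_exists (hc : Γ.Connected) (L : Lev Γ l M) (u : V) (j : ℕ) (h : j ≤ l u) :
    ∃ z, Below Γ l z u ∧ l z = j := by
  obtain ⟨k, hk⟩ : ∃ k, l u = j + k := ⟨l u - j, by omega⟩
  induction k generalizing u with
  | zero => exact ⟨u, below_refl u, by omega⟩
  | succ k ih =>
    obtain ⟨w, h1, h2⟩ := L.down (v := u) (by omega)
    obtain ⟨z, h3, h4⟩ := ih w (by omega) (by omega)
    exact ⟨z, below_trans hc L h3 (below_adj h1 h2), h4⟩

theorem below_pred (hc : Γ.Connected) (L : Lev Γ l M) {z u : V} (h : Below Γ l z u)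
    (hlt : l z < l u) : ∃ u', Γ.Adj u u' ∧ l u' + 1 = l u ∧ Below Γ l z u' := by
  unfold Below at h
  obtain ⟨k, hk⟩ : ∃ k, Γ.dist z u = k + 1 := ⟨Γ.dist z u - 1, by omega⟩
  rw [SimpleGraph.dist_comm] at hk
  obtain ⟨w, h1, h2⟩ := closer hc hk
  have h3 := L.lip hc w z
  have h4 := L.step h1
  rw [SimpleGraph.dist_comm] at hk
  refine ⟨w, h1, by omega, ?_⟩
  unfold Below
  rw [SimpleGraph.dist_comm]
  omega

theorem Lev.mono (L : Lev Γ l M) {M' : ℕ} (h : M' ≤ M) : Lev Γ l M' where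
  step := L.step
  down := L.down
  clique := fun h1 => L.clique (by omega)
  tri := fun h1 => L.tri (by omega)

/-- Lower neighbours of adjacent vertices of the same level are equal or adjacent. -/
theorem lowN (hN : NoInducedCycles Γ 4 17) (L : Lev Γ l M) {v w b b' : V} (hvw : Γ.Adj v w)
    (hl : l v = l w) (h2 : 2 ≤ l v) (hM : 2 * l v + 1 < M) (hb : Γ.Adj v b) (hlb : l b + 1 = l v)
    (hb' : Γ.Adj w b') (hlb' : l b' + 1 = l w) : b = b' ∨ Γ.Adj b b' := by
  by_contra hcon
  have hcon2 := hcon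
  push Not at hcon2
  obtain ⟨hne, hna⟩ := hcon2
  obtain ⟨s, hs1, hs2, hs3⟩ := L.tri hM hvw hl (by omega)
  have wb : ¬ Γ.Adj w b := fun h => hcon (L.clique (by omega) h hb' (by omega) hlb')
  have vb : ¬ Γ.Adj v b' := fun h => hcon (L.clique (by omega) hb h hlb (by omega))
  have hbs : b ≠ s := by rintro rfl; exact wb hs2
  have hbs' : s ≠ b' := by rintro rfl; exact vb hs1
  have abs : Γ.Adj b s := (L.clique (by omega) hb hs1 hlb hs3).resolve_left hbs
  have asb : Γ.Adj s b' := (L.clique (by omega) hs2 hb' (by omega) hlb').resolve_left hbs'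
  obtain ⟨r1, r11, r12, r13⟩ := L.tri (v := b) (w := s) (by omega) abs (by omega) (by omega)
  obtain ⟨r2, r21, r22, r23⟩ := L.tri (v := s) (w := b') (by omega) asb (by omega) (by omega)
  have five : ∀ r, Γ.Adj b r → Γ.Adj b' r → l r + 1 = l b → False := fun r h3 h4 h5 =>
    cyc5 hN hvw hb' h4 h3.symm hb.symm vb (L.nadj (by omega)) (L.nadj (by omega)) wb
      (fun h => hna h.symm)
  by_cases c1 : Γ.Adj b' r1
  · exact five r1 r11 c1 r13
  by_cases c2 : Γ.Adj b r2
  · exact five r2 c2 r22 (by omega)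
  rcases L.clique (by omega) r12 r21 (by omega) r23 with h | h
  · subst h
    exact c2 r11
  · exact cyc6 hN hvw hb' r22 h.symm r11.symm hb.symm vb (L.nadj (by omega)) (L.nadj (by omega))
      (L.nadj (by omega)) (L.nadj (by omega)) wb c1 (fun h => hna h.symm) (fun h => c2 h.symm)

theorem below_clique (hc : Γ.Connected) (hN : NoInducedCycles Γ 4 17) (L : Lev Γ l M)
    {u u' z z' : V} (hu : u = u' ∨ Γ.Adj u u') (hl : l u = l u') (hM : 2 * l u + 1 < M)
    (hz : Below Γ l z u) (hz' : Below Γ l z' u') (hlz : l z = l z') (h1 : 1 ≤ l z) :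
    z = z' ∨ Γ.Adj z z' := by
  obtain ⟨k, hk⟩ : ∃ k, Γ.dist z u = k := ⟨_, rfl⟩
  induction k generalizing u u' with
  | zero =>
    have e1 := hc.dist_eq_zero_iff.1 hk
    have : Γ.dist z' u' = 0 := by unfold Below at hz hz'; omega
    have e2 := hc.dist_eq_zero_iff.1 this
    subst e1 e2
    exact hu
  | succ k ih =>
    have hz2 := hz
    have hz2' := hz'
    unfold Below at hz2 hz2'
    obtain ⟨w, a1, a2, a3⟩ := below_pred hc L hz (by omega)
    obtain ⟨w', b1, b2, b3⟩ := below_pred hc L hz' (by omega)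
    have : w = w' ∨ Γ.Adj w w' := by
      rcases hu with rfl | hu
      · exact L.clique (by omega) a1 b1 a2 b2
      · exact lowN hN L hu hl (by omega) hM a1 a2 b1 b2
    refine ih this (by omega) (by omega) a3 b3 ?_
    unfold Below at a3
    omega

theorem shape (L : ℕ → ℕ) (d : ℕ) (h1 : ∀ i, i < d → L i ≤ L (i+1) + 1 ∧ L (i+1) ≤ L i + 1)
    (hUD : ∀ i, i + 2 ≤ d → L (i+1) = L i + 1 → L (i+1) = L (i+2) + 1 → False)
    (hFD : ∀ i, i + 2 ≤ d → L (i+1) = L i → L (i+1) = L (i+2) + 1 → False)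
    (hUF : ∀ i, i + 2 ≤ d → L (i+1) = L i + 1 → L (i+1) = L (i+2) → False) :
    ∃ a c, a ≤ c ∧ c ≤ d ∧ (∀ i, i ≤ a → L i + i = L 0) ∧ (∀ i, a ≤ i → i ≤ c → L i = L a) ∧
      (∀ i, c ≤ i → i ≤ d → L i + c = L c + i) := by
  induction d with
  | zero =>
    refine ⟨0, 0, le_rfl, le_rfl, ?_, ?_, ?_⟩
    · intro i hi
      obtain rfl : i = 0 := by omega
      rfl
    · intro i h1 hi
      obtain rfl : i = 0 := by omega
      rfl
    · intro i h1 hi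
      obtain rfl : i = 0 := by omega
      rfl
  | succ d ih =>
    obtain ⟨a, c, hac, hcd, hA, hF, hU⟩ := ih (fun i hi => h1 i (by omega))
      (fun i hi => hUD i (by omega)) (fun i hi => hFD i (by omega)) (fun i hi => hUF i (by omega))
    have hs := h1 d (by omega)
    -- extension lemmas
    have ext1 : ∀ (P : ℕ → Prop), (∀ i, i ≤ d → P i) → P (d+1) → ∀ i, i ≤ d + 1 → P i := by
      intro P h1 h2 i hi
      rcases Nat.lt_or_ge d i with h | h
      · obtain rfl : i = d + 1 := by omega
        exact h2
      · exact h1 i h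
    by_cases hc : c < d
    · have e1 := hU d (by omega) le_rfl
      have e2 := hU (d-1) (by omega) (by omega)
      obtain ⟨d', rfl⟩ : ∃ d', d = d' + 1 := ⟨d - 1, by omega⟩
      have q1 := hUD d' (by omega)
      have q2 := hUF d' (by omega)
      simp only [Nat.add_sub_cancel] at e2
      refine ⟨a, c, hac, by omega, hA, hF, ?_⟩
      intro i hi
      revert hi
      revert i
      have := ext1 (fun i => c ≤ i → L i + c = L c + i) (fun i h h' => hU i h' h) (by
        intro _
        have : L (d' + 1 + 1) = L (d' + 1) + 1 := by
          by_contra hne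
          have : L (d'+1+1) = L (d'+2) := rfl
          rcases Nat.lt_or_ge (L (d'+2)) (L (d'+1)) with h | h
          · exact q1 (by omega) (by omega)
          · exact q2 (by omega) (by omega)
        omega)
      intro i h1 h2
      exact this i h2 h1
    · obtain rfl : c = d := by omega
      by_cases ha : a < c
      · obtain ⟨d', rfl⟩ : ∃ d', c = d' + 1 := ⟨c - 1, by omega⟩
        have e1 := hF (d'+1) (by omega) le_rfl
        have e2 := hF d' (by omega) (by omega)
        have q := hFD d' (by omega) (by omega)
        have r : L (d'+1+1) = L (d'+2) := rfl
        by_cases hf : L (d'+1+1) = L (d'+1)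
        · refine ⟨a, d'+1+1, by omega, le_rfl, hA, ?_, ?_⟩
          · intro i h1 h2
            rcases Nat.lt_or_ge (d'+1) i with h | h
            · obtain rfl : i = d' + 2 := by omega
              omega
            · exact hF i h1 h
          · intro i h1 h2
            obtain rfl : i = d' + 2 := by omega
            rfl
        · refine ⟨a, d'+1, by omega, by omega, hA, hF, ?_⟩
          intro i h1 h2
          rcases Nat.lt_or_ge (d'+1) i with h | h
          · obtain rfl : i = d' + 2 := by omega
            have : ¬ L (d'+1) = L (d'+2) + 1 := q
            omega
          · exact hU i h1 h
      · obtain rfl : a = c := by omega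
        rcases Nat.lt_trichotomy (L (a+1)) (L a) with h | h | h
        · refine ⟨a+1, a+1, le_rfl, le_rfl, ?_, ?_, ?_⟩
          · refine ext1 _ hA ?_
            have := hA a le_rfl
            omega
          · intro i h1 h2
            obtain rfl : i = a + 1 := by omega
            rfl
          · intro i h1 h2
            obtain rfl : i = a + 1 := by omega
            rfl
        · refine ⟨a, a+1, by omega, le_rfl, hA, ?_, ?_⟩
          · intro i h1 h2
            rcases Nat.lt_or_ge a i with h | h
            · obtain rfl : i = a + 1 := by omega
              omega
            · exact hF i h1 h
          · intro i h1 h2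
            obtain rfl : i = a + 1 := by omega
            rfl
        · refine ⟨a, a, by omega, by omega, hA, hF, ?_⟩
          intro i h1 h2
          rcases Nat.lt_or_ge a i with h' | h'
          · obtain rfl : i = a + 1 := by omega
            omega
          · exact hU i h1 h'

end lev

section dfu
variable {V : Type*} {Γ : SimpleGraph V} {l : V → ℕ} {M : ℕ}

/-- `p` parametrizes a path of length `d` from `u` to `v`. -/
def IsPth (Γ : SimpleGraph V) (u v : V) (d : ℕ) (p : ℕ → V) : Prop :=
  p 0 = u ∧ p d = v ∧ ∀ i, i < d → Γ.Adj (p i) (p (i + 1))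

theorem exists_min_pth (l : V → ℕ) {u v : V} {d : ℕ} (h : ∃ p, IsPth Γ u v d p) :
    ∃ p, IsPth Γ u v d p ∧ ∀ q, IsPth Γ u v d q → (∀ i, i ≤ d → l (q i) ≤ l (p i)) →
      (∃ i, i ≤ d ∧ l (q i) < l (p i)) → False := by
  classical
  have hex : ∃ n, ∃ p, IsPth Γ u v d p ∧ ∑ i ∈ Finset.range (d + 1), l (p i) = n := by
    obtain ⟨p, hp⟩ := h
    exact ⟨_, p, hp, rfl⟩
  obtain ⟨p, hp, hs⟩ := Nat.find_spec hex
  refine ⟨p, hp, ?_⟩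
  intro q hq hle hlt
  have h1 : ∑ i ∈ Finset.range (d + 1), l (q i) < ∑ i ∈ Finset.range (d + 1), l (p i) := by
    refine Finset.sum_lt_sum ?_ ?_
    · intro i hi
      exact hle i (by simpa [Nat.lt_succ_iff] using hi)
    · obtain ⟨i, h1, h2⟩ := hlt
      exact ⟨i, by simpa [Nat.lt_succ_iff] using h1, h2⟩
  rw [hs] at h1
  exact Nat.find_min hex h1 ⟨q, hq, rfl⟩

theorem dfu (hc : Γ.Connected) (hN : NoInducedCycles Γ 4 17) (L : Lev Γ l M) (u v : V)
    (hM : l u + l v + Γ.dist u v < M) :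
    ∃ z z' f, l z = l z' ∧ Below Γ l z u ∧ Below Γ l z' v ∧
      Γ.dist u v = Γ.dist z u + f + Γ.dist z' v ∧ (f = 0 → z = z') ∧ (f = 1 → Γ.Adj z z') ∧
      (f = 2 → ∃ m, Γ.Adj z m ∧ Γ.Adj m z' ∧ l m = l z) ∧ (f ≤ 2 ∨ l z ≤ 1) := by
  obtain ⟨d, hd⟩ : ∃ d, Γ.dist u v = d := ⟨_, rfl⟩
  have hexp : ∃ p, IsPth Γ u v d p := by
    obtain ⟨p, h1, h2, h3⟩ := exists_geod hc u v
    rw [hd] at h2 h3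
    exact ⟨p, h1, h2, h3⟩
  obtain ⟨p, ⟨hp0, hpd, hpa⟩, hmin⟩ := exists_min_pth l hexp
  have hgeo : ∀ i k, i + k ≤ d → Γ.dist (p i) (p (i + k)) = k := by
    intro i k hik
    have e1 := path_dist hc hpa i k hik
    have e2 := path_dist hc hpa 0 i (by omega)
    have e3 := path_dist hc hpa (i + k) (d - (i + k)) (by omega)
    have e4 : i + k + (d - (i + k)) = d := by omega
    rw [e4, hpd] at e3
    rw [Nat.zero_add, hp0] at e2
    have t1 := hc.dist_triangle (u := u) (v := p i) (w := v)
    have t2 := hc.dist_triangle (u := p i) (v := p (i + k)) (w := v)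
    omega
  have hb1 : ∀ i, i ≤ d → l (p i) ≤ l u + i := by
    intro i hi
    have := L.lip hc (p i) u
    have h2 := hgeo 0 i (by omega)
    rw [Nat.zero_add, hp0, SimpleGraph.dist_comm] at h2
    omega
  have hb2 : ∀ i, i ≤ d → l (p i) + i ≤ l v + d := by
    intro i hi
    have := L.lip hc (p i) v
    have h2 := hgeo i (d - i) (by omega)
    rw [show i + (d - i) = d by omega, hpd] at h2
    omega
  have hn2 : ∀ i, i + 2 ≤ d → ¬ (p i = p (i+2) ∨ Γ.Adj (p i) (p (i+2))) := by
    intro i hi h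
    have h2 := hgeo i 2 hi
    rcases h with h | h
    · rw [h, SimpleGraph.dist_self] at h2
      omega
    · rw [SimpleGraph.dist_eq_one_iff_adj.2 h] at h2
      omega
  -- replacing one vertex
  have rep1 : ∀ i b, i + 2 ≤ d → Γ.Adj (p i) b → Γ.Adj b (p (i+2)) → l b < l (p (i+1)) →
      False := by
    intro i b hi h1 h2 h3
    refine hmin (Function.update p (i+1) b) ⟨?_, ?_, ?_⟩ ?_ ⟨i+1, by omega, by simpa using h3⟩
    · rw [Function.update_of_ne (by omega)]
      exact hp0
    · rw [Function.update_of_ne (by omega)]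
      exact hpd
    · intro j hj
      by_cases c1 : j = i
      · subst c1
        rw [Function.update_of_ne (by omega), Function.update_self]
        exact h1
      by_cases c2 : j = i + 1
      · subst c2
        rw [Function.update_self, Function.update_of_ne (by omega)]
        exact h2
      rw [Function.update_of_ne (by omega), Function.update_of_ne (by omega)]
      exact hpa j hj
    · intro j hj
      by_cases c2 : j = i + 1
      · subst c2
        rw [Function.update_self]
        omega
      · rw [Function.update_of_ne (by omega)]
  have rep2 : ∀ i b b', i + 3 ≤ d → Γ.Adj (p i) b → Γ.Adj b b' → Γ.Adj b' (p (i+3)) →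
      l b < l (p (i+1)) → l b' < l (p (i+2)) → False := by
    intro i b b' hi h1 h2 h3 h4 h5
    refine hmin (Function.update (Function.update p (i+1) b) (i+2) b') ⟨?_, ?_, ?_⟩ ?_
      ⟨i+2, by omega, by simpa using h5⟩
    · rw [Function.update_of_ne (by omega), Function.update_of_ne (by omega)]
      exact hp0
    · rw [Function.update_of_ne (by omega), Function.update_of_ne (by omega)]
      exact hpd
    · intro j hj
      by_cases c1 : j = i
      · subst c1
        rw [Function.update_of_ne (by omega), Function.update_of_ne (by omega),
          Function.update_of_ne (by omega), Function.update_self]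
        exact h1
      by_cases c2 : j = i + 1
      · subst c2
        rw [Function.update_of_ne (show i + 1 ≠ i + 2 by omega), Function.update_self,
          Function.update_self]
        exact h2
      by_cases c3 : j = i + 2
      · subst c3
        rw [Function.update_self, Function.update_of_ne (by omega),
          Function.update_of_ne (by omega)]
        exact h3
      rw [Function.update_of_ne (by omega), Function.update_of_ne (by omega),
        Function.update_of_ne (by omega), Function.update_of_ne (by omega)]
      exact hpa j hj
    · intro j hj
      by_cases c2 : j = i + 1
      · subst c2
        rw [Function.update_of_ne (by omega), Function.update_self]
        omega
      by_cases c3 : j = i + 2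
      · subst c3
        rw [Function.update_self]
        omega
      rw [Function.update_of_ne (by omega), Function.update_of_ne (by omega)]
  have hflat : ∀ i, i + 1 ≤ d → l (p i) = l (p (i+1)) → 2 * l (p i) + 1 < M := by
    intro i hi h
    have h1 := hb1 i (by omega)
    have h2 := hb2 (i+1) (by omega)
    omega
  obtain ⟨a, c, hac, hcd, hA, hF, hU⟩ := shape (fun i => l (p i)) d
    (by
      intro i hi
      exact ⟨L.step (hpa i hi), L.step (hpa i hi).symm⟩)
    (by
      intro i hi h1 h2
      have e1 := hb1 (i+1) (by omega)
      have e2 := hb2 (i+1) (by omega)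
      exact hn2 i hi (L.clique (v := p (i+1)) (by omega) (hpa i (by omega)).symm
        (hpa (i+1) (by omega)) h1.symm h2.symm))
    (by
      intro i hi h1 h2
      obtain ⟨b, b1, b2, b3⟩ := L.tri (hflat i (by omega) h1.symm) (hpa i (by omega)) h1.symm
        (by change l (p (i+1)) = l (p i) at h1; change l (p (i+1)) = l (p (i+2)) + 1 at h2; omega)
      change l (p (i+1)) = l (p i) at h1
      change l (p (i+1)) = l (p (i+2)) + 1 at h2
      have e1 := hb1 (i+1) (by omega)
      have e2 := hb2 (i+1) (by omega)
      rcases L.clique (v := p (i+1)) (by omega) b2 (hpa (i+1) (by omega)) (by omega) h2.symm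
        with h | h
      · subst h
        exact hn2 i hi (Or.inr b1)
      · exact rep1 i b hi b1 h (by omega))
    (by
      intro i hi h1 h2
      change l (p (i+1)) = l (p i) + 1 at h1
      change l (p (i+1)) = l (p (i+2)) at h2
      obtain ⟨b, b1, b2, b3⟩ := L.tri (hflat (i+1) (by omega) h2) (hpa (i+1) (by omega)) h2
        (by omega)
      have e1 := hb1 (i+1) (by omega)
      have e2 := hb2 (i+1) (by omega)
      rcases L.clique (v := p (i+1)) (by omega) (hpa i (by omega)).symm b1 (by omega) b3
        with h | h
      · exact hn2 i hi (Or.inr (h ▸ b2.symm))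
      · exact rep1 i b hi h b2.symm (by omega))
  have dz : Γ.dist (p a) u = a := by
    have := hgeo 0 a (by omega)
    rw [Nat.zero_add, hp0, SimpleGraph.dist_comm] at this
    exact this
  have dz' : Γ.dist (p c) v = d - c := by
    have := hgeo c (d - c) (by omega)
    rw [show c + (d - c) = d by omega, hpd] at this
    exact this
  refine ⟨p a, p c, c - a, (hF c hac le_rfl).symm, ?_, ?_, ?_, ?_, ?_, ?_, ?_⟩
  · unfold Below
    have := hA a le_rfl
    rw [hp0] at this
    omega
  · unfold Below
    have := hU d hcd le_rfl
    rw [hpd] at this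
    omega
  · omega
  · intro h
    rw [show c = a by omega]
  · intro h
    rw [show c = a + 1 by omega]
    exact hpa a (by omega)
  · intro h
    obtain rfl : c = a + 2 := by omega
    exact ⟨p (a+1), hpa a (by omega), hpa (a+1) (by omega), hF (a+1) (by omega) (by omega)⟩
  · by_contra hcon
    push Not at hcon
    obtain ⟨h3, h4⟩ := hcon
    have f1 := hF (a+1) (by omega) (by omega)
    have f2 := hF (a+2) (by omega) (by omega)
    have f3 := hF (a+3) (by omega) (by omega)
    have m0 := hflat a (by omega) (by omega)
    obtain ⟨b, b1, b2, b3⟩ := L.tri (hflat a (by omega) (by omega)) (hpa a (by omega)) (by omega)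
        (by omega)
    obtain ⟨b', b1', b2', b3'⟩ := L.tri (hflat (a+2) (by omega) (by rw [f2]; exact f3.symm))
      (hpa (a+2) (by omega)) (by rw [f2]; exact f3.symm) (by omega)
    rcases lowN hN L (hpa (a+1) (by omega)) (by rw [f1]; exact f2.symm) (by omega)
      (by omega) b2 (by omega) b1' b3' with h | h
    · subst h
      have := hgeo a 3 (by omega)
      have t := hc.dist_triangle (u := p a) (v := b) (w := p (a+3))
      rw [SimpleGraph.dist_eq_one_iff_adj.2 b1, SimpleGraph.dist_eq_one_iff_adj.2 b2'.symm] at t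
      omega
    · exact rep2 a b b' (by omega) b1 h b2'.symm (by omega) (by omega)

theorem meet_or (hc : Γ.Connected) (hN : NoInducedCycles Γ 4 17) (L : Lev Γ l M) (u v : V)
    (hM : l u + l v + Γ.dist u v < M) (hlt : Γ.dist u v < l u + l v) :
    (∃ r, Below Γ l r u ∧ Below Γ l r v ∧ 1 ≤ l r) ∨
    (∃ z z', Γ.Adj z z' ∧ Below Γ l z u ∧ Below Γ l z' v ∧ l z = 1 ∧ l z' = 1) := by
  obtain ⟨z, z', f, hl, hz, hz', hd, h0, h1, h2, h3⟩ := dfu hc hN L u v hM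
  have hz2 := hz
  have hz2' := hz'
  unfold Below at hz2 hz2'
  have edge : ∀ y y', Γ.Adj y y' → Below Γ l y z → Below Γ l y' z' → l y = l y' → 1 ≤ l y →
      2 * l y + 1 < M → (∃ r, Below Γ l r u ∧ Below Γ l r v ∧ 1 ≤ l r) ∨
    (∃ z z', Γ.Adj z z' ∧ Below Γ l z u ∧ Below Γ l z' v ∧ l z = 1 ∧ l z' = 1) := by
    intro y y' e1 e2 e3 e4 e5 e6
    have e2 := below_trans hc L e2 hz
    have e3 := below_trans hc L e3 hz'
    by_cases hy : l y = 1
    · exact Or.inr ⟨y, y', e1, e2, e3, hy, by omega⟩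
    · obtain ⟨x, x1, x2, x3⟩ := L.tri e6 e1 e4 e5
      exact Or.inl ⟨x, below_trans hc L (below_adj x1 x3) e2,
        below_trans hc L (below_adj x2 (by omega)) e3, by omega⟩
  have hf : f ≤ 2 := by omega
  interval_cases f
  · have := h0 rfl
    subst this
    exact Or.inl ⟨z, hz, hz', by omega⟩
  · exact edge z z' (h1 rfl) (below_refl _) (below_refl _) hl (by omega) (by omega)
  · obtain ⟨m, m1, m2, m3⟩ := h2 rfl
    obtain ⟨y, y1, y2, y3⟩ := L.tri (by omega) m1 m3.symm (by omega)
    obtain ⟨y', y1', y2', y3'⟩ := L.tri (by omega) m2 (by omega) (by omega)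
    rcases L.clique (by omega) y2 y1' (by omega) y3' with h | h
    · subst h
      exact Or.inl ⟨y, below_trans hc L (below_adj y1 y3) hz,
        below_trans hc L (below_adj y2' (by omega)) hz', by omega⟩
    · exact edge y y' h (below_adj y1 y3) (below_adj y2' (by omega)) (by omega) (by omega)
        (by omega)

end dfu

section bridged
variable {V : Type*} {Γ : SimpleGraph V}

theorem no_iso_cycle (hB : IsBridged Γ) (n : ℕ) (hn : 4 ≤ n) (c : ℕ → V)
    (h1 : ∀ a, a + 1 < n → Γ.Adj (c a) (c (a+1))) (h2 : Γ.Adj (c (n-1)) (c 0))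
    (h3 : ∀ a b, a < b → b < n → Γ.dist (c a) (c b) = min (n - (b - a)) (b - a)) : False := by
  obtain ⟨m, rfl⟩ : ∃ m, n = m + 1 := ⟨n - 1, by omega⟩
  have : Fact (1 < m + 1) := ⟨by omega⟩
  refine hB.2 (m+1) hn ⟨fun i => c i.val, ?_, ?_⟩
  · intro i
    have hi := ZMod.val_lt i
    by_cases h : i.val + 1 < m + 1
    · have e : (i + 1).val = i.val + 1 := by
        rw [ZMod.val_add_of_lt] <;> rw [ZMod.val_one]
        exact h
      simp only [e]
      exact h1 _ h
    · have e : (i + 1).val = 0 := by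
        have e1 : i.val + 1 = m + 1 := by omega
        rw [ZMod.val_add, ZMod.val_one, e1, Nat.mod_self]
      simp only [e]
      have : i.val = m + 1 - 1 := by omega
      rw [this]
      exact h2
  · have key : ∀ i j : ZMod (m+1), i.val < j.val → Γ.dist (c i.val) (c j.val) =
        min (i - j).val (j - i).val := by
      intro i j hij
      have e1 : (j - i).val = j.val - i.val := ZMod.val_sub hij.le
      have e2 : (i - j).val = m + 1 - (j.val - i.val) := by
        rw [← neg_sub, ZMod.neg_val, e1, if_neg]
        intro h
        rw [h, ZMod.val_zero] at e1
        omega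
      rw [e1, e2]
      exact h3 _ _ hij (ZMod.val_lt j)
    intro i j
    rcases lt_trichotomy i.val j.val with h | h | h
    · exact key i j h
    · have := ZMod.val_injective _ h
      subst this
      simp
    · rw [SimpleGraph.dist_comm, min_comm]
      exact key j i h

theorem short_cut (hB : IsBridged Γ) (o : V) (k k' : ℕ) (hk : 2 ≤ k) (hk1 : k' ≤ k) (hk2 : k ≤ k' + 1)
    (p q : ℕ → V) (hp0 : p 0 = o) (hq0 : q 0 = o) (hp : ∀ i, i < k → Γ.Adj (p i) (p (i+1)))
    (hq : ∀ i, i < k' → Γ.Adj (q i) (q (i+1))) (hpd : Γ.dist o (p k) = k)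
    (hqd : Γ.dist o (q k') = k') (hadj : Γ.Adj (p k) (q k')) :
    ∃ i j, 1 ≤ i ∧ i ≤ k ∧ 1 ≤ j ∧ j ≤ k' ∧ Γ.dist (p i) (q j) < i + j ∧
      i + j + Γ.dist (p i) (q j) < k + k' + 1 := by
  have hc := hB.1
  have geo : ∀ (k : ℕ) (p : ℕ → V), p 0 = o → (∀ i, i < k → Γ.Adj (p i) (p (i+1))) →
      Γ.dist o (p k) = k → ∀ i m, i + m ≤ k → Γ.dist (p i) (p (i+m)) = m := by
    intro k p hp0 hp hpd i m him
    have e1 := path_dist hc hp i m him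
    have e2 := path_dist hc hp 0 i (by omega)
    have e3 := path_dist hc hp (i + m) (k - (i + m)) (by omega)
    rw [show i + m + (k - (i + m)) = k by omega] at e3
    rw [Nat.zero_add, hp0] at e2
    have t1 := hc.dist_triangle (u := o) (v := p i) (w := p k)
    have t2 := hc.dist_triangle (u := p i) (v := p (i + m)) (w := p k)
    omega
  have gp := geo k p hp0 hp hpd
  have gq := geo k' q hq0 hq hqd
  by_contra hcon
  push Not at hcon
  have iso : ∀ i j, 1 ≤ i → i ≤ k → 1 ≤ j → j ≤ k' →
      Γ.dist (p i) (q j) = min (i + j) (k + k' + 1 - (i + j)) := by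
    intro i j h1 h2 h3 h4
    have c1 := hcon i j h1 h2 h3 h4
    have a1 := gp 0 i (by omega)
    have a2 := gq 0 j (by omega)
    have a3 := gp i (k - i) (by omega)
    have a4 := gq j (k' - j) (by omega)
    rw [Nat.zero_add, hp0, SimpleGraph.dist_comm] at a1
    rw [Nat.zero_add, hq0] at a2
    rw [show i + (k - i) = k by omega] at a3
    rw [show j + (k' - j) = k' by omega, SimpleGraph.dist_comm] at a4
    have t1 := hc.dist_triangle (u := p i) (v := o) (w := q j)
    have t2 := hc.dist_triangle (u := p i) (v := p k) (w := q j)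
    have t3 := hc.dist_triangle (u := p k) (v := q k') (w := q j)
    rw [SimpleGraph.dist_eq_one_iff_adj.2 hadj] at t3
    omega
  refine no_iso_cycle hB (k + k' + 1) (by omega)
    (fun i => if i ≤ k then p i else q (k + k' + 1 - i)) ?_ ?_ ?_
  · intro a ha
    by_cases h1 : a + 1 ≤ k
    · simp only [if_pos h1, if_pos (show a ≤ k by omega)]
      exact hp a h1
    · by_cases h2 : a ≤ k
      · obtain rfl : a = k := by omega
        simp only [if_neg h1, if_pos h2]
        rw [show a + k' + 1 - (a + 1) = k' by omega]
        exact hadj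
      · simp only [if_neg h1, if_neg h2]
        have := hq (k + k' + 1 - (a+1)) (by omega)
        rw [show k + k' + 1 - (a+1) + 1 = k + k' + 1 - a by omega] at this
        exact this.symm
  · simp only [if_neg (show ¬ (k + k' + 1 - 1 ≤ k) by omega), if_pos (Nat.zero_le k)]
    rw [show k + k' + 1 - (k + k' + 1 - 1) = 0 + 1 by omega, hp0, ← hq0]
    exact (hq 0 (by omega)).symm
  · intro a b hab hb
    by_cases h1 : b ≤ k
    · simp only [if_pos h1, if_pos (show a ≤ k by omega)]
      have := gp a (b - a) (by omega)
      rw [show a + (b - a) = b by omega] at this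
      rw [this]
      omega
    · by_cases h2 : a ≤ k
      · simp only [if_neg h1, if_pos h2]
        by_cases h3 : a = 0
        · subst h3
          have := gq 0 (k + k' + 1 - b) (by omega)
          rw [hq0, Nat.zero_add] at this
          rw [hp0, this]
          omega
        · rw [iso a (k + k' + 1 - b) (by omega) h2 (by omega) (by omega)]
          omega
      · simp only [if_neg h1, if_neg h2]
        have := gq (k + k' + 1 - b) (b - a) (by omega)
        rw [show k + k' + 1 - b + (b - a) = k + k' + 1 - a by omega, SimpleGraph.dist_comm] at this
        rw [this]
        omega

theorem below_path (hc : Γ.Connected) (o : V) {k : ℕ} {p : ℕ → V} (hp0 : p 0 = o)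
    (hp : ∀ i, i < k → Γ.Adj (p i) (p (i+1)))
    (hpd : Γ.dist o (p k) = k) (i m : ℕ) (him : i ≤ m) (hm : m ≤ k) :
    Γ.dist o (p i) = i ∧ Below Γ (Γ.dist o) (p i) (p m) := by
  have e1 := path_dist hc hp i (m - i) (by omega)
  have e2 := path_dist hc hp 0 i (by omega)
  have e3 := path_dist hc hp m (k - m) (by omega)
  rw [show m + (k - m) = k by omega] at e3
  rw [show i + (m - i) = m by omega] at e1
  rw [Nat.zero_add, hp0] at e2
  have t1 := hc.dist_triangle (u := o) (v := p i) (w := p m)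
  have t2 := hc.dist_triangle (u := o) (v := p m) (w := p k)
  unfold Below
  constructor <;> omega

theorem lev_step_clique (hB : IsBridged Γ) (hN : NoInducedCycles Γ 4 17) (k : ℕ)
    (ih : ∀ o, Lev Γ (Γ.dist o) (2 * k)) (o x y z : V) (hx : Γ.dist o x = k) (hxy : Γ.Adj x y)
    (hxz : Γ.Adj x z) (hy : Γ.dist o y + 1 = k) (hz : Γ.dist o z + 1 = k) : y = z ∨ Γ.Adj y z := by
  have hc := hB.1
  by_cases hk1 : k = 1
  · subst hk1
    have e1 : o = y := hc.dist_eq_zero_iff.1 (by omega)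
    have e2 : o = z := hc.dist_eq_zero_iff.1 (by omega)
    exact Or.inl (e1 ▸ e2)
  have hk : 2 ≤ k := by omega
  obtain ⟨p, p0, p1, p2⟩ := exists_geod hc o y
  obtain ⟨q, q0, q1, q2⟩ := exists_geod hc o z
  have ey : Γ.dist o y = k - 1 := by omega
  have ez : Γ.dist o z = k - 1 := by omega
  rw [ey] at p1 p2
  rw [ez] at q1 q2
  have base : ∀ r, Γ.dist r x + 1 ≤ k → Γ.dist r y + 1 = Γ.dist r x → Γ.dist r z + 1 = Γ.dist r x →
      y = z ∨ Γ.Adj y z := by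
    intro r h1 h2 h3
    exact (ih r).clique (by omega) hxy hxz h2 h3
  obtain ⟨i, j, hi1, hi2, hj1, hj2, hs1, hs2⟩ := short_cut hB o k (k-1) hk (by omega) (by omega)
    (Function.update p k x) q (by rw [Function.update_of_ne (by omega), p0]) q0
    (by
      intro i hi
      rw [Function.update_of_ne (by omega)]
      by_cases h : i + 1 = k
      · rw [h, Function.update_self]
        rw [show i = k - 1 by omega, p1]
        exact hxy.symm
      · rw [Function.update_of_ne h]
        exact p2 i (by omega)) q2 (by rw [Function.update_self, hx]) (by rw [q1, ez])
    (by rw [Function.update_self, q1]; exact hxz)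
  have bq := below_path hc o q0 q2 (by rw [q1, ez]) j (k-1) hj2 le_rfl
  have hik : i ≠ k := by
    rintro rfl
    rw [Function.update_self] at hs1 hs2
    have t := hc.dist_triangle (u := o) (v := q j) (w := x)
    rw [SimpleGraph.dist_comm (u := q j)] at t
    omega
  rw [Function.update_of_ne hik] at hs1 hs2
  have bp := below_path hc o p0 p2 (by rw [p1, ey]) i (k-1) (by omega) le_rfl
  rw [p1] at bp
  rw [q1] at bq
  have Lo := ih o
  rcases meet_or hc hN Lo (p i) (q j) (by omega) (by omega) with ⟨r, r1, r2, r3⟩ |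
    ⟨α, β, hab, a1, b1, a2, b2⟩
  · have s1 := below_trans hc Lo r1 bp.2
    have s2 := below_trans hc Lo r2 bq.2
    unfold Below at s1 s2
    have t1 := hc.dist_triangle (u := o) (v := r) (w := x)
    have t2 := dist_step hc r hxy
    exact base r (by omega) (by omega) (by omega)
  · have s1 := below_trans hc Lo a1 bp.2
    have s2 := below_trans hc Lo b1 bq.2
    unfold Below at s1 s2
    have t1 := hc.dist_triangle (u := o) (v := α) (w := x)
    have t2 := dist_step hc α hxy
    have t3 := dist_step hc α hxz
    have t4 := hc.dist_triangle (u := α) (v := β) (w := z)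
    rw [SimpleGraph.dist_eq_one_iff_adj.2 hab] at t4
    by_cases hz2 : Γ.dist α z + 1 = Γ.dist α x
    · exact base α (by omega) (by omega) hz2
    obtain ⟨w, w1, w2, w3⟩ := (ih α).tri (v := x) (w := z) (by omega) hxz (by omega) (by omega)
    have t5 := hc.dist_triangle (u := o) (v := α) (w := w)
    have t6 := dist_step hc o w1
    rcases (ih α).clique (by omega) hxy w1 (by omega) (by omega) with h | hyw
    · subst h
      exact Or.inr w2.symm
    obtain ⟨r1, r11, r12, r13⟩ := Lo.tri (v := y) (w := w) (by omega) hyw (by omega) (by omega)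
    obtain ⟨r2, r21, r22, r23⟩ := Lo.tri (v := w) (w := z) (by omega) w2.symm (by omega) (by omega)
    by_contra hcon
    push Not at hcon
    obtain ⟨n1, n2⟩ := hcon
    have four : ∀ r, Γ.Adj y r → Γ.Adj z r → Γ.dist o r + 1 = Γ.dist o y → False := by
      intro r h1 h2 h3
      have hxr := Lo.nadj (u := r) (v := x) (by omega)
      have hne : x ≠ r := by rintro rfl; omega
      rcases cyc4 hN hxy h1 h2.symm hxz.symm hne n1 with h | h
      · exact hxr h
      · exact n2 h
    by_cases c1 : Γ.Adj y r2
    · exact four r2 c1 r22 (by omega)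
    by_cases c2 : Γ.Adj z r1
    · exact four r1 r11 c2 (by omega)
    rcases Lo.clique (v := w) (by omega) r12 r21 (by omega) (by omega) with h | h
    · subst h
      exact c1 r11
    · exact cyc5 hN hxy r11 h r22.symm hxz.symm (Lo.nadj (by omega)) (Lo.nadj (by omega)) c1 n2
        (fun h => c2 h.symm)

theorem lev_step_tri (hB : IsBridged Γ) (hN : NoInducedCycles Γ 4 17) (k : ℕ)
    (ih : ∀ o, Lev Γ (Γ.dist o) (2 * k + 1)) (o u v : V) (hu : Γ.dist o u = k)
    (hv : Γ.dist o v = k) (huv : Γ.Adj u v) (hk0 : 1 ≤ k) :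
    ∃ x, Γ.Adj u x ∧ Γ.Adj v x ∧ Γ.dist o x + 1 = k := by
  have hc := hB.1
  by_cases hk1 : k = 1
  · subst hk1
    exact ⟨o, (SimpleGraph.dist_eq_one_iff_adj.1 hu).symm,
      (SimpleGraph.dist_eq_one_iff_adj.1 hv).symm, by simp⟩
  have hk : 2 ≤ k := by omega
  obtain ⟨p, p0, p1, p2⟩ := exists_geod hc o u
  obtain ⟨q, q0, q1, q2⟩ := exists_geod hc o v
  rw [hu] at p1 p2
  rw [hv] at q1 q2
  obtain ⟨i, j, hi1, hi2, hj1, hj2, hs1, hs2⟩ := short_cut hB o k k hk (by omega) (by omega)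
    p q p0 q0 p2 q2 (by rw [p1, hu]) (by rw [q1, hv]) (by rw [p1, q1]; exact huv)
  have bp := below_path hc o p0 p2 (by rw [p1, hu]) i k hi2 le_rfl
  have bq := below_path hc o q0 q2 (by rw [q1, hv]) j k hj2 le_rfl
  rw [p1] at bp
  rw [q1] at bq
  have Lo := ih o
  have base : ∀ r, 1 ≤ Γ.dist o r → Γ.dist o r + Γ.dist r u = k → Γ.dist o r + Γ.dist r v = k →
      ∃ x, Γ.Adj u x ∧ Γ.Adj v x ∧ Γ.dist o x + 1 = k := by
    intro r h1 h2 h3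
    have h4 : 1 ≤ Γ.dist r u := by
      by_contra h
      have e1 : r = u := hc.dist_eq_zero_iff.1 (by omega)
      have e2 : r = v := hc.dist_eq_zero_iff.1 (by omega)
      exact huv.ne (e1 ▸ e2)
    obtain ⟨x, x1, x2, x3⟩ := (ih r).tri (v := u) (w := v) (by omega) huv (by omega) h4
    refine ⟨x, x1, x2, ?_⟩
    have t1 := hc.dist_triangle (u := o) (v := r) (w := x)
    have t2 := dist_step hc o x1
    omega
  rcases meet_or hc hN Lo (p i) (q j) (by omega) (by omega) with ⟨r, r1, r2, r3⟩ |
    ⟨α, β, hab, a1, b1, a2, b2⟩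
  · have s1 := below_trans hc Lo r1 bp.2
    have s2 := below_trans hc Lo r2 bq.2
    unfold Below at s1 s2
    exact base r r3 (by omega) (by omega)
  · have s1 := below_trans hc Lo a1 bp.2
    have s2 := below_trans hc Lo b1 bq.2
    unfold Below at s1 s2
    by_cases h : Γ.dist α v + 1 = k
    · exact base α (by omega) (by omega) (by omega)
    have t1 := hc.dist_triangle (u := α) (v := β) (w := v)
    rw [SimpleGraph.dist_eq_one_iff_adj.2 hab] at t1
    have t2 := hc.dist_triangle (u := o) (v := α) (w := v)
    obtain ⟨w, w1, w2⟩ := closer hc (u := v) (v := β) (k := k - 2)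
      (by rw [SimpleGraph.dist_comm]; omega)
    rw [SimpleGraph.dist_comm] at w2
    have t3 := hc.dist_triangle (u := α) (v := β) (w := w)
    rw [SimpleGraph.dist_eq_one_iff_adj.2 hab] at t3
    have t4 := dist_step hc α w1
    have t5 := hc.dist_triangle (u := o) (v := β) (w := w)
    have t6 := dist_step hc o w1
    rcases (ih α).clique (v := v) (by omega) huv.symm w1 (by omega) (by omega) with h | h
    · subst h
      omega
    · exact ⟨w, h, w1, by omega⟩

theorem lev_dist (hB : IsBridged Γ) (hN : NoInducedCycles Γ 4 17) (M : ℕ) :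
    ∀ o, Lev Γ (Γ.dist o) M := by
  have hc := hB.1
  induction M with
  | zero =>
    intro o
    refine ⟨fun h => dist_step hc o h, ?_, fun h => by omega, fun h => by omega⟩
    intro v hv
    obtain ⟨w, h1, h2⟩ := closer hc (u := v) (v := o) (k := Γ.dist o v - 1)
      (by rw [SimpleGraph.dist_comm]; omega)
    rw [SimpleGraph.dist_comm] at h2
    exact ⟨w, h1, by omega⟩
  | succ M ih =>
    intro o
    refine ⟨(ih o).step, (ih o).down, ?_, ?_⟩
    · intro v w w' h1 h2 h3 h4 h5
      by_cases h : 2 * Γ.dist o v < M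
      · exact (ih o).clique h h2 h3 h4 h5
      · obtain rfl : M = 2 * Γ.dist o v := by omega
        exact lev_step_clique hB hN _ ih o v w w' rfl h2 h3 h4 h5
    · intro v w h1 h2 h3 h4
      by_cases h : 2 * Γ.dist o v + 1 < M
      · exact (ih o).tri h h2 h3 h4
      · obtain rfl : M = 2 * Γ.dist o v + 1 := by omega
        exact lev_step_tri hB hN _ ih o v w rfl h3.symm h2 h4

end bridged

section convex
variable {V : Type*} {Γ : SimpleGraph V}

/-- Geodesic convexity. -/
def Conv (Γ : SimpleGraph V) (S : Set V) : Prop :=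
  ∀ u w m, u ∈ S → w ∈ S → Γ.dist u m + Γ.dist m w = Γ.dist u w → m ∈ S

/-- Paths inside a set. -/
inductive PIn (Γ : SimpleGraph V) (S : Set V) (u : V) : ℕ → V → Prop
  | nil : u ∈ S → PIn Γ S u 0 u
  | snoc {n w' w} : PIn Γ S u n w' → Γ.Adj w' w → w ∈ S → PIn Γ S u (n+1) w

theorem PIn.mem {S : Set V} {u w : V} {n : ℕ} (h : PIn Γ S u n w) : w ∈ S := by
  cases h <;> assumption

theorem PIn.mono {S T : Set V} (hST : S ⊆ T) {u w : V} {n : ℕ} (h : PIn Γ S u n w) :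
    PIn Γ T u n w := by
  induction h with
  | nil h => exact PIn.nil (hST h)
  | snoc h1 h2 h3 ih => exact PIn.snoc ih h2 (hST h3)

theorem PIn.cons {S : Set V} {u u' w : V} {n : ℕ} (h : PIn Γ S u' n w) (ha : Γ.Adj u u')
    (hu : u ∈ S) : PIn Γ S u (n+1) w := by
  induction h with
  | nil h => exact PIn.snoc (PIn.nil hu) ha h
  | snoc h1 h2 h3 ih => exact PIn.snoc ih h2 h3

theorem PIn.dist_le (hc : Γ.Connected) {S : Set V} {u w : V} {n : ℕ} (h : PIn Γ S u n w) :
    Γ.dist u w ≤ n := by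
  induction h with
  | nil h => simp
  | snoc h1 h2 h3 ih =>
    have := dist_step hc u h2.symm
    omega

theorem pin_of_interval (hc : Γ.Connected) {S : Set V} {u : V} (d : ℕ) (w : V)
    (hd : Γ.dist u w = d) (h : ∀ m, Γ.dist u m + Γ.dist m w = Γ.dist u w → m ∈ S) :
    PIn Γ S u d w := by
  induction d generalizing w with
  | zero =>
    have := hc.dist_eq_zero_iff.1 hd
    subst this
    exact PIn.nil (h u (by simp))
  | succ d ih =>
    obtain ⟨w1, h1, h2⟩ := closer hc (u := w) (v := u) (k := d) (by rw [SimpleGraph.dist_comm]; exact hd)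
    rw [SimpleGraph.dist_comm] at h2
    refine PIn.snoc (ih w1 h2 ?_) h1.symm (h w (by simp))
    intro m hm
    refine h m ?_
    have t1 := hc.dist_triangle (u := u) (v := m) (w := w)
    have t2 := dist_step hc m h1
    omega

theorem conv_of_local (hB : IsBridged Γ) (hN : NoInducedCycles Γ 4 17) {S : Set V}
    (hconn : ∀ u w, u ∈ S → w ∈ S → ∃ n, PIn Γ S u n w)
    (h2 : ∀ u w m, u ∈ S → w ∈ S → u ≠ w → ¬ Γ.Adj u w → Γ.Adj u m → Γ.Adj m w → m ∈ S) :
    Conv Γ S := by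
  have hc := hB.1
  have L := fun o M => lev_dist hB hN M o
  have main : ∀ u n w, PIn Γ S u n w → ∀ m, Γ.dist u m + Γ.dist m w = Γ.dist u w → m ∈ S := by
    intro u n
    induction n using Nat.strong_induction_on with
    | _ n ih =>
    intro w hp m hm
    cases hp with
    | nil h =>
      rw [SimpleGraph.dist_self] at hm
      have : u = m := hc.dist_eq_zero_iff.1 (by omega)
      exact this ▸ h
    | @snoc n w' _ h1 hadj hw =>
      have I := ih n (by omega) w' h1
      have he := h1.dist_le hc
      have s1 := dist_step hc u hadj
      have s2 := dist_step hc u hadj.symm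
      rcases Nat.lt_trichotomy (Γ.dist u w) (Γ.dist u w') with h | h | h
      · refine I m ?_
        have t1 := hc.dist_triangle (u := u) (v := m) (w := w')
        have t2 := dist_step hc m hadj
        omega
      · have h0 : 1 ≤ Γ.dist u w' := by
          by_contra h0
          have e1 : u = w' := hc.dist_eq_zero_iff.1 (by omega)
          have e2 : u = w := hc.dist_eq_zero_iff.1 (by omega)
          exact hadj.ne (e1 ▸ e2)
        obtain ⟨r, r1, r2, r3⟩ := (L u (2 * Γ.dist u w' + 2)).tri (by omega) hadj h.symm h0
        have hr : ∀ m, Γ.dist u m + Γ.dist m r = Γ.dist u r → m ∈ S := by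
          intro m hm
          refine I m ?_
          have t1 := hc.dist_triangle (u := u) (v := m) (w := w')
          have t2 := dist_step hc m r1
          omega
        exact ih _ (by omega) w (PIn.snoc (pin_of_interval hc _ r rfl hr) r2.symm hw) m hm
      · by_cases hmw : Γ.dist m w = 0
        · have := hc.dist_eq_zero_iff.1 hmw
          exact this ▸ hw
        obtain ⟨z, z1, z2⟩ := closer hc (u := w) (v := m) (k := Γ.dist m w - 1)
          (by rw [SimpleGraph.dist_comm]; omega)
        rw [SimpleGraph.dist_comm] at z2
        have t1 := hc.dist_triangle (u := u) (v := m) (w := z)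
        have t2 := dist_step hc u z1
        by_cases hzw : w' = z
        · subst hzw
          exact I m (by omega)
        have hz := ((L u (2 * Γ.dist u w + 2)).clique (by omega) hadj.symm z1 (by omega)
          (by omega)).resolve_left hzw
        have h0 : 1 ≤ Γ.dist u w' := by
          by_contra h0
          have e1 : u = w' := hc.dist_eq_zero_iff.1 (by omega)
          have e2 : u = z := hc.dist_eq_zero_iff.1 (by omega)
          exact hz.ne (e1 ▸ e2)
        obtain ⟨r, r1, r2, r3⟩ := (L u (2 * Γ.dist u w' + 2)).tri (by omega) hz (by omega) h0
        have hr : ∀ m, Γ.dist u m + Γ.dist m r = Γ.dist u r → m ∈ S := by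
          intro m hm
          refine I m ?_
          have t1 := hc.dist_triangle (u := u) (v := m) (w := w')
          have t2 := dist_step hc m r1
          omega
        have hzS : z ∈ S := by
          refine h2 r w z (hr r (by simp)) hw ?_ ?_ r2.symm z1.symm
          · rintro rfl
            omega
          · intro h
            have := dist_step hc u h.symm
            omega
        exact ih _ (by omega) z (PIn.snoc (pin_of_interval hc _ r rfl hr) r2.symm hzS) m (by omega)
  intro u w m hu hw hm
  obtain ⟨n, hn⟩ := hconn u w hu hw
  exact main u n w hn m hm

theorem dist_two (hc : Γ.Connected) {u w m : V} (h1 : u ≠ w) (h2 : ¬ Γ.Adj u w) (h3 : Γ.Adj u m)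
    (h4 : Γ.Adj m w) : Γ.dist u w = 2 := by
  have t := hc.dist_triangle (u := u) (v := m) (w := w)
  rw [SimpleGraph.dist_eq_one_iff_adj.2 h3, SimpleGraph.dist_eq_one_iff_adj.2 h4] at t
  have e1 : Γ.dist u w ≠ 0 := fun h => h1 (hc.dist_eq_zero_iff.1 h)
  have e2 : Γ.dist u w ≠ 1 := fun h => h2 (SimpleGraph.dist_eq_one_iff_adj.1 h)
  omega

theorem Conv.two (hc : Γ.Connected) {S : Set V} (h : Conv Γ S) {u w m : V} (hu : u ∈ S)
    (hw : w ∈ S) (h1 : u ≠ w) (h2 : ¬ Γ.Adj u w) (h3 : Γ.Adj u m) (h4 : Γ.Adj m w) : m ∈ S := by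
  refine h u w m hu hw ?_
  rw [dist_two hc h1 h2 h3 h4, SimpleGraph.dist_eq_one_iff_adj.2 h3,
    SimpleGraph.dist_eq_one_iff_adj.2 h4]

/-- Closed neighbourhood. -/
def B1 (Γ : SimpleGraph V) (K : Set V) : Set V := {v | v ∈ K ∨ ∃ k ∈ K, Γ.Adj v k}

theorem conv_B1 (hB : IsBridged Γ) (hN : NoInducedCycles Γ 4 17) {K : Set V} (hK : Conv Γ K) :
    Conv Γ (B1 Γ K) := by
  have hc := hB.1
  have hsub : K ⊆ B1 Γ K := fun v hv => Or.inl hv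
  refine conv_of_local hB hN ?_ ?_
  · have a1 : ∀ u w, u ∈ K → w ∈ B1 Γ K → ∃ n, PIn Γ (B1 Γ K) u n w := by
      intro u w hu hw
      rcases hw with hw | ⟨k, hk, hw⟩
      · exact ⟨_, (pin_of_interval hc _ w rfl (fun m hm => hK u w m hu hw hm)).mono hsub⟩
      · exact ⟨_, PIn.snoc ((pin_of_interval hc _ k rfl
          (fun m hm => hK u k m hu hk hm)).mono hsub) hw.symm (Or.inr ⟨k, hk, hw⟩)⟩
    intro u w hu hw
    rcases hu with hu | ⟨k, hk, hu⟩
    · exact a1 u w hu hw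
    · obtain ⟨n, hn⟩ := a1 k w hk hw
      exact ⟨_, hn.cons hu (Or.inr ⟨k, hk, hu⟩)⟩
  · intro u w m hu hw hne hna hum hmw
    by_contra hm
    have mk : ∀ k ∈ K, ¬ Γ.Adj m k := fun k hk h => hm (Or.inr ⟨k, hk, h⟩)
    have mK : m ∉ K := fun h => hm (Or.inl h)
    obtain ⟨k, hk, huk⟩ : ∃ k ∈ K, Γ.Adj u k := by
      rcases hu with hu | hu
      · exact absurd hum.symm (mk u hu)
      · exact hu
    obtain ⟨k', hk', hwk⟩ : ∃ k ∈ K, Γ.Adj w k := by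
      rcases hw with hw | hw
      · exact absurd hmw (mk w hw)
      · exact hw
    have h0 : ∀ k ∈ K, Γ.Adj u k → ¬ Γ.Adj w k := by
      intro k hk h1 h2
      rcases cyc4 hN hum.symm h1 h2.symm hmw.symm (fun h => mK (h ▸ hk)) hne with h | h
      · exact mk k hk h
      · exact hna h
    have h1 : ∀ k ∈ K, ∀ k' ∈ K, Γ.Adj u k → Γ.Adj w k' → ¬ Γ.Adj k k' := by
      intro k hk k' hk' e1 e2 e3
      exact cyc5 hN hum.symm e1 e3 e2.symm hmw.symm (mk k hk) (mk k' hk')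
        (fun h => h0 k' hk' h e2) hna (fun h => h0 k hk e1 h.symm)
    have h2 : ∀ k ∈ K, ∀ k' ∈ K, Γ.Adj u k → Γ.Adj w k' → ∀ a, Γ.Adj k a → Γ.Adj a k' → False := by
      intro k hk k' hk' e1 e2 a e3 e4
      have n1 : k ≠ k' := by rintro rfl; exact h0 k hk e1 e2
      have ha : a ∈ K := hK.two hc hk hk' n1 (h1 k hk k' hk' e1 e2) e3 e4
      exact cyc6 hN hum.symm e1 e3 e4 e2.symm hmw.symm (mk k hk) (mk a ha) (mk k' hk')
        (fun h => h1 a ha k' hk' h e2 e4) (fun h => h0 k' hk' h e2) hna (h1 k hk k' hk' e1 e2)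
        (fun h => h0 k hk e1 h.symm) (fun h => h1 k hk a ha e1 h.symm e3)
    obtain ⟨p, p0, p1, p2⟩ := exists_geod hc k k'
    have t1 := hc.dist_triangle (u := k) (v := u) (w := m)
    have t2 := hc.dist_triangle (u := m) (v := w) (w := k')
    have t3 := hc.dist_triangle (u := k) (v := m) (w := k')
    rw [SimpleGraph.dist_eq_one_iff_adj.2 huk.symm, SimpleGraph.dist_eq_one_iff_adj.2 hum] at t1
    rw [SimpleGraph.dist_eq_one_iff_adj.2 hmw, SimpleGraph.dist_eq_one_iff_adj.2 hwk] at t2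
    have hle : Γ.dist k k' ≤ 4 := by omega
    rcases Nat.lt_or_ge (Γ.dist k k') 4 with hlt | hge
    · obtain ⟨d, hd⟩ : ∃ d, Γ.dist k k' = d := ⟨_, rfl⟩
      rw [hd] at hlt p1 p2
      interval_cases d
      · have := hc.dist_eq_zero_iff.1 hd
        subst this
        exact h0 k hk huk hwk
      · exact h1 k hk k' hk' huk hwk (SimpleGraph.dist_eq_one_iff_adj.1 hd)
      · have q1 := p2 0 (by norm_num)
        have q2 := p2 1 (by norm_num)
        norm_num at q1 q2
        rw [p0] at q1
        rw [p1] at q2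
        exact h2 k hk k' hk' huk hwk _ q1 q2
      · have q1 := p2 0 (by norm_num)
        have q2 := p2 1 (by norm_num)
        have q3 := p2 2 (by norm_num)
        norm_num at q1 q2 q3
        rw [p0] at q1
        rw [p1] at q3
        have w1 := SimpleGraph.dist_eq_one_iff_adj.2 q1
        have w2 := SimpleGraph.dist_eq_one_iff_adj.2 q2
        have w3 := SimpleGraph.dist_eq_one_iff_adj.2 q3
        have v1 := hc.dist_triangle (u := k) (v := p 1) (w := p 2)
        have v2 := hc.dist_triangle (u := k) (v := p 2) (w := k')
        have v3 := hc.dist_triangle (u := p 1) (v := p 2) (w := k')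
        have v4 := hc.dist_triangle (u := k) (v := p 1) (w := k')
        have m1 : p 1 ∈ K := hK k k' _ hk hk' (by omega)
        have m2 : p 2 ∈ K := hK k k' _ hk hk' (by omega)
        have nn : ∀ {a b : V}, Γ.dist a b ≠ 1 → ¬ Γ.Adj a b := fun h h' =>
          h (SimpleGraph.dist_eq_one_iff_adj.2 h')
        exact cyc7 hN hum.symm huk q1 q2 q3 hwk.symm hmw.symm (mk k hk) (mk _ m1) (mk _ m2)
          (mk k' hk') (fun h => h2 _ m1 k' hk' h hwk _ q2 q3)
          (fun h => h1 _ m2 k' hk' h hwk q3) (fun h => h0 k' hk' h hwk) hna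
          (nn (by omega)) (nn (by omega)) (fun h => h0 k hk huk h.symm) (nn (by omega))
          (fun h => h1 k hk _ m1 huk h.symm q1) (fun h => h2 k hk _ m2 huk h.symm _ q1 q2)
    · exact mK (hK k k' m hk hk' (by omega))

/-- Iterated neighbourhoods. -/
def Bn (Γ : SimpleGraph V) (K : Set V) : ℕ → Set V
  | 0 => K
  | n + 1 => B1 Γ (Bn Γ K n)

theorem conv_Bn (hB : IsBridged Γ) (hN : NoInducedCycles Γ 4 17) {K : Set V} (hK : Conv Γ K)
    (n : ℕ) : Conv Γ (Bn Γ K n) := by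
  induction n with
  | zero => exact hK
  | succ n ih => exact conv_B1 hB hN ih

theorem Bn_mono {K : Set V} {n m : ℕ} (h : n ≤ m) : Bn Γ K n ⊆ Bn Γ K m := by
  induction h with
  | refl => exact fun _ h => h
  | step h ih => exact fun v hv => Or.inl (ih hv)

theorem Bn_dist (hc : Γ.Connected) {K : Set V} (n : ℕ) (v : V) :
    v ∈ Bn Γ K n ↔ ∃ k ∈ K, Γ.dist v k ≤ n := by
  induction n generalizing v with
  | zero =>
    constructor
    · intro h
      exact ⟨v, h, by simp⟩
    · rintro ⟨k, hk, h⟩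
      have : v = k := hc.dist_eq_zero_iff.1 (by omega)
      exact this ▸ hk
  | succ n ih =>
    constructor
    · rintro (h | ⟨w, hw, h⟩)
      · obtain ⟨k, hk, h⟩ := (ih v).1 h
        exact ⟨k, hk, by omega⟩
      · obtain ⟨k, hk, h'⟩ := (ih w).1 hw
        have := dist_step hc k h
        rw [SimpleGraph.dist_comm, SimpleGraph.dist_comm (u := k)] at this
        exact ⟨k, hk, by omega⟩
    · rintro ⟨k, hk, h⟩
      by_cases h' : Γ.dist v k ≤ n
      · exact Or.inl ((ih v).2 ⟨k, hk, h'⟩)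
      · obtain ⟨w, h1, h2⟩ := closer hc (u := v) (v := k) (k := n) (by omega)
        exact Or.inr ⟨w, (ih w).2 ⟨k, hk, by omega⟩, h1⟩

theorem conv_ball (hB : IsBridged Γ) (hN : NoInducedCycles Γ 4 17) (o : V) (n : ℕ) :
    Conv Γ {v | Γ.dist v o ≤ n} := by
  have hc := hB.1
  have h0 : Conv Γ {o} := by
    intro u w m hu hw h
    rw [Set.mem_singleton_iff] at hu hw
    rw [hu, hw, SimpleGraph.dist_self] at h
    have : o = m := hc.dist_eq_zero_iff.1 (by omega)
    exact this.symm
  have h1 := conv_Bn hB hN h0 n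
  have h2 : Bn Γ {o} n = {v | Γ.dist v o ≤ n} := by
    ext v
    rw [Bn_dist hc]
    simp
  rwa [h2] at h1

/-- Distance to a set. -/
noncomputable def lam (Γ : SimpleGraph V) (K : Set V) (v : V) : ℕ := sInf {n | v ∈ Bn Γ K n}

theorem lam_mem (hc : Γ.Connected) {K : Set V} (hne : K.Nonempty) (v : V) :
    v ∈ Bn Γ K (lam Γ K v) := by
  obtain ⟨k, hk⟩ := hne
  exact Nat.sInf_mem (s := {n | v ∈ Bn Γ K n}) ⟨Γ.dist v k, (Bn_dist hc _ v).2 ⟨k, hk, le_rfl⟩⟩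

theorem lam_le {K : Set V} {v : V} {n : ℕ} (h : v ∈ Bn Γ K n) : lam Γ K v ≤ n :=
  Nat.sInf_le h

theorem lev_lam (hB : IsBridged Γ) (hN : NoInducedCycles Γ 4 17) {K : Set V} (hK : Conv Γ K)
    (hne : K.Nonempty) (M : ℕ) : Lev Γ (lam Γ K) M := by
  have hc := hB.1
  have step : ∀ {u v}, Γ.Adj u v → lam Γ K u ≤ lam Γ K v + 1 := by
    intro u v h
    exact lam_le (n := lam Γ K v + 1) (Or.inr ⟨v, lam_mem hc hne v, h⟩)
  have down : ∀ {v}, 1 ≤ lam Γ K v → ∃ w, Γ.Adj v w ∧ lam Γ K w + 1 = lam Γ K v := by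
    intro v hv
    obtain ⟨t, ht⟩ : ∃ t, lam Γ K v = t + 1 := ⟨lam Γ K v - 1, by omega⟩
    have h1 := lam_mem hc hne v
    rw [ht] at h1
    rcases h1 with h1 | ⟨w, hw, h1⟩
    · have := lam_le h1
      omega
    · have := lam_le hw
      have := step h1
      exact ⟨w, h1, by omega⟩
  have mem : ∀ {w t}, lam Γ K w ≤ t → w ∈ Bn Γ K t := fun {w t} h => Bn_mono h (lam_mem hc hne w)
  refine ⟨step, down, ?_, ?_⟩
  · intro v w w' _ h1 h2 h3 h4
    by_contra hcon
    push Not at hcon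
    have := lam_le ((conv_Bn hB hN hK (lam Γ K w)).two hc (mem le_rfl) (mem (w := w') (by omega))
      hcon.1 hcon.2 h1.symm h2)
    omega
  · intro v w _ hvw hl h1
    obtain ⟨p, p1, p2⟩ := down h1
    obtain ⟨q, q1, q2⟩ := down (v := w) (by omega)
    by_contra hcon
    push Not at hcon
    have h0 : ∀ x, Γ.Adj v x → lam Γ K x + 1 = lam Γ K v → ¬ Γ.Adj w x := fun x a b c =>
      hcon x a c b
    have hp := h0 p p1 p2
    have hq : ¬ Γ.Adj v q := fun h => h0 q h (by omega) q1
    have four : ∀ p q, Γ.Adj v p → lam Γ K p + 1 = lam Γ K v → Γ.Adj w q →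
        lam Γ K q + 1 = lam Γ K v → ¬ Γ.Adj p q := by
      intro p q a1 a2 a3 a4 a5
      rcases cyc4 hN hvw a3 a5.symm a1.symm (by rintro rfl; omega) (by rintro rfl; omega) with h | h
      · exact h0 q h a4 a3
      · exact h0 p a1 a2 h
    have cv := conv_Bn hB hN hK (lam Γ K p)
    have pm : p ∈ Bn Γ K (lam Γ K p) := mem le_rfl
    have qm : q ∈ Bn Γ K (lam Γ K p) := mem (by omega)
    have vm : v ∉ Bn Γ K (lam Γ K p) := fun h => by
      have := lam_le h
      omega
    have t1 := hc.dist_triangle (u := v) (v := w) (w := q)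
    have t2 := hc.dist_triangle (u := p) (v := v) (w := q)
    rw [SimpleGraph.dist_eq_one_iff_adj.2 hvw, SimpleGraph.dist_eq_one_iff_adj.2 q1] at t1
    rw [SimpleGraph.dist_eq_one_iff_adj.2 p1.symm] at t2
    have d3 : Γ.dist p q ≠ 3 := fun h => vm (cv p q v pm qm (by
      rw [SimpleGraph.dist_eq_one_iff_adj.2 p1.symm]; omega))
    have d0 : Γ.dist p q ≠ 0 := fun h => by
      have := hc.dist_eq_zero_iff.1 h
      subst this
      exact hp q1
    have d1 : Γ.dist p q ≠ 1 := fun h => four p q p1 p2 q1 (by omega)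
      (SimpleGraph.dist_eq_one_iff_adj.1 h)
    have d2 : Γ.dist p q = 1 + 1 := by omega
    obtain ⟨z, z1, z2⟩ := closer hc d2
    have z3 := SimpleGraph.dist_eq_one_iff_adj.1 z2
    have zm : z ∈ Bn Γ K (lam Γ K p) := cv p q z pm qm (by
      rw [SimpleGraph.dist_eq_one_iff_adj.2 z1]; omega)
    have zl := lam_le zm
    have zv : ¬ Γ.Adj v z := fun h => by
      have := step h
      exact four z q h (by omega) q1 (by omega) z3
    have zw : ¬ Γ.Adj w z := fun h => by
      have := step h
      exact four p z p1 p2 h (by omega) z1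
    exact cyc5 hN hvw q1 z3.symm z1.symm p1.symm hq zv zw hp
      (fun h => d1 (SimpleGraph.dist_eq_one_iff_adj.2 h.symm))

end convex

section fullLev
variable {V : Type*} {Γ : SimpleGraph V} {l : V → ℕ}

theorem fclique (L : ∀ M, Lev Γ l M) {v w w' : V} (h1 : Γ.Adj v w) (h2 : Γ.Adj v w')
    (h3 : l w + 1 = l v) (h4 : l w' + 1 = l v) : w = w' ∨ Γ.Adj w w' :=
  (L (2 * l v + 1)).clique (by omega) h1 h2 h3 h4

theorem ftri (L : ∀ M, Lev Γ l M) {v w : V} (h1 : Γ.Adj v w) (h2 : l v = l w) (h3 : 1 ≤ l v) :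
    ∃ x, Γ.Adj v x ∧ Γ.Adj w x ∧ l x + 1 = l v :=
  (L (2 * l v + 2)).tri (by omega) h1 h2 h3

theorem flowN (hN : NoInducedCycles Γ 4 17) (L : ∀ M, Lev Γ l M) {v w b b' : V}
    (hvw : v = w ∨ Γ.Adj v w)
    (hl : l v = l w) (h2 : 2 ≤ l v) (hb : Γ.Adj v b) (hlb : l b + 1 = l v)
    (hb' : Γ.Adj w b') (hlb' : l b' + 1 = l w) : b = b' ∨ Γ.Adj b b' := by
  rcases hvw with rfl | hvw
  · exact fclique L hb hb' hlb hlb'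
  · exact lowN hN (L (2 * l v + 2)) hvw hl h2 (by omega) hb hlb hb' hlb'

theorem star (hN : NoInducedCycles Γ 4 17) (L : ∀ M, Lev Γ l M) {x0 x1 x2 y0 y2 : V}
    (h01 : Γ.Adj x0 x1) (h12 : Γ.Adj x1 x2) (l1 : l x1 = l x0) (l2 : l x2 = l x0) (h2 : 2 ≤ l x0)
    (hy0 : Γ.Adj x0 y0) (ly0 : l y0 + 1 = l x0) (hy2 : Γ.Adj x2 y2) (ly2 : l y2 + 1 = l x0)
    (hn : ¬ (y0 = y2 ∨ Γ.Adj y0 y2)) :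
    ¬ Γ.Adj x1 y0 ∧ ¬ Γ.Adj x1 y2 ∧ ∃ y1, Γ.Adj x0 y1 ∧ Γ.Adj x1 y1 ∧ Γ.Adj x2 y1 ∧
      l y1 + 1 = l x0 ∧ Γ.Adj y0 y1 ∧ Γ.Adj y1 y2 := by
  have n1 : ¬ Γ.Adj x1 y0 := fun h =>
    hn (flowN hN L (Or.inr h12) (by omega) (by omega) h (by omega) hy2 (by omega))
  have n2 : ¬ Γ.Adj x1 y2 := fun h =>
    hn (flowN hN L (Or.inr h01) (by omega) (by omega) hy0 (by omega) h (by omega))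
  obtain ⟨b, b1, b2, b3⟩ := ftri L h12 (by omega) (by omega)
  have e1 : Γ.Adj y0 b := by
    rcases flowN hN L (Or.inr h01) (by omega) (by omega) hy0 (by omega) b1 (by omega) with h | h
    · subst h
      exact absurd b1 n1
    · exact h
  have e2 : Γ.Adj b y2 := by
    rcases fclique L b2 hy2 (by omega) (by omega) with h | h
    · subst h
      exact absurd b1 n2
    · exact h
  have e3 : Γ.Adj x0 b := by
    rcases cyc4 hN h01 b1 e1.symm hy0.symm (by rintro rfl; omega) (by rintro rfl; omega) with h | h
    · exact h
    · exact absurd h n1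
  exact ⟨n1, n2, b, e3, b1, b2, by omega, e1, e2⟩

theorem lemW (hN : NoInducedCycles Γ 4 17) (L : ∀ M, Lev Γ l M) {x0 x1 x2 y0 y2 w0 w2 : V}
    (h01 : x0 = x1 ∨ Γ.Adj x0 x1) (h12 : x1 = x2 ∨ Γ.Adj x1 x2) (l1 : l x1 = l x0)
    (l2 : l x2 = l x0) (h2 : 4 ≤ l x0)
    (hy0 : Γ.Adj x0 y0) (ly0 : l y0 + 1 = l x0) (hy2 : Γ.Adj x2 y2) (ly2 : l y2 + 1 = l x0)
    (hw0 : Γ.Adj y0 w0) (lw0 : l w0 + 1 = l y0) (hw2 : Γ.Adj y2 w2) (lw2 : l w2 + 1 = l y2) :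
    w0 = w2 ∨ Γ.Adj w0 w2 := by
  by_cases hy : y0 = y2 ∨ Γ.Adj y0 y2
  · exact flowN hN L hy (by omega) (by omega) hw0 lw0 hw2 lw2
  have n02 : ¬ (x0 = x2 ∨ Γ.Adj x0 x2) := fun h =>
    hy (flowN hN L h (by omega) (by omega) hy0 ly0 hy2 (by omega))
  have a01 : Γ.Adj x0 x1 := h01.resolve_left (fun h => n02 (h ▸ h12))
  have a12 : Γ.Adj x1 x2 := h12.resolve_left (fun h => n02 (h ▸ h01))
  obtain ⟨n1, n2, y1, p1, p2, p3, p4, p5, p6⟩ := star hN L a01 a12 l1 l2 (by omega) hy0 ly0 hy2 ly2 hy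
  by_contra hw
  obtain ⟨m1, m2, w1, q1, q2, q3, q4, q5, q6⟩ := star hN L p5 p6 (by omega) (by omega) (by omega)
    hw0 lw0 hw2 (by omega) hw
  have s := L 0
  exact cyc6 hN a01 a12 hy2 q3 q1.symm hy0.symm (fun h => n02 (Or.inr h))
    (fun h => hy (fclique L hy0 h (by omega) (by omega))) (s.nadj (by omega)) n2
    (s.nadj (by omega)) n1 (s.nadj (by omega))
    (fun h => hy (fclique L h hy2 (by omega) (by omega))) (fun h => hy (Or.inr h.symm))

theorem common_below (hc : Γ.Connected) (hN : NoInducedCycles Γ 4 17) (L : ∀ M, Lev Γ l M)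
    (u v : V) (j : ℕ) (h : Γ.dist u v + 2 * j + 4 ≤ l u + l v) :
    ∃ r, Below Γ l r u ∧ Below Γ l r v ∧ l r = j := by
  have s := L 0
  suffices hs : ∃ r, Below Γ l r u ∧ Below Γ l r v ∧ j ≤ l r by
    obtain ⟨r, r1, r2, r3⟩ := hs
    obtain ⟨z, z1, z2⟩ := below_exists hc s r j r3
    exact ⟨z, below_trans hc s z1 r1, below_trans hc s z1 r2, z2⟩
  obtain ⟨z, z', f, hl, hz, hz', hd, h0, h1, h2, h3⟩ :=
    dfu hc hN (L (l u + l v + Γ.dist u v + 1)) u v (by omega)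
  have hz2 := hz
  have hz2' := hz'
  unfold Below at hz2 hz2'
  have hf : f ≤ 2 := by omega
  have edge : ∀ y y', Γ.Adj y y' → Below Γ l y u → Below Γ l y' v → l y = l y' → j + 1 ≤ l y →
      ∃ r, Below Γ l r u ∧ Below Γ l r v ∧ j ≤ l r := by
    intro y y' e1 e2 e3 e4 e5
    obtain ⟨x, x1, x2, x3⟩ := ftri L e1 e4 (by omega)
    exact ⟨x, below_trans hc s (below_adj x1 x3) e2, below_trans hc s (below_adj x2 (by omega)) e3,
      by omega⟩
  interval_cases f
  · have := h0 rfl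
    subst this
    exact ⟨z, hz, hz', by omega⟩
  · exact edge z z' (h1 rfl) hz hz' hl (by omega)
  · obtain ⟨m, m1, m2, m3⟩ := h2 rfl
    obtain ⟨y, y1, y2, y3⟩ := ftri L m1 m3.symm (by omega)
    obtain ⟨y', y1', y2', y3'⟩ := ftri L m2 (by omega) (by omega)
    have c1 := below_trans hc s (below_adj y1 y3) hz
    have c2 := below_trans hc s (below_adj y2' (by omega)) hz'
    rcases fclique L y2 y1' (by omega) y3' with h | h
    · subst h
      exact ⟨y, c1, c2, by omega⟩
    · exact edge y y' h c1 c2 (by omega) (by omega)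

theorem four_point (hB : IsBridged Γ) (hN : NoInducedCycles Γ 4 17) (o u v w : V) :
    Γ.dist u w + Γ.dist o v ≤ max (Γ.dist o w + Γ.dist u v) (Γ.dist o u + Γ.dist v w) + 6 := by
  have hc := hB.1
  have L := fun M => lev_dist hB hN M o
  obtain ⟨X, hX⟩ : ∃ X, X = min (Γ.dist o u + Γ.dist o v - Γ.dist u v)
    (Γ.dist o v + Γ.dist o w - Γ.dist v w) := ⟨_, rfl⟩
  by_cases hX4 : X < 6
  · have t := hc.dist_triangle (u := u) (v := o) (w := w)
    rw [SimpleGraph.dist_comm (u := u) (v := o)] at t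
    omega
  obtain ⟨p, p1, p2, p3⟩ := common_below hc hN L u v ((X - 4) / 2) (by omega)
  obtain ⟨r, r1, r2, r3⟩ := common_below hc hN L v w ((X - 4) / 2) (by omega)
  have hpr := below_clique hc hN (L (2 * Γ.dist o v + 2)) (Or.inl rfl) rfl (by omega) p2 r1
    (by omega) (by omega)
  have hpr' : Γ.dist p r ≤ 1 := by
    rcases hpr with h | h
    · subst h
      simp
    · rw [SimpleGraph.dist_eq_one_iff_adj.2 h]
  unfold Below at p1 r2
  have t1 := hc.dist_triangle (u := u) (v := p) (w := w)
  have t2 := hc.dist_triangle (u := p) (v := r) (w := w)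
  rw [SimpleGraph.dist_comm (u := u) (v := p)] at t1
  omega

end fullLev

section action
variable {V : Type*} {Γ : SimpleGraph V} {G : Type*} [Group G] [MulAction G V]

theorem dist_smul_le (hc : Γ.Connected)
    (hact : ∀ (g : G) (u v : V), Γ.Adj (g • u) (g • v) ↔ Γ.Adj u v) (g : G) (u v : V) :
    Γ.dist (g • u) (g • v) ≤ Γ.dist u v := by
  obtain ⟨p, h0, h1, h2⟩ := exists_geod hc u v
  have := path_dist hc (p := fun i => g • p i) (d := Γ.dist u v)
    (fun i hi => (hact g _ _).2 (h2 i hi)) 0 (Γ.dist u v) (by omega)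
  simp only [Nat.zero_add, h0, h1] at this
  exact this

theorem dist_smul (hc : Γ.Connected)
    (hact : ∀ (g : G) (u v : V), Γ.Adj (g • u) (g • v) ↔ Γ.Adj u v) (g : G) (u v : V) :
    Γ.dist (g • u) (g • v) = Γ.dist u v := by
  refine le_antisymm (dist_smul_le hc hact g u v) ?_
  have := dist_smul_le hc hact g⁻¹ (g • u) (g • v)
  simpa using this

theorem smul_set_eq {h : G} {s : Set V} (hs : ∀ v, h • v ∈ s ↔ v ∈ s) : h • s = s := by
  ext v
  rw [Set.mem_smul_set_iff_inv_smul_mem, ← hs]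
  simp

theorem inv_zpow_smul {l : V → ℕ} {h : G} (hl : ∀ v, l (h • v) = l v) (k : ℤ) (v : V) :
    l (h ^ k • v) = l v := by
  induction k using Int.induction_on generalizing v with
  | zero => simp
  | succ k ih => rw [zpow_add_one, mul_smul, ih, hl]
  | pred k ih =>
    rw [zpow_sub_one, mul_smul, ih]
    have := hl (h⁻¹ • v)
    rw [smul_inv_smul] at this
    exact this.symm

theorem fix_vertex (hact : ∀ (g : G) (u v : V), Γ.Adj (g • u) (g • v) ↔ Γ.Adj u v)
    (hsr : StronglyRigid Γ G) {l : V → ℕ} (L : ∀ M, Lev Γ l M) {h : G} (hl : ∀ v, l (h • v) = l v)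
    {b : V} (hb : h • b = b) (h1 : 1 ≤ l b) : h = 1 := by
  obtain ⟨w, w1, w2⟩ := (L 0).down h1
  refine hsr h ⟨{v | v = b ∨ (Γ.Adj b v ∧ l v + 1 = l b)}, ?_, ⟨b, Or.inl rfl, w, Or.inr ⟨w1, w2⟩,
    w1.ne⟩, smul_set_eq ?_⟩
  · rintro x (rfl | ⟨x1, x2⟩) y (rfl | ⟨y1, y2⟩) hne
    · exact absurd rfl hne
    · exact y1
    · exact x1.symm
    · exact (fclique L x1 y1 x2 y2).resolve_left hne
  · intro v
    have e1 : h • v = b ↔ v = b := by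
      constructor
      · intro h'
        rw [← hb] at h'
        exact smul_left_cancel h h'
      · rintro rfl
        exact hb
    have e2 : Γ.Adj b (h • v) ↔ Γ.Adj b v := by
      conv_lhs => rw [← hb]
      exact hact h b v
    simp only [Set.mem_ofPred_eq, e1, e2, hl]

theorem lemA (hN : NoInducedCycles Γ 4 17)
    (hact : ∀ (g : G) (u v : V), Γ.Adj (g • u) (g • v) ↔ Γ.Adj u v)
    (hsr : StronglyRigid Γ G) {l : V → ℕ} (L : ∀ M, Lev Γ l M) {h : G} (hl : ∀ v, l (h • v) = l v)
    {a : V} (h2 : 2 ≤ l a) (ha1 : a = h • a ∨ Γ.Adj a (h • a))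
    (ha2 : a = h • h • a ∨ Γ.Adj a (h • h • a)) : h = 1 := by
  rcases ha1 with ha1 | ha1
  · exact fix_vertex hact hsr L hl ha1.symm (by omega)
  rcases ha2 with ha2 | ha2
  · refine hsr h ⟨{v | v = a ∨ v = h • a}, ?_, ⟨a, Or.inl rfl, h • a, Or.inr rfl, ha1.ne⟩,
      smul_set_eq ?_⟩
    · rintro x (rfl | rfl) y (rfl | rfl) hne
      · exact absurd rfl hne
      · exact ha1
      · exact ha1.symm
      · exact absurd rfl hne
    · intro v
      have e1 : h • v = h • a ↔ v = a := ⟨fun h' => smul_left_cancel h h', fun h' => h' ▸ rfl⟩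
      have e2 : h • v = a ↔ v = h • a := by
        constructor
        · intro h'
          rw [ha2] at h'
          exact smul_left_cancel h h'
        · intro h'
          rw [h', ← ha2]
      simp only [Set.mem_ofPred_eq, e1, e2]
      exact or_comm
  obtain ⟨b, b1, b2, b3⟩ := ftri L ha1 (hl a).symm (by omega)
  have hlz := inv_zpow_smul hl
  have tr : ∀ (j k : ℤ), Γ.Adj (h ^ j • b) (h ^ k • a) ↔ Γ.Adj b (h ^ (k - j) • a) := by
    intro j k
    rw [← hact (h ^ j) b, smul_smul, ← zpow_add]
    congr! 3
    ring
  have sh : ∀ k : ℤ, Γ.Adj (h ^ k • a) (h ^ (k + 2) • a) := by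
    intro k
    rw [zpow_add, mul_smul, hact, zpow_two, mul_smul]
    exact ha2
  have A0 : Γ.Adj b (h ^ (0 : ℤ) • a) := by simpa using b1.symm
  have A1 : Γ.Adj b (h ^ (1 : ℤ) • a) := by simpa using b2.symm
  have fin : (∀ j j' : ℤ, ∃ k : ℤ, Γ.Adj (h ^ j • b) (h ^ k • a) ∧ Γ.Adj (h ^ j' • b) (h ^ k • a)) →
      h = 1 := by
    intro hall
    by_cases hb : h • b = b
    · exact fix_vertex hact hsr L hl hb (by omega)
    refine hsr h ⟨{v | ∃ j : ℤ, v = h ^ j • b}, ?_, ⟨b, ⟨0, by simp⟩, h • b, ⟨1, by simp⟩,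
      fun h' => hb h'.symm⟩, smul_set_eq ?_⟩
    · rintro x ⟨j, rfl⟩ y ⟨j', rfl⟩ hne
      obtain ⟨k, k1, k2⟩ := hall j j'
      refine (fclique L k1.symm k2.symm ?_ ?_).resolve_left hne
      · rw [hlz, hlz]
        exact b3
      · rw [hlz, hlz]
        exact b3
    · intro v
      constructor
      · rintro ⟨j, hj⟩
        refine ⟨j - 1, ?_⟩
        rw [sub_eq_add_neg, add_comm, zpow_add, mul_smul, ← hj]
        simp
      · rintro ⟨j, rfl⟩
        refine ⟨1 + j, ?_⟩
        rw [zpow_add, mul_smul, zpow_one]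
  by_cases c1 : ∀ n : ℕ, Γ.Adj b (h ^ (n : ℤ) • a)
  · refine fin fun j j' => ⟨max j j', ?_, ?_⟩
    · rw [tr]
      have := c1 (max j j' - j).toNat
      rwa [Int.toNat_of_nonneg (by omega)] at this
    · rw [tr]
      have := c1 (max j j' - j').toNat
      rwa [Int.toNat_of_nonneg (by omega)] at this
  by_cases c2 : ∀ n : ℕ, Γ.Adj b (h ^ (1 - n : ℤ) • a)
  · refine fin fun j j' => ⟨min j j', ?_, ?_⟩
    · rw [tr]
      have := c2 (1 + j - min j j').toNat
      rw [Int.toNat_of_nonneg (by omega)] at this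
      convert this using 3
      omega
    · rw [tr]
      have := c2 (1 + j' - min j j').toNat
      rw [Int.toNat_of_nonneg (by omega)] at this
      convert this using 3
      omega
  exfalso
  push Not at c1 c2
  obtain ⟨P, P1, P2, P3⟩ : ∃ P : ℤ, Γ.Adj b (h ^ (P - 1) • a) ∧ Γ.Adj b (h ^ P • a) ∧
      ¬ Γ.Adj b (h ^ (P + 1) • a) := by
    classical
    have s1 := Nat.find_spec c1
    have s2 : ∀ {m}, m < Nat.find c1 → Γ.Adj b (h ^ (m : ℤ) • a) := fun hm => by
      have := Nat.find_min c1 hm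
      push Not at this
      exact this
    obtain ⟨n, hn⟩ : ∃ n, Nat.find c1 = n := ⟨_, rfl⟩
    rw [hn] at s1 s2
    have n0 : n ≠ 0 := by rintro rfl; exact s1 (by exact_mod_cast A0)
    have n1 : n ≠ 1 := by rintro rfl; exact s1 (by exact_mod_cast A1)
    refine ⟨(n : ℤ) - 1, ?_, ?_, ?_⟩
    · have := s2 (m := n - 2) (by omega)
      convert this using 3
      omega
    · have := s2 (m := n - 1) (by omega)
      convert this using 3
      omega
    · rw [sub_add_cancel]
      exact s1
  obtain ⟨m, m1, m2, m3⟩ : ∃ m : ℤ, ¬ Γ.Adj b (h ^ (m - 1) • a) ∧ Γ.Adj b (h ^ m • a) ∧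
      Γ.Adj b (h ^ (m + 1) • a) := by
    classical
    have s1 := Nat.find_spec c2
    have s2 : ∀ {m}, m < Nat.find c2 → Γ.Adj b (h ^ (1 - m : ℤ) • a) := fun hm => by
      have := Nat.find_min c2 hm
      push Not at this
      exact this
    obtain ⟨n, hn⟩ : ∃ n, Nat.find c2 = n := ⟨_, rfl⟩
    rw [hn] at s1 s2
    have n0 : n ≠ 0 := by rintro rfl; exact s1 (by simpa using A1)
    have n1 : n ≠ 1 := by rintro rfl; exact s1 (by simpa using A0)
    refine ⟨2 - (n : ℤ), ?_, ?_, ?_⟩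
    · convert s1 using 4
      omega
    · have := s2 (m := n - 1) (by omega)
      convert this using 3
      omega
    · have := s2 (m := n - 2) (by omega)
      convert this using 3
      omega
  have B1 : ¬ Γ.Adj (h ^ (P - m) • b) (h ^ (P - 1) • a) := by
    rw [tr]
    convert m1 using 4
    omega
  have B2 : Γ.Adj (h ^ (P - m) • b) (h ^ P • a) := by
    rw [tr]
    convert m2 using 3
    omega
  have B3 : Γ.Adj (h ^ (P - m) • b) (h ^ (P + 1) • a) := by
    rw [tr]
    convert m3 using 3
    omega
  have hs := sh (P - 1)
  rw [show P - 1 + 2 = P + 1 by ring] at hs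
  have hbb : Γ.Adj b (h ^ (P - m) • b) := by
    refine (fclique L P2.symm B2.symm ?_ ?_).resolve_left ?_
    · rw [hlz]
      exact b3
    · rw [hlz, hlz]
      exact b3
    · intro h'
      rw [← h'] at B3
      exact P3 B3
  have d1 : h ^ (P - 1) • a ≠ h ^ (P - m) • b := by
    intro h'
    have := congrArg l h'
    rw [hlz, hlz] at this
    omega
  have d2 : h ^ (P + 1) • a ≠ b := by
    intro h'
    have := congrArg l h'
    rw [hlz] at this
    omega
  rcases cyc4 hN hs B3.symm hbb.symm P1 d1 d2 with h' | h'
  · exact B1 h'.symm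
  · exact P3 h'.symm

theorem Bn_smul (hact : ∀ (g : G) (u v : V), Γ.Adj (g • u) (g • v) ↔ Γ.Adj u v) {K : Set V} {h : G}
    (hK : ∀ v, h • v ∈ K ↔ v ∈ K) (n : ℕ) (v : V) : h • v ∈ Bn Γ K n ↔ v ∈ Bn Γ K n := by
  induction n generalizing v with
  | zero => exact hK v
  | succ n ih =>
    refine or_congr (ih v) ?_
    constructor
    · rintro ⟨k, hk, hv⟩
      refine ⟨h⁻¹ • k, ?_, ?_⟩
      · rw [← ih, smul_inv_smul]
        exact hk
      · rw [← hact h, smul_inv_smul]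
        exact hv
    · rintro ⟨k, hk, hv⟩
      exact ⟨h • k, (ih k).2 hk, (hact h _ _).2 hv⟩

theorem lemB (hB : IsBridged Γ) (hN : NoInducedCycles Γ 4 17)
    (hact : ∀ (g : G) (u v : V), Γ.Adj (g • u) (g • v) ↔ Γ.Adj u v)
    (hsr : StronglyRigid Γ G) {K : Set V} (hK : Conv Γ K) (hne : K.Nonempty) {h : G}
    (hKh : ∀ v, h • v ∈ K ↔ v ∈ K) (h1 : h ≠ 1) (a : V) :
    2 * lam Γ K a < Γ.dist a (h • a) + 12 ∨ 2 * lam Γ K a < Γ.dist a (h • h • a) + 12 := by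
  by_contra hcon
  push Not at hcon
  obtain ⟨c1, c2⟩ := hcon
  have hc := hB.1
  have L := fun M => lev_lam hB hN hK hne M
  have hl : ∀ v, lam Γ K (h • v) = lam Γ K v := by
    intro v
    unfold lam
    congr 1
    ext n
    exact Bn_smul hact hKh n v
  have s := L 0
  obtain ⟨a4, p1, p2⟩ := below_exists hc s a 4 (by omega)
  obtain ⟨a3, q1, q2⟩ := s.down (v := a4) (by omega)
  obtain ⟨a2, r1, r2⟩ := s.down (v := a3) (by omega)
  have main : ∀ g : G, (∀ v, lam Γ K (g • v) = lam Γ K v) →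
      Γ.dist a (g • a) + 12 ≤ 2 * lam Γ K a → a2 = g • a2 ∨ Γ.Adj a2 (g • a2) := by
    intro g hg hd
    obtain ⟨z, z1, z2, z3⟩ := common_below hc hN L a (g • a) 4 (by rw [hg]; omega)
    have b4 : Below Γ (lam Γ K) (g • a4) (g • a) := by
      unfold Below at *
      rw [hg, hg, dist_smul hc hact]
      exact p1
    have e1 := below_clique hc hN (L (2 * lam Γ K a + 2)) (Or.inl rfl) rfl (by omega) p1 z1
      (by omega) (by omega)
    have e2 := below_clique hc hN (L (2 * lam Γ K a + 2)) (Or.inl rfl) rfl (by rw [hg]; omega) z2 b4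
      (by rw [hg]; omega) (by omega)
    exact lemW hN L e1 e2 (by omega) (by rw [hg]) (by omega) q1 q2 ((hact g _ _).2 q1)
      (by rw [hg]; omega) r1 r2 ((hact g _ _).2 r1) (by rw [hg, hg]; omega)
  have m1 := main h hl c1
  have m2 := main (h * h) (fun v => by rw [mul_smul, hl, hl]) (by rw [mul_smul]; exact c2)
  rw [mul_smul] at m2
  exact h1 (lemA hN hact hsr L hl (by omega) m1 m2)

end action

section final
variable {V : Type*} {Γ : SimpleGraph V} {G : Type*} [Group G] [MulAction G V]

theorem seq_grow (hB : IsBridged Γ) (hN : NoInducedCycles Γ 4 17) (z : ℕ → V) (n C : ℕ)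
    (hn : 4 * C + 17 < n) (h0 : n ≤ Γ.dist (z 0) (z 1) + C)
    (h1 : ∀ i, Γ.dist (z i) (z (i+1)) ≤ n + C)
    (h2 : ∀ i, 2 * n ≤ Γ.dist (z i) (z (i+2)) + 3 * C + 11) (k : ℕ) :
    k ≤ Γ.dist (z 0) (z k) ∧ Γ.dist (z 0) (z k) + 1 ≤ Γ.dist (z 0) (z (k+1)) := by
  induction k with
  | zero =>
    rw [SimpleGraph.dist_self]
    rw [Nat.zero_add]
    constructor <;> omega
  | succ k ih =>
    refine ⟨by omega, ?_⟩
    have f := four_point hB hN (z 0) (z k) (z (k+1)) (z (k+2))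
    have e1 := h1 k
    have e2 := h1 (k+1)
    have e3 := h2 k
    have e4 : z (k + 1 + 1) = z (k + 2) := rfl
    rw [e4] at e2 ⊢
    omega

theorem main_bound (hB : IsBridged Γ) (hN : NoInducedCycles Γ 4 17)
    (hact : ∀ (g : G) (u v : V), Γ.Adj (g • u) (g • v) ↔ Γ.Adj u v)
    (hsr : StronglyRigid Γ G)
    (hle : ∀ (g : G) (x : V), ∃ C : ℕ, ∀ n : ℤ, Γ.dist x ((g ^ n) • x) ≤ C)
    (h : G) (h1 : h ≠ 1) (x : V) (C : ℕ) (hC : ∀ n : ℤ, Γ.dist x ((h ^ n) • x) ≤ C) (g : G) :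
    Γ.dist x (g • x) ≤ 4 * C + 17 := by
  have hc := hB.1
  have di := dist_smul hc hact
  have tri := fun u v w : V => hc.dist_triangle (u := u) (v := v) (w := w)
  have sy := fun u v : V => SimpleGraph.dist_comm (G := Γ) (u := u) (v := v)
  obtain ⟨K, hK⟩ : ∃ K : Set V, ∀ v, v ∈ K ↔ ∀ k : ℤ, Γ.dist v (h ^ k • x) ≤ C :=
    ⟨{v | ∀ k : ℤ, Γ.dist v (h ^ k • x) ≤ C}, fun v => Iff.rfl⟩
  have hconv : Conv Γ K := by
    intro u w m hu hw hm
    rw [hK] at *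
    intro k
    exact conv_ball hB hN (h ^ k • x) C u w m (hu k) (hw k) hm
  have hKh : ∀ v, h • v ∈ K ↔ v ∈ K := by
    intro v
    rw [hK, hK]
    constructor
    · intro hv k
      have := hv (1 + k)
      rwa [zpow_add, mul_smul, zpow_one, di] at this
    · intro hv k
      have := hv (-1 + k)
      rwa [← di h, smul_smul, zpow_add, ← mul_assoc, zpow_neg_one, mul_inv_cancel, one_mul] at this
  have hx : x ∈ K := (hK x).2 hC
  have hlam : ∀ y, Γ.dist x y ≤ lam Γ K y + C := by
    intro y
    obtain ⟨k, hk, hd⟩ := (Bn_dist hc _ y).1 (lam_mem hc ⟨x, hx⟩ y)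
    have e := (hK k).1 hk 0
    rw [zpow_zero, one_smul] at e
    have t := tri x k y
    rw [sy x k, sy k y] at t
    omega
  have hf : ∀ y, ∃ f : G, Γ.dist x (f • x) ≤ C ∧
      2 * Γ.dist x y ≤ Γ.dist y (f • y) + 2 * C + 11 := by
    intro y
    have e := hlam y
    rcases lemB hB hN hact hsr hconv ⟨x, hx⟩ hKh h1 y with h' | h'
    · refine ⟨h, by simpa using hC 1, by omega⟩
    · refine ⟨h * h, by rw [← zpow_two]; exact hC 2, ?_⟩
      rw [mul_smul]
      omega
  by_contra hcon
  push Not at hcon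
  obtain ⟨n, hn⟩ : ∃ n, Γ.dist x (g • x) = n := ⟨_, rfl⟩
  obtain ⟨y, hy⟩ : ∃ y, y = g • x := ⟨_, rfl⟩
  rw [hn] at hcon
  rw [← hy] at hn
  obtain ⟨f, f1, f2⟩ := hf y
  obtain ⟨f0, g1, g2⟩ := hf (g⁻¹ • x)
  obtain ⟨f', hf'⟩ : ∃ f', f' = g * f0 * g⁻¹ := ⟨_, rfl⟩
  have g3 : Γ.dist y (f' • y) ≤ C := by
    rw [hy, hf', smul_smul, inv_mul_cancel_right, mul_smul, di]
    exact g1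
  have g4 : 2 * n ≤ Γ.dist x (f' • x) + 2 * C + 11 := by
    have e1 : Γ.dist x (f' • x) = Γ.dist (g⁻¹ • x) (f0 • g⁻¹ • x) := by
      rw [← di g (g⁻¹ • x), smul_inv_smul, hf', mul_smul, mul_smul]
    have e2 : Γ.dist x (g⁻¹ • x) = n := by
      rw [← di g, smul_inv_smul, sy, ← hy, hn]
    rw [e1, ← e2]
    exact g2
  rw [hn] at f2
  obtain ⟨γ, hγ⟩ : ∃ γ, γ = f * f' := ⟨_, rfl⟩
  obtain ⟨D, hD⟩ := hle γ x
  obtain ⟨z, hz⟩ : ∃ z : ℕ → V, ∀ k, z k = γ ^ (k / 2) • (if k % 2 = 0 then x else f • y) :=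
    ⟨_, fun k => rfl⟩
  have z0 : ∀ m, z (2 * m) = γ ^ m • x := by
    intro m
    rw [hz, if_pos (by omega), show 2 * m / 2 = m by omega]
  have z1 : ∀ m, z (2 * m + 1) = γ ^ m • f • y := by
    intro m
    rw [hz, if_neg (by omega), show (2 * m + 1) / 2 = m by omega]
  -- basic distances
  have b01 : Γ.dist x (f • y) ≤ n + C ∧ n ≤ Γ.dist x (f • y) + C := by
    have t1 := tri x (f • x) (f • y)
    have t2 := tri (f • x) x (f • y)
    rw [di] at t1 t2
    rw [sy (f • x) x] at t2
    omega
  have b12 : Γ.dist (f • y) (γ • x) ≤ n + C := by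
    rw [hγ, mul_smul, di]
    have t1 := tri y (f' • y) (f' • x)
    rw [di, sy y x] at t1
    omega
  have b02 : 2 * n ≤ Γ.dist x (γ • x) + 3 * C + 11 := by
    rw [hγ, mul_smul]
    have t1 := tri (f • x) x (f • f' • x)
    rw [di, sy (f • x) x] at t1
    omega
  have b13 : 2 * n ≤ Γ.dist (f • y) (γ • f • y) + 3 * C + 11 := by
    rw [hγ, mul_smul, di]
    have t1 := tri (f' • y) y (f' • f • y)
    rw [di, sy (f' • y) y] at t1
    omega
  have grow := seq_grow hB hN z n C hcon
    (by
      have e0 := z0 0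
      have e1 := z1 0
      simp only [Nat.mul_zero, Nat.zero_add, pow_zero, one_smul] at e0 e1
      rw [e0, e1]
      exact b01.2)
    (by
      intro i
      rcases Nat.even_or_odd' i with ⟨m, rfl | rfl⟩
      · rw [z0, z1, di]
        exact b01.1
      · rw [show 2 * m + 1 + 1 = 2 * (m + 1) by ring, z0, z1, pow_succ, mul_smul, di]
        exact b12)
    (by
      intro i
      rcases Nat.even_or_odd' i with ⟨m, rfl | rfl⟩
      · rw [show 2 * m + 2 = 2 * (m + 1) by ring, z0, z0, pow_succ, mul_smul, di]
        exact b02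
      · rw [show 2 * m + 1 + 2 = 2 * (m + 1) + 1 by ring, z1, z1, pow_succ, mul_smul, di]
        exact b13)
    (2 * (D + 1))
  have g0 := z0 0
  simp only [Nat.mul_zero, pow_zero, one_smul] at g0
  rw [g0, z0] at grow
  have hd := hD ((D + 1 : ℕ) : ℤ)
  rw [zpow_natCast] at hd
  omega

end final

end Sys

/-- Locally elliptic strongly rigid actions of finitely generated groups on
1-skeleta of 18-systolic complexes are elliptic. -/
theorem systolic_locally_elliptic_implies_elliptic {V : Type*} (Γ : SimpleGraph V)
    (h18 : IsEighteenSystolic Γ) (G : Type*) [Group G] [Group.FG G] [MulAction G V]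
    (hact : ∀ (g : G) (u v : V), Γ.Adj (g • u) (g • v) ↔ Γ.Adj u v)
    (hsr : StronglyRigid Γ G)
    (hle : ∀ (g : G) (x : V), ∃ C : ℕ, ∀ n : ℤ, Γ.dist x ((g ^ n) • x) ≤ C) :
    ∃ (x : V) (C : ℕ), ∀ h : G, Γ.dist x (h • x) ≤ C := by
  have hB := h18.1
  have hN := h18.2
  obtain ⟨x⟩ := hB.1.nonempty
  by_cases hG : ∃ h : G, h ≠ 1
  · obtain ⟨h, h1⟩ := hG
    obtain ⟨C, hC⟩ := hle h x
    exact ⟨x, 4 * C + 17, fun g => Sys.main_bound hB hN hact hsr hle h h1 x C hC g⟩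
  · push Not at hG
    refine ⟨x, 0, fun g => ?_⟩
    rw [hG g, one_smul, SimpleGraph.dist_self]
end
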